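/- arXiv:1702.04915 — 2 statements merged into one kernel-verified Lean document; each statement's English description precedes it below -/
import Mathlib

section
/- There exists a constant c > 0 such that for every ε > 0, lim_{L→∞} P_{unif,L}( there exists i ∈ {1,2,3,4} with sup_{t∈[0,1]} |π̃^L_t − c t e⃗_i| ≤ ε ) = 1, where |·| denotes the Euclidean norm on ℝ². In words: the uniform prudent walk, rescaled by its length, concentrates on a straight line segment along one of the four diagonals. -/
open Filter Set

/-- One admissible step of a nearest-neighbour walk on `ℤ²`. -/
def IsStep (s : ℤ × ℤ) : Prop :=
  s = (1, 0) ∨ s = (-1, 0) ∨ s = (0, 1) ∨ s = (0, -1)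

/-- The set `Ω_L` of prudent paths of length `L`. -/
def prudentSet (L : ℕ) : Set (Fin (L + 1) → ℤ × ℤ) :=
  {π | π 0 = (0, 0) ∧ ∀ i : Fin L,
    IsStep (π i.succ - π i.castSucc) ∧
    ∀ k : ℕ, 1 ≤ k → ∀ j : Fin (L + 1), j ≤ i.castSucc →
      π i.castSucc + (k : ℤ) • (π i.succ - π i.castSucc) ≠ π j}

/-- The uniform probability of a set `A` of paths under `P_{unif,L}`. -/
noncomputable def probUnif (L : ℕ) (A : Set (Fin (L + 1) → ℤ × ℤ)) : ℝ :=
  (Nat.card ↥(A ∩ prudentSet L) : ℝ) / (Nat.card ↥(prudentSet L) : ℝ)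

/-- Coercion `ℤ² → ℝ²`. -/
def toR (p : ℤ × ℤ) : ℝ × ℝ := ((p.1 : ℝ), (p.2 : ℝ))

/-- The rescaled interpolated path `π̃^L : [0,1] → ℝ²`. -/
noncomputable def rescaled (L : ℕ) (π : Fin (L + 1) → ℤ × ℤ) (t : ℝ) : ℝ × ℝ :=
  let n : ℕ := ⌊t * L⌋₊
  let p : ℝ × ℝ := toR (π ⟨min n L, by omega⟩)
  let q : ℝ × ℝ := toR (π ⟨min (n + 1) L, by omega⟩)
  (L : ℝ)⁻¹ • (p + (t * L - (n : ℝ)) • (q - p))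

/-- Euclidean norm on `ℝ²`. -/
noncomputable def enorm2 (v : ℝ × ℝ) : ℝ := Real.sqrt (v.1 ^ 2 + v.2 ^ 2)

/-- The four diagonal directions. -/
def evec : ℕ → ℝ × ℝ
  | 1 => (1, 1)
  | 2 => (-1, 1)
  | 3 => (-1, -1)
  | 4 => (1, -1)
  | _ => (0, 0)

/-! At the critical step weight `z`, the root near `0.403` of `2 z³ - 2 z² - 2 z + 1`, the walk is
controlled by generating functions. A prudent walk always sits on a side of its bounding box. Giving
each step the weight `z e^(η t)` and the endpoint `(x, y)` the weight `e^(t (s₁ |x| + s₂ |y|))`, one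
finds an explicit potential, a function of the box and of the position on its side, which dominates
the weighted sum over all continuations. To first order in `t` such a potential exists as soon as
`η + c (s₁ + s₂) < 0`, where `c` is the speed. By Markov's inequality the paths with
`s₁ |x| + s₂ |y| ≥ a n` at time `n` then contribute exponentially little to the generating function
whenever `a > c (s₁ + s₂)`; the choices `(±1, 0)` and `(0, ±1)` pin down both `|x|` and `|y|`.

Conversely `zⁿ |Ω_n| ≥ 1`, because a simpler walk contained in the prudent one has an explicit
harmonic function, so what is negligible for the generating function is improbable. The potential
also bounds the continuations of every path, so the estimates at the times in `[δ L, L]` can be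
summed and `|x|` and `|y|` are close to `c n` at all these times. Since neither coordinate can
change sign without vanishing, the whole path follows a single diagonal. -/

namespace PrudentWalk

/-! ### Prudent extensions of a path -/

/-- The four unit steps of `ℤ²`. -/
def steps : Finset (ℤ × ℤ) := {(1, 0), (-1, 0), (0, 1), (0, -1)}

/-- The sites occupied up to time `n` by the path `p`. Paths are indexed by all of `ℕ` and only
their values up to the current time matter. -/
def visited (n : ℕ) (p : ℕ → ℤ × ℤ) : Set (ℤ × ℤ) := p '' Iic n

/-- Prudence of the step `s` for the path `p` stopped at time `n`: the open ray issued from `p n` in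
the direction `s` contains no visited site. -/
def Allowed (n : ℕ) (p : ℕ → ℤ × ℤ) (s : ℤ × ℤ) : Prop :=
  ∀ k : ℕ, 1 ≤ k → p n + (k : ℤ) • s ∉ visited n p

/-- The path that follows `p` up to time `n` and then makes the step `s`. -/
def extend (n : ℕ) (p : ℕ → ℤ × ℤ) (s : ℤ × ℤ) : ℕ → ℤ × ℤ :=
  Function.update p (n + 1) (p n + s)

lemma mem_visited_of_le {n j : ℕ} {p : ℕ → ℤ × ℤ} (h : j ≤ n) : p j ∈ visited n p :=
  mem_image_of_mem p h

@[simp] lemma extend_succ (n : ℕ) (p : ℕ → ℤ × ℤ) (s : ℤ × ℤ) :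
    extend n p s (n + 1) = p n + s := by
  simp [extend]

lemma extend_of_le {n j : ℕ} (p : ℕ → ℤ × ℤ) (s : ℤ × ℤ) (h : j ≤ n) : extend n p s j = p j :=
  Function.update_of_ne (by lia) _ _

lemma visited_extend (n : ℕ) (p : ℕ → ℤ × ℤ) (s : ℤ × ℤ) :
    visited (n + 1) (extend n p s) = insert (p n + s) (visited n p) := by
  have h : EqOn (extend n p s) p (Iic n) := fun j hj => extend_of_le p s hj
  rw [visited, visited, ← Order.succ_eq_add_one, Order.Iic_succ, image_insert_eq, h.image_eq,
    Order.succ_eq_add_one, extend_succ]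

open scoped Classical in
/-- The prudent steps available to the path `p` at time `n`. -/
noncomputable def nextSteps (n : ℕ) (p : ℕ → ℤ × ℤ) : Finset (ℤ × ℤ) :=
  {s ∈ steps | Allowed n p s}

lemma mem_nextSteps {n : ℕ} {p : ℕ → ℤ × ℤ} {s : ℤ × ℤ} :
    s ∈ nextSteps n p ↔ s ∈ steps ∧ Allowed n p s := by
  simp [nextSteps]

/-- The sum of a function over all prudent continuations by `m` steps of the path `p` stopped at
time `n`, as a linear functional of the summand. -/
noncomputable def contSum : ℕ → ℕ → (ℕ → ℤ × ℤ) → ((ℕ → ℤ × ℤ) → ℝ) →ₗ[ℝ] ℝ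
  | 0, _, p => LinearMap.proj p
  | m + 1, n, p => ∑ s ∈ nextSteps n p, contSum m (n + 1) (extend n p s)

@[simp] lemma contSum_zero (n : ℕ) (p : ℕ → ℤ × ℤ) (f : (ℕ → ℤ × ℤ) → ℝ) :
    contSum 0 n p f = f p := rfl

lemma contSum_succ (m n : ℕ) (p : ℕ → ℤ × ℤ) (f : (ℕ → ℤ × ℤ) → ℝ) :
    contSum (m + 1) n p f = ∑ s ∈ nextSteps n p, contSum m (n + 1) (extend n p s) f := by
  simp [contSum]

lemma contSum_mono (m n : ℕ) (p : ℕ → ℤ × ℤ) : Monotone (contSum m n p) := by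
  intro f g h
  induction m generalizing n p with
  | zero => exact h p
  | succ m ih =>
    simp only [contSum_succ]
    exact Finset.sum_le_sum fun s _ => ih _ _

lemma contSum_nonneg (m n : ℕ) (p : ℕ → ℤ × ℤ) {f : (ℕ → ℤ × ℤ) → ℝ} (h : 0 ≤ f) :
    0 ≤ contSum m n p f := by
  simpa using contSum_mono m n p h

lemma contSum_succ_le_sum {m n : ℕ} {p : ℕ → ℤ × ℤ} {f : (ℕ → ℤ × ℤ) → ℝ} (hf : 0 ≤ f)
    {S : Finset (ℤ × ℤ)} (hS : nextSteps n p ⊆ S) :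
    contSum (m + 1) n p f ≤ ∑ s ∈ S, contSum m (n + 1) (extend n p s) f := by
  rw [contSum_succ]
  exact Finset.sum_le_sum_of_subset_of_nonneg hS fun s _ _ => contSum_nonneg _ _ _ hf

lemma sum_le_contSum_succ {m n : ℕ} {p : ℕ → ℤ × ℤ} {f : (ℕ → ℤ × ℤ) → ℝ} (hf : 0 ≤ f)
    {S : Finset (ℤ × ℤ)} (hS : S ⊆ nextSteps n p) :
    ∑ s ∈ S, contSum m (n + 1) (extend n p s) f ≤ contSum (m + 1) n p f := by
  rw [contSum_succ]
  exact Finset.sum_le_sum_of_subset_of_nonneg hS fun s _ _ => contSum_nonneg _ _ _ hf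

lemma contSum_add (m₁ m₂ n : ℕ) (p : ℕ → ℤ × ℤ) (f : (ℕ → ℤ × ℤ) → ℝ) :
    contSum (m₁ + m₂) n p f = contSum m₁ n p fun q => contSum m₂ (n + m₁) q f := by
  induction m₁ generalizing n p with
  | zero => simp
  | succ m ih =>
    have h₁ : m + 1 + m₂ = m + m₂ + 1 := by lia
    have h₂ : n + (m + 1) = n + 1 + m := by lia
    simp only [h₁, h₂, contSum_succ, ih]

lemma contSum_apply_mul (φ : ℤ × ℤ → ℝ) (g : (ℕ → ℤ × ℤ) → ℝ) {j : ℕ} (m : ℕ) {n : ℕ} (hj : j ≤ n)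
    (p : ℕ → ℤ × ℤ) :
    contSum m n p (fun q => φ (q j) * g q) = φ (p j) * contSum m n p g := by
  induction m generalizing n p with
  | zero => rfl
  | succ m ih =>
    simp only [contSum_succ, Finset.mul_sum]
    refine Finset.sum_congr rfl fun s _ => ?_
    rw [ih (hj.trans n.le_succ), extend_of_le p s hj]

/-! ### Lattice symmetries -/

/-- Lattice symmetries fixing the origin, encoded as the additive automorphisms of `ℤ²` that permute
the unit steps. -/
def IsSymm (e : (ℤ × ℤ) ≃+ (ℤ × ℤ)) : Prop := ∀ s, e s ∈ steps ↔ s ∈ steps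

lemma IsSymm.trans {e e' : (ℤ × ℤ) ≃+ (ℤ × ℤ)} (h : IsSymm e) (h' : IsSymm e') :
    IsSymm (e.trans e') :=
  fun s => (h' (e s)).trans (h s)

/-- The exchange of the two coordinates. -/
def swap : (ℤ × ℤ) ≃+ (ℤ × ℤ) := AddEquiv.prodComm

/-- The reflection that changes the sign of the first coordinate. -/
def reflect : (ℤ × ℤ) ≃+ (ℤ × ℤ) := (AddEquiv.neg ℤ).prodCongr (AddEquiv.refl ℤ)

@[simp] lemma swap_apply (v : ℤ × ℤ) : swap v = (v.2, v.1) := rfl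

@[simp] lemma reflect_apply (v : ℤ × ℤ) : reflect v = (-v.1, v.2) := rfl

lemma isSymm_refl : IsSymm (AddEquiv.refl _) := fun _ => Iff.rfl

lemma isSymm_swap : IsSymm swap := by
  rintro ⟨a, b⟩
  simp only [steps, swap_apply, Finset.mem_insert, Finset.mem_singleton, Prod.ext_iff]
  lia

lemma isSymm_reflect : IsSymm reflect := by
  rintro ⟨a, b⟩
  simp only [steps, reflect_apply, Finset.mem_insert, Finset.mem_singleton, Prod.ext_iff]
  lia

lemma exists_isSymm_apply_eq_up {s : ℤ × ℤ} (hs : s ∈ steps) : ∃ e, IsSymm e ∧ e s = (0, 1) := by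
  simp only [steps, Finset.mem_insert, Finset.mem_singleton] at hs
  rcases hs with rfl | rfl | rfl | rfl
  · exact ⟨swap, isSymm_swap, rfl⟩
  · exact ⟨reflect.trans swap, isSymm_reflect.trans isSymm_swap, rfl⟩
  · exact ⟨AddEquiv.refl _, isSymm_refl, rfl⟩
  · exact ⟨swap.trans (reflect.trans swap),
      isSymm_swap.trans (isSymm_reflect.trans isSymm_swap), rfl⟩

lemma IsSymm.natAbs_apply {e : (ℤ × ℤ) ≃+ (ℤ × ℤ)} (he : IsSymm e) :
    (∀ v, (e v).1.natAbs = v.1.natAbs ∧ (e v).2.natAbs = v.2.natAbs) ∨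
      ∀ v, (e v).1.natAbs = v.2.natAbs ∧ (e v).2.natAbs = v.1.natAbs := by
  have decomp (v : ℤ × ℤ) : e v = v.1 • e (1, 0) + v.2 • e (0, 1) := by
    rw [← map_zsmul, ← map_zsmul, ← map_add]
    simp
  have h₁ : e (1, 0) ∈ steps := (he _).2 (by decide)
  have h₂ : e (0, 1) ∈ steps := (he _).2 (by decide)
  have hne : e (1, 0) ≠ e (0, 1) := e.injective.ne (by decide)
  have hne' : e (1, 0) ≠ -e (0, 1) := by
    rw [← map_neg]
    exact e.injective.ne (by decide)
  simp only [steps, Finset.mem_insert, Finset.mem_singleton] at h₁ h₂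
  rcases h₁ with h₁ | h₁ | h₁ | h₁ <;> rcases h₂ with h₂ | h₂ | h₂ | h₂ <;>
    first
      | exact absurd (h₁.trans h₂.symm) hne
      | exact absurd (by rw [h₁, h₂]; rfl) hne'
      | rw [h₁, h₂] at decomp; simp [decomp]

lemma visited_comp (e : ℤ × ℤ → ℤ × ℤ) (n : ℕ) (p : ℕ → ℤ × ℤ) :
    visited n (e ∘ p) = e '' visited n p :=
  image_comp e p _

lemma allowed_comp_iff (e : (ℤ × ℤ) ≃+ (ℤ × ℤ)) (n : ℕ) (p : ℕ → ℤ × ℤ) (s : ℤ × ℤ) :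
    Allowed n (e ∘ p) (e s) ↔ Allowed n p s := by
  simp only [Allowed, Function.comp_apply, ← map_zsmul, ← map_add, visited_comp,
    e.injective.mem_set_image]

lemma IsSymm.mem_nextSteps_comp {e : (ℤ × ℤ) ≃+ (ℤ × ℤ)} (he : IsSymm e) (n : ℕ)
    (p : ℕ → ℤ × ℤ) (s : ℤ × ℤ) : e s ∈ nextSteps n (e ∘ p) ↔ s ∈ nextSteps n p := by
  rw [mem_nextSteps, mem_nextSteps, he, allowed_comp_iff]

lemma extend_comp (e : (ℤ × ℤ) ≃+ (ℤ × ℤ)) (n : ℕ) (p : ℕ → ℤ × ℤ) (s : ℤ × ℤ) :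
    extend n (e ∘ p) (e s) = e ∘ extend n p s := by
  simp [extend, Function.comp_update]

lemma IsSymm.contSum_comp {e : (ℤ × ℤ) ≃+ (ℤ × ℤ)} (he : IsSymm e) (f : (ℕ → ℤ × ℤ) → ℝ)
    (m n : ℕ) (p : ℕ → ℤ × ℤ) : contSum m n (e ∘ p) f = contSum m n p fun q => f (e ∘ q) := by
  induction m generalizing n p with
  | zero => rfl
  | succ m ih =>
    simp only [contSum_succ]
    refine (Finset.sum_equiv e.toEquiv (fun s => (he.mem_nextSteps_comp n p s).symm) ?_).symm
    intro s _
    rw [AddEquiv.toEquiv_eq_coe, AddEquiv.coe_toEquiv, extend_comp, ih]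

/-! ### Walks on the boundary of their bounding box -/

/-- The box `[-left, right] × [-bottom, top]`. -/
structure Box where
  /-- Minus the least abscissa. -/
  left : ℕ
  /-- The greatest abscissa. -/
  right : ℕ
  /-- Minus the least ordinate. -/
  bottom : ℕ
  /-- The greatest ordinate. -/
  top : ℕ

namespace Box

/-- The lattice points of a box. -/
def toSet (b : Box) : Set (ℤ × ℤ) := Icc (-b.left : ℤ) b.right ×ˢ Icc (-b.bottom : ℤ) b.top

/-- The image of a box under the reflection of the first coordinate. -/
def reflect (b : Box) : Box := ⟨b.right, b.left, b.bottom, b.top⟩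

/-- The box with its top side moved up by one unit. -/
def raise (b : Box) : Box := ⟨b.left, b.right, b.bottom, b.top + 1⟩

/-- The box with its left side moved by one unit, turned so that this side becomes the top one. -/
def exitLeft (b : Box) : Box := ⟨b.bottom, b.top, b.right, b.left + 1⟩

end Box

/-- The path `p` stopped at time `n` has bounding box `b` and sits on the top side of `b`, with
every column of `b` already visited below that side; in particular it cannot move down. -/
structure EndsOnTop (n : ℕ) (p : ℕ → ℤ × ℤ) (b : Box) : Prop where
  visited_subset : visited n p ⊆ b.toSet
  top : (p n).2 = b.top
  exists_mem_column : ∀ x ∈ Icc (-b.left : ℤ) b.right, ∃ y < (b.top : ℤ), (x, y) ∈ visited n p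
  exists_mem_row : ∀ y ∈ Icc (-b.bottom : ℤ) b.top, ∃ x, (x, y) ∈ visited n p

/-- The site to the right of the endpoint is already visited, for instance because the last step
was to the left. -/
def Back (n : ℕ) (p : ℕ → ℤ × ℤ) : Prop := p n + (1, 0) ∈ visited n p

lemma Back.not_allowed_right {n : ℕ} {p : ℕ → ℤ × ℤ} (h : Back n p) : ¬ Allowed n p (1, 0) :=
  fun ha => ha 1 le_rfl (by simpa [Back] using h)

lemma back_extend_left (n : ℕ) (p : ℕ → ℤ × ℤ) : Back (n + 1) (extend n p (-1, 0)) := by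
  have h : p n + (-1, 0) + (1, 0) = p n := by ext <;> simp
  rw [Back, extend_succ, h, visited_extend]
  exact mem_insert_of_mem _ (mem_visited_of_le le_rfl)

lemma extend_reflect_left (n : ℕ) (p : ℕ → ℤ × ℤ) :
    extend n (reflect ∘ p) (-1, 0) = reflect ∘ extend n p (1, 0) :=
  extend_comp reflect n p (1, 0)

namespace EndsOnTop

variable {n : ℕ} {p : ℕ → ℤ × ℤ} {b : Box}

lemma mem_toSet (h : EndsOnTop n p b) : p n ∈ b.toSet :=
  h.visited_subset (mem_visited_of_le le_rfl)

lemma not_allowed_down (h : EndsOnTop n p b) : ¬ Allowed n p (0, -1) := by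
  intro ha
  obtain ⟨y, hy, hmem⟩ := h.exists_mem_column _ h.mem_toSet.1
  have htop := h.top
  refine ha ((b.top : ℤ) - y).toNat (by lia) ?_
  convert hmem using 1
  simp only [Prod.ext_iff, Prod.fst_add, Prod.snd_add, Prod.smul_mk, smul_eq_mul, mul_zero]
  lia

protected lemma reflect (h : EndsOnTop n p b) : EndsOnTop n (reflect ∘ p) b.reflect where
  visited_subset := by
    rw [visited_comp]
    rintro _ ⟨v, hv, rfl⟩
    have := h.visited_subset hv
    simp only [Box.toSet, Box.reflect, mem_prod, mem_Icc, reflect_apply] at this ⊢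
    lia
  top := h.top
  exists_mem_column x hx := by
    have hx' : -x ∈ Icc (-b.left : ℤ) b.right := by
      simp only [Box.reflect, mem_Icc] at hx ⊢
      lia
    obtain ⟨y, hy, hmem⟩ := h.exists_mem_column (-x) hx'
    exact ⟨y, hy, by rw [visited_comp]; exact ⟨_, hmem, by simp⟩⟩
  exists_mem_row y hy := by
    obtain ⟨x, hmem⟩ := h.exists_mem_row y hy
    exact ⟨-x, by rw [visited_comp]; exact ⟨_, hmem, by simp⟩⟩

lemma up (h : EndsOnTop n p b) : EndsOnTop (n + 1) (extend n p (0, 1)) b.raise where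
  visited_subset := by
    have htop := h.top
    have hn := h.mem_toSet
    rw [visited_extend, insert_subset_iff]
    refine ⟨?_, fun v hv => ?_⟩
    · simp only [Box.toSet, Box.raise, mem_prod, mem_Icc, Prod.fst_add, Prod.snd_add] at hn ⊢
      lia
    · have := h.visited_subset hv
      simp only [Box.toSet, Box.raise, mem_prod, mem_Icc] at this ⊢
      lia
  top := by simp [h.top, Box.raise]
  exists_mem_column x hx := by
    obtain ⟨y, hy, hmem⟩ := h.exists_mem_column x hx
    rw [visited_extend]
    exact ⟨y, by simp only [Box.raise]; lia, mem_insert_of_mem _ hmem⟩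
  exists_mem_row y hy := by
    rw [visited_extend]
    simp only [Box.raise, mem_Icc, Nat.cast_add, Nat.cast_one] at hy
    obtain hle | rfl : y ≤ b.top ∨ y = b.top + 1 := by lia
    · obtain ⟨x, hmem⟩ := h.exists_mem_row y ⟨hy.1, hle⟩
      exact ⟨x, mem_insert_of_mem _ hmem⟩
    · exact ⟨(p n).1, Or.inl (by ext <;> simp [h.top])⟩

lemma left (h : EndsOnTop n p b) (hx : -(b.left : ℤ) < (p n).1) :
    EndsOnTop (n + 1) (extend n p (-1, 0)) b where
  visited_subset := by
    have hn := h.mem_toSet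
    rw [visited_extend, insert_subset_iff]
    refine ⟨?_, h.visited_subset⟩
    simp only [Box.toSet, mem_prod, mem_Icc, Prod.fst_add, Prod.snd_add] at hn ⊢
    lia
  top := by simp [h.top]
  exists_mem_column x hx := by
    obtain ⟨y, hy, hmem⟩ := h.exists_mem_column x hx
    exact ⟨y, hy, visited_extend n p _ ▸ mem_insert_of_mem _ hmem⟩
  exists_mem_row y hy := by
    obtain ⟨x, hmem⟩ := h.exists_mem_row y hy
    exact ⟨x, visited_extend n p _ ▸ mem_insert_of_mem _ hmem⟩

lemma exitLeft (h : EndsOnTop n p b) (hx : (p n).1 = -b.left) :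
    EndsOnTop (n + 1) (swap ∘ reflect ∘ extend n p (-1, 0)) b.exitLeft where
  visited_subset := by
    have hn := h.mem_toSet
    rw [visited_comp, visited_comp, visited_extend, ← image_comp]
    rintro _ ⟨v, rfl | hv, rfl⟩
    · simp only [Box.toSet, Box.exitLeft, mem_prod, mem_Icc, Function.comp_apply, reflect_apply,
        swap_apply, Prod.fst_add, Prod.snd_add] at hn ⊢
      lia
    · have := h.visited_subset hv
      simp only [Box.toSet, Box.exitLeft, mem_prod, mem_Icc, Function.comp_apply, reflect_apply,
        swap_apply] at this ⊢
      lia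
  top := by
    simp only [Function.comp_apply, extend_succ, swap_apply, reflect_apply, Prod.fst_add, hx,
      Box.exitLeft]
    lia
  exists_mem_column y hy := by
    obtain ⟨x, hmem⟩ := h.exists_mem_row y hy
    have := (h.visited_subset hmem).1.1
    rw [visited_comp, visited_comp, visited_extend, ← image_comp]
    exact ⟨-x, by simp only [Box.exitLeft]; lia, _, mem_insert_of_mem _ hmem, rfl⟩
  exists_mem_row x hx' := by
    rw [visited_comp, visited_comp, visited_extend, ← image_comp]
    simp only [Box.exitLeft, mem_Icc, Nat.cast_add, Nat.cast_one] at hx'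
    obtain hle | rfl : x ≤ b.left ∨ x = b.left + 1 := by lia
    · obtain ⟨y, -, hmem⟩ := h.exists_mem_column (-x) ⟨by lia, by lia⟩
      exact ⟨y, _, mem_insert_of_mem _ hmem, by simp⟩
    · exact ⟨(p n).2, _, mem_insert _ _, by simp [hx, add_comm]⟩

end EndsOnTop

/-- Up to a lattice symmetry, the path sits on the top side of its bounding box. -/
def EndsOnSide (n : ℕ) (p : ℕ → ℤ × ℤ) : Prop := ∃ e, IsSymm e ∧ ∃ b, EndsOnTop n (e ∘ p) b

lemma EndsOnTop.endsOnSide {n : ℕ} {p : ℕ → ℤ × ℤ} {b : Box} (h : EndsOnTop n p b) :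
    EndsOnSide n p :=
  ⟨AddEquiv.refl _, isSymm_refl, b, h⟩

lemma EndsOnSide.of_comp {e : (ℤ × ℤ) ≃+ (ℤ × ℤ)} (he : IsSymm e) {n : ℕ} {p : ℕ → ℤ × ℤ}
    (h : EndsOnSide n (e ∘ p)) : EndsOnSide n p := by
  obtain ⟨e', he', b, h⟩ := h
  exact ⟨e.trans e', he.trans he', b, h⟩

lemma EndsOnTop.endsOnSide_extend_left {n : ℕ} {p : ℕ → ℤ × ℤ} {b : Box} (h : EndsOnTop n p b) :
    EndsOnSide (n + 1) (extend n p (-1, 0)) := by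
  rcases h.mem_toSet.1.1.lt_or_eq with hx | hx
  · exact (h.left hx).endsOnSide
  · exact .of_comp isSymm_reflect (.of_comp isSymm_swap (h.exitLeft hx.symm).endsOnSide)

lemma EndsOnTop.endsOnSide_extend {n : ℕ} {p : ℕ → ℤ × ℤ} {b : Box} (h : EndsOnTop n p b)
    {s : ℤ × ℤ} (hs : s ∈ nextSteps n p) : EndsOnSide (n + 1) (extend n p s) := by
  obtain ⟨hs, ha⟩ := mem_nextSteps.1 hs
  simp only [steps, Finset.mem_insert, Finset.mem_singleton] at hs
  rcases hs with rfl | rfl | rfl | rfl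
  · refine .of_comp isSymm_reflect ?_
    rw [← extend_reflect_left]
    exact h.reflect.endsOnSide_extend_left
  · exact h.endsOnSide_extend_left
  · exact h.up.endsOnSide
  · exact absurd ha h.not_allowed_down

lemma EndsOnSide.extend {n : ℕ} {p : ℕ → ℤ × ℤ} (h : EndsOnSide n p) {s : ℤ × ℤ}
    (hs : s ∈ nextSteps n p) : EndsOnSide (n + 1) (extend n p s) := by
  obtain ⟨e, he, b, h⟩ := h
  have := h.endsOnSide_extend ((he.mem_nextSteps_comp n p s).2 hs)
  rw [extend_comp] at this
  exact .of_comp he this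

lemma endsOnTop_of_first_step_up {p : ℕ → ℤ × ℤ} (h₀ : p 0 = 0) (h₁ : p 1 = (0, 1)) :
    EndsOnTop 1 p ⟨0, 0, 0, 1⟩ := by
  have hvisited : visited 1 p = {(0, 0), (0, 1)} := by
    have : Iic 1 = ({0, 1} : Set ℕ) := by grind
    rw [visited, this, image_pair, h₀, h₁]
    rfl
  constructor
  · simp [hvisited, Box.toSet, insert_subset_iff]
  · simp [h₁]
  · intro x hx
    obtain rfl : x = 0 := by simpa using hx
    exact ⟨0, by simp [hvisited]⟩
  · intro y hy
    obtain rfl | rfl : y = 0 ∨ y = 1 := by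
      simp only [mem_Icc] at hy
      lia
    all_goals exact ⟨0, by simp [hvisited]⟩

lemma exists_isSymm_endsOnTop {p : ℕ → ℤ × ℤ} (h₀ : p 0 = 0) (h₁ : p 1 ∈ steps) :
    ∃ e, IsSymm e ∧ EndsOnTop 1 (e ∘ p) ⟨0, 0, 0, 1⟩ := by
  obtain ⟨e, he, heq⟩ := exists_isSymm_apply_eq_up h₁
  exact ⟨e, he, endsOnTop_of_first_step_up (by simp [h₀]) heq⟩

/-! ### The space of prudent paths -/

/-- Prudent paths of length `L` from the origin, encoded as functions on `ℕ` that vanish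
beyond `L`. -/
structure IsPrudent (L : ℕ) (q : ℕ → ℤ × ℤ) : Prop where
  zero : q 0 = 0
  eq_zero_of_lt : ∀ j, L < j → q j = 0
  sub_mem_nextSteps : ∀ i < L, q (i + 1) - q i ∈ nextSteps i q

lemma visited_congr {n : ℕ} {p q : ℕ → ℤ × ℤ} (h : EqOn p q (Iic n)) :
    visited n p = visited n q :=
  h.image_eq

lemma nextSteps_congr {n : ℕ} {p q : ℕ → ℤ × ℤ} (h : EqOn p q (Iic n)) :
    nextSteps n p = nextSteps n q := by
  ext s
  simp only [mem_nextSteps, Allowed, visited_congr h, h (self_mem_Iic : n ∈ Iic n)]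

lemma isPrudent_zero_iff {q : ℕ → ℤ × ℤ} : IsPrudent 0 q ↔ q = 0 := by
  refine ⟨fun h => ?_, fun h => h ▸ ⟨rfl, fun _ _ => rfl, fun i hi => absurd hi i.not_lt_zero⟩⟩
  funext j
  rcases j.eq_zero_or_pos with rfl | hj
  exacts [h.zero, h.eq_zero_of_lt j hj]

lemma IsPrudent.extend {L : ℕ} {p : ℕ → ℤ × ℤ} (h : IsPrudent L p) {s : ℤ × ℤ}
    (hs : s ∈ nextSteps L p) : IsPrudent (L + 1) (extend L p s) where
  zero := by rw [extend_of_le p s L.zero_le, h.zero]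
  eq_zero_of_lt j hj := by
    rw [PrudentWalk.extend, Function.update_of_ne hj.ne', h.eq_zero_of_lt j (by lia)]
  sub_mem_nextSteps i hi := by
    have hcongr : EqOn (PrudentWalk.extend L p s) p (Iic i) := fun j hj =>
      extend_of_le p s (by simp only [mem_Iic] at hj; lia)
    rw [nextSteps_congr hcongr, hcongr self_mem_Iic]
    rcases (Nat.lt_succ_iff.1 hi).lt_or_eq with hi | rfl
    · rw [extend_of_le p s hi]
      exact h.sub_mem_nextSteps i hi
    · rwa [extend_succ, add_sub_cancel_left]

lemma IsPrudent.update_zero {L : ℕ} {q : ℕ → ℤ × ℤ} (h : IsPrudent (L + 1) q) :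
    IsPrudent L (Function.update q (L + 1) 0) := by
  have hcongr : EqOn (Function.update q (L + 1) 0) q (Iic L) := fun j hj =>
    Function.update_of_ne (by simp only [mem_Iic] at hj; lia) _ _
  refine ⟨(hcongr L.zero_le).trans h.zero, fun j hj => ?_, fun i hi => ?_⟩
  · rcases eq_or_ne j (L + 1) with rfl | hne
    · simp
    · rw [Function.update_of_ne hne, h.eq_zero_of_lt j (by lia)]
  · rw [hcongr (mem_Iic.2 hi), hcongr (mem_Iic.2 hi.le),
      nextSteps_congr (hcongr.mono (Iic_subset_Iic.2 hi.le))]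
    exact h.sub_mem_nextSteps i (by lia)

lemma isPrudent_succ_iff {L : ℕ} {q : ℕ → ℤ × ℤ} :
    IsPrudent (L + 1) q ↔ ∃ p, IsPrudent L p ∧ ∃ s ∈ nextSteps L p, extend L p s = q := by
  refine ⟨fun h => ?_, ?_⟩
  · have hcongr : EqOn (Function.update q (L + 1) 0) q (Iic L) := fun j hj =>
      Function.update_of_ne (by simp only [mem_Iic] at hj; lia) _ _
    refine ⟨_, h.update_zero, q (L + 1) - q L, ?_, ?_⟩
    · rw [nextSteps_congr hcongr]
      exact h.sub_mem_nextSteps L L.lt_succ_self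
    · simp [extend]
  · rintro ⟨p, hp, s, hs, rfl⟩
    exact hp.extend hs

lemma IsPrudent.endsOnSide {L : ℕ} (hL : 1 ≤ L) {q : ℕ → ℤ × ℤ} (hq : IsPrudent L q) :
    EndsOnSide L q := by
  induction L, hL using Nat.le_induction generalizing q with
  | base =>
    have hstep : q 1 ∈ steps := by
      simpa [hq.zero] using (mem_nextSteps.1 (hq.sub_mem_nextSteps 0 one_pos)).1
    obtain ⟨e, he, h⟩ := exists_isSymm_endsOnTop hq.zero hstep
    exact ⟨e, he, _, h⟩
  | succ L _ ih =>
    obtain ⟨p, hp, s, hs, rfl⟩ := isPrudent_succ_iff.1 hq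
    exact (ih hp).extend hs

open scoped Classical in
/-- The finite set of prudent paths of length `L`. -/
noncomputable def prudentPaths : ℕ → Finset (ℕ → ℤ × ℤ)
  | 0 => {0}
  | L + 1 => ((prudentPaths L).sigma (nextSteps L)).image fun x => extend L x.1 x.2

lemma mem_prudentPaths {L : ℕ} {q : ℕ → ℤ × ℤ} : q ∈ prudentPaths L ↔ IsPrudent L q := by
  induction L generalizing q with
  | zero => simp [prudentPaths, isPrudent_zero_iff]
  | succ L ih =>
    simp only [prudentPaths, Finset.mem_image, Finset.mem_sigma, isPrudent_succ_iff, ih,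
      Sigma.exists]
    grind

lemma injOn_extend (L : ℕ) :
    InjOn (fun x : (_ : ℕ → ℤ × ℤ) × (ℤ × ℤ) => extend L x.1 x.2)
      {x | IsPrudent L x.1} := by
  rintro ⟨p, s⟩ (hp : IsPrudent L p) ⟨q, t⟩ (hq : IsPrudent L q)
    (h : extend L p s = extend L q t)
  obtain rfl : p = q := by
    funext j
    rcases le_or_gt j L with hj | hj
    · rw [← extend_of_le p s hj, h, extend_of_le q t hj]
    · rw [hp.eq_zero_of_lt j hj, hq.eq_zero_of_lt j hj]
  have := congrFun h (L + 1)
  rw [extend_succ, extend_succ] at this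
  rw [add_left_cancel this]

lemma contSum_eq_sum_prudentPaths (L : ℕ) (f : (ℕ → ℤ × ℤ) → ℝ) :
    contSum L 0 0 f = ∑ q ∈ prudentPaths L, f q := by
  classical
  induction L generalizing f with
  | zero => simp [prudentPaths]
  | succ L ih =>
    rw [contSum_add, ih, prudentPaths, Finset.sum_image, Finset.sum_sigma]
    · simp [contSum_succ]
    · refine (injOn_extend L).mono fun x hx => ?_
      exact mem_prudentPaths.1 (Finset.mem_sigma.1 hx).1

lemma contSum_le_of_isPrudent {L : ℕ} {f g : (ℕ → ℤ × ℤ) → ℝ}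
    (h : ∀ q, IsPrudent L q → f q ≤ g q) : contSum L 0 0 f ≤ contSum L 0 0 g := by
  rw [contSum_eq_sum_prudentPaths, contSum_eq_sum_prudentPaths]
  exact Finset.sum_le_sum fun q hq => h q (mem_prudentPaths.1 hq)

/-- The restriction to the times `0, …, L` of a path defined on `ℕ`. -/
def restrict (L : ℕ) (q : ℕ → ℤ × ℤ) : Fin (L + 1) → ℤ × ℤ := fun i => q i

lemma mem_steps_iff_isStep (s : ℤ × ℤ) : s ∈ steps ↔ IsStep s := by
  simp [steps, IsStep]

lemma mem_nextSteps_iff {L i : ℕ} (hi : i < L) (q : ℕ → ℤ × ℤ) :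
    q (i + 1) - q i ∈ nextSteps i q ↔
      IsStep (q (i + 1) - q i) ∧ ∀ k : ℕ, 1 ≤ k → ∀ j : Fin (L + 1), (j : ℕ) ≤ i →
        q i + (k : ℤ) • (q (i + 1) - q i) ≠ q j := by
  rw [mem_nextSteps, mem_steps_iff_isStep]
  refine and_congr_right fun _ => forall₂_congr fun k _ => ?_
  simp only [visited, mem_image, mem_Iic, not_exists, not_and]
  exact ⟨fun h j hj => Ne.symm (h j hj), fun h j hj => Ne.symm (h ⟨j, by lia⟩ hj)⟩

lemma restrict_mem_prudentSet {L : ℕ} {q : ℕ → ℤ × ℤ} (h : IsPrudent L q) :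
    restrict L q ∈ prudentSet L :=
  ⟨h.zero, fun i => (mem_nextSteps_iff i.2 q).1 (h.sub_mem_nextSteps i i.2)⟩

lemma exists_isPrudent_restrict_eq {L : ℕ} {π : Fin (L + 1) → ℤ × ℤ} (h : π ∈ prudentSet L) :
    ∃ q, IsPrudent L q ∧ restrict L q = π := by
  let q : ℕ → ℤ × ℤ := fun j => if hj : j < L + 1 then π ⟨j, hj⟩ else 0
  have hq : restrict L q = π := funext fun i => dif_pos i.2
  rw [← hq] at h
  exact ⟨q, ⟨h.1, fun j hj => dif_neg (by lia),
    fun i hi => (mem_nextSteps_iff hi q).2 (h.2 ⟨i, hi⟩)⟩, hq⟩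

lemma injOn_restrict (L : ℕ) : InjOn (restrict L) {q | IsPrudent L q} := by
  intro p hp q hq h
  funext j
  rcases le_or_gt j L with hj | hj
  · exact congrFun h ⟨j, by lia⟩
  · rw [hp.eq_zero_of_lt j hj, hq.eq_zero_of_lt j hj]

lemma card_inter_prudentSet (L : ℕ) (A : Set (Fin (L + 1) → ℤ × ℤ)) :
    (Nat.card ↥(A ∩ prudentSet L) : ℝ) = contSum L 0 0 ((restrict L ⁻¹' A).indicator 1) := by
  classical
  have himage : A ∩ prudentSet L =
      restrict L '' ↑{q ∈ prudentPaths L | restrict L q ∈ A} := by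
    ext π
    simp only [mem_inter_iff, mem_image, Finset.coe_filter, mem_ofPred_eq, mem_prudentPaths]
    constructor
    · rintro ⟨hA, hπ⟩
      obtain ⟨q, hq, rfl⟩ := exists_isPrudent_restrict_eq hπ
      exact ⟨q, ⟨hq, hA⟩, rfl⟩
    · rintro ⟨q, ⟨hq, hA⟩, rfl⟩
      exact ⟨hA, restrict_mem_prudentSet hq⟩
  have hinj : InjOn (restrict L) ↑{q ∈ prudentPaths L | restrict L q ∈ A} :=
    (injOn_restrict L).mono fun q hq => mem_prudentPaths.1 (Finset.mem_filter.1 hq).1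
  rw [himage, Nat.card_image_of_injOn hinj, contSum_eq_sum_prudentPaths]
  simp [indicator_apply, Finset.sum_boole]

lemma probUnif_eq_contSum_div (L : ℕ) (A : Set (Fin (L + 1) → ℤ × ℤ)) :
    probUnif L A =
      contSum L 0 0 ((restrict L ⁻¹' A).indicator 1) / contSum L 0 0 1 := by
  rw [probUnif, card_inter_prudentSet, ← univ_inter (prudentSet L), card_inter_prudentSet,
    preimage_univ, indicator_univ]

/-! ### The potential -/

/-- Parameters of the potential attached to one of the two coordinate axes: `y` is the weight of
each unit of displacement along the axis, `Y` bounds `y` and `y⁻¹`, `κ` is the rate at which the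
influence of a corner decays with the distance to it, `α` the weight of that influence, and `A`,
`B`, `τ` correct the potential after a step along the axis. -/
structure Side where
  /-- Weight per unit of displacement. -/
  y : ℝ
  /-- Common bound of `y` and `y⁻¹`. -/
  Y : ℝ
  /-- Decay rate away from a corner. -/
  κ : ℝ
  /-- Weight of the corner terms. -/
  α : ℝ
  /-- Correction of the term of the corner left behind. -/
  A : ℝ
  /-- Correction of the term of the corner ahead. -/
  B : ℝ
  /-- Correction of the term that ignores the corners. -/
  τ : ℝ

/-- The inequalities that make the potential a supermartingale under steps along the axis of `P`
and across it, where `z` is the weight of a step. -/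
structure SideAdmissible (z δ ρ : ℝ) (P Q : Side) : Prop where
  y_pos : 0 < P.y
  y_le : P.y ≤ P.Y
  one_le_y_mul : 1 ≤ P.y * P.Y
  κ_pos : 0 < P.κ
  α_pos : 0 < P.α
  A_pos : 0 < P.A
  B_pos : 0 < P.B
  τ_pos : 0 < P.τ
  one_le_δ_mul_τ : 1 ≤ δ * P.τ
  Y_mul_κ_le : P.Y * P.κ ≤ ρ
  up_corners : z * Q.y + z * (P.κ * P.A) + z * P.B ≤ 1
  up_center : z * Q.y + z * (P.τ * P.Y) + z * (P.τ * P.Y) ≤ 1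
  left_behind : z * Q.y + z * (P.κ * P.A) ≤ P.A
  left_ahead : z * Q.y + z * P.B ≤ P.κ * P.B
  left_center : z * Q.y + z * (P.τ * P.Y) ≤ P.τ
  exit : P.y * (Q.α + δ) ≤ P.α * P.B

/-- Admissible parameters of the potential: `P` is attached to the side on which the walk sits and
`Q` to the transverse axis, but the two roles are exchanged when the walk turns a corner. -/
structure Admissible (z δ ρ : ℝ) (P Q : Side) : Prop where
  z_pos : 0 < z
  one_le_δ : 1 ≤ δ
  ρ_pos : 0 < ρ
  ρ_lt_one : ρ < 1
  along : SideAdmissible z δ ρ P Q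
  across : SideAdmissible z δ ρ Q P

lemma Admissible.symm {z δ ρ : ℝ} {P Q : Side} (h : Admissible z δ ρ P Q) :
    Admissible z δ ρ Q P :=
  { h with along := h.across, across := h.along }

/-- A bounded factor whose decrease from `k` to `k + 1` absorbs a factor `1 + ρ ^ k`, the relative
error made at a corner by neglecting the opposite corner of a side of length `k`. -/
noncomputable def correction (ρ : ℝ) (k : ℕ) : ℝ := Real.exp (ρ ^ k / (1 - ρ))

lemma correction_pos (ρ : ℝ) (k : ℕ) : 0 < correction ρ k := Real.exp_pos _

lemma one_le_correction {ρ : ℝ} (h₀ : 0 < ρ) (h₁ : ρ < 1) (k : ℕ) : 1 ≤ correction ρ k :=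
  Real.one_le_exp (div_nonneg (pow_nonneg h₀.le _) (by linarith))

lemma one_add_pow_mul_correction_succ_le {ρ : ℝ} (h₁ : ρ < 1) (k : ℕ) :
    (1 + ρ ^ k) * correction ρ (k + 1) ≤ correction ρ k := by
  have hρ : 1 - ρ ≠ 0 := by linarith
  have hsplit : correction ρ k = Real.exp (ρ ^ k) * correction ρ (k + 1) := by
    rw [correction, correction, ← Real.exp_add]
    congr 1
    field_simp
    ring
  rw [hsplit, add_comm 1]
  have := correction_pos ρ (k + 1)
  gcongr
  exact Real.add_one_le_exp _

lemma antitone_correction {ρ : ℝ} (h₀ : 0 < ρ) (h₁ : ρ < 1) : Antitone (correction ρ) := by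
  refine antitone_nat_of_succ_le fun k => le_trans ?_ (one_add_pow_mul_correction_succ_le h₁ k)
  exact le_mul_of_one_le_left (correction_pos ρ _).le (by linarith [pow_pos h₀ k])

/-- The potential of a walk at abscissa `x` on the top side of the box `b`, with coefficients `r`,
`l`, `c` for the terms coming from the right corner, the left corner, and the walk that never
reaches a corner. -/
noncomputable def potential (ρ δ : ℝ) (P Q : Side) (b : Box) (x : ℤ) (r l c : ℝ) : ℝ :=
  correction ρ (b.left + b.right + 1) * correction ρ (b.bottom + b.top) * Q.y ^ b.top *
    (r * (P.α * P.y ^ b.right * P.κ ^ ((b.right : ℤ) - x).toNat) +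
      l * (P.α * P.y ^ b.left * P.κ ^ ((b.left : ℤ) + x).toNat) + c * (δ * P.y ^ x.natAbs))

section Potential

variable {z δ ρ : ℝ} {P Q : Side} {b : Box} {x : ℤ}

lemma mul_potential (z ρ δ : ℝ) (P Q : Side) (b : Box) (x : ℤ) (r l c : ℝ) :
    z * potential ρ δ P Q b x r l c = potential ρ δ P Q b x (z * r) (z * l) (z * c) := by
  simp only [potential]
  ring

lemma potential_add (ρ δ : ℝ) (P Q : Side) (b : Box) (x : ℤ) (r l c r' l' c' : ℝ) :
    potential ρ δ P Q b x r l c + potential ρ δ P Q b x r' l' c' =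
      potential ρ δ P Q b x (r + r') (l + l') (c + c') := by
  simp only [potential]
  ring

lemma potential_reflect (ρ δ : ℝ) (P Q : Side) (b : Box) (x : ℤ) (r l c : ℝ) :
    potential ρ δ P Q b.reflect (-x) r l c = potential ρ δ P Q b x l r c := by
  simp only [potential, Box.reflect, Int.natAbs_neg, sub_neg_eq_add, ← sub_eq_add_neg,
    add_comm b.right]
  ring

lemma SideAdmissible.pow_natAbs_sub_one_le (h : SideAdmissible z δ ρ P Q) (x : ℤ) :
    P.y ^ (x - 1).natAbs ≤ P.Y * P.y ^ x.natAbs := by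
  have hy := h.y_pos
  rcases le_or_gt x 0 with hx | hx
  · rw [show (x - 1).natAbs = x.natAbs + 1 by lia, pow_succ']
    gcongr
    exact h.y_le
  · rw [show x.natAbs = (x - 1).natAbs + 1 by lia, pow_succ', ← mul_assoc, mul_comm P.Y]
    exact le_mul_of_one_le_left (by positivity) h.one_le_y_mul

/-- The term of the opposite corner, at distance `k + l` along the new side, is negligible. -/
lemma SideAdmissible.pow_mul_pow_le (h : SideAdmissible z δ ρ P Q) (k l : ℕ) :
    P.y ^ k * P.κ ^ (k + l) ≤ P.y ^ l * ρ ^ (k + l) := by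
  have hy := h.y_pos
  have hκ := h.κ_pos
  have hY : 0 < P.Y := hy.trans_le h.y_le
  calc P.y ^ k * P.κ ^ (k + l) ≤ P.Y ^ k * P.κ ^ (k + l) := by
        gcongr
        exact h.y_le
    _ ≤ (P.y * P.Y) ^ l * (P.Y ^ k * P.κ ^ (k + l)) :=
        le_mul_of_one_le_left (by positivity) (one_le_pow₀ h.one_le_y_mul)
    _ = P.y ^ l * (P.Y * P.κ) ^ (k + l) := by ring
    _ ≤ P.y ^ l * ρ ^ (k + l) := by
        gcongr
        exact h.Y_mul_κ_le

namespace Admissible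

lemma δ_pos (h : Admissible z δ ρ P Q) : 0 < δ := one_pos.trans_le h.one_le_δ

lemma potential_mono (h : Admissible z δ ρ P Q) {r l c r' l' c' : ℝ} (hr : r ≤ r') (hl : l ≤ l')
    (hc : c ≤ c') : potential ρ δ P Q b x r l c ≤ potential ρ δ P Q b x r' l' c' := by
  have := h.along.y_pos
  have := h.across.y_pos
  have := h.along.α_pos
  have := h.along.κ_pos
  have := h.δ_pos
  have := correction_pos ρ (b.left + b.right + 1)
  have := correction_pos ρ (b.bottom + b.top)
  simp only [potential]
  gcongr

lemma pow_mul_pow_le_potential (h : Admissible z δ ρ P Q) {r l c : ℝ} (hr : 0 ≤ r) (hl : 0 ≤ l)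
    (hc : 1 ≤ δ * c) :
    P.y ^ x.natAbs * Q.y ^ b.top ≤ potential ρ δ P Q b x r l c := by
  have := h.along.y_pos
  have := h.across.y_pos
  have h₁ := one_le_correction h.ρ_pos h.ρ_lt_one (b.left + b.right + 1)
  have h₂ := one_le_correction h.ρ_pos h.ρ_lt_one (b.bottom + b.top)
  calc P.y ^ x.natAbs * Q.y ^ b.top
      ≤ correction ρ (b.left + b.right + 1) * correction ρ (b.bottom + b.top) * (δ * c) *
          (P.y ^ x.natAbs * Q.y ^ b.top) :=
        le_mul_of_one_le_left (by positivity)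
          (one_le_mul_of_one_le_of_one_le (one_le_mul_of_one_le_of_one_le h₁ h₂) hc)
    _ = potential ρ δ P Q b x 0 0 c := by
        simp only [potential]
        ring
    _ ≤ potential ρ δ P Q b x r l c := h.potential_mono hr hl le_rfl

lemma potential_raise_le (h : Admissible z δ ρ P Q) :
    potential ρ δ P Q b.raise x 1 1 1 ≤ potential ρ δ P Q b x Q.y Q.y Q.y := by
  have := h.along.y_pos
  have := h.across.y_pos
  have := h.along.α_pos
  have := h.along.κ_pos
  have := h.δ_pos
  have := correction_pos ρ (b.left + b.right + 1)
  have hanti := antitone_correction h.ρ_pos h.ρ_lt_one (b.bottom + b.top).le_succ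
  calc potential ρ δ P Q b.raise x 1 1 1
      = correction ρ (b.left + b.right + 1) * correction ρ (b.bottom + b.top + 1) * Q.y ^ b.top *
          (Q.y * (P.α * P.y ^ b.right * P.κ ^ ((b.right : ℤ) - x).toNat) +
            Q.y * (P.α * P.y ^ b.left * P.κ ^ ((b.left : ℤ) + x).toNat) +
            Q.y * (δ * P.y ^ x.natAbs)) := by
        simp only [potential, Box.raise, ← add_assoc]
        ring
    _ ≤ potential ρ δ P Q b x Q.y Q.y Q.y := by
        simp only [potential]
        gcongr

lemma potential_left_le (h : Admissible z δ ρ P Q) (hx : x ∈ Ioc (-b.left : ℤ) b.right) :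
    potential ρ δ P Q b (x - 1) P.A (P.κ * P.B) P.τ ≤
      potential ρ δ P Q b x (P.κ * P.A) P.B (P.τ * P.Y) := by
  have := h.across.y_pos
  have := h.δ_pos
  have := h.along.τ_pos
  have := correction_pos ρ (b.left + b.right + 1)
  have := correction_pos ρ (b.bottom + b.top)
  have hright : ((b.right : ℤ) - (x - 1)).toNat = ((b.right : ℤ) - x).toNat + 1 := by
    have := hx.2
    lia
  have hleft : ((b.left : ℤ) + x).toNat = ((b.left : ℤ) + (x - 1)).toNat + 1 := by
    have := hx.1
    lia
  have hcenter := h.along.pow_natAbs_sub_one_le x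
  simp only [potential, hright, hleft, pow_succ]
  gcongr ?_ * (?_ + ?_ + ?_)
  · exact le_of_eq (by ring)
  · exact le_of_eq (by ring)
  · calc P.τ * (δ * P.y ^ (x - 1).natAbs) ≤ P.τ * (δ * (P.Y * P.y ^ x.natAbs)) := by gcongr
      _ = P.τ * P.Y * (δ * P.y ^ x.natAbs) := by ring

lemma potential_exitLeft (ρ δ : ℝ) (P Q : Side) (b : Box) :
    potential ρ δ Q P b.exitLeft b.top 1 1 1 =
      correction ρ (b.bottom + b.top + 1) * correction ρ (b.left + b.right + 1) *
        P.y ^ (b.left + 1) * (Q.α * Q.y ^ b.top +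
          Q.α * (Q.y ^ b.bottom * Q.κ ^ (b.bottom + b.top)) + δ * Q.y ^ b.top) := by
  simp only [potential, Box.exitLeft, sub_self, Int.toNat_zero, pow_zero, Int.natAbs_natCast,
    ← Nat.cast_add, Int.toNat_natCast, add_comm b.right, add_right_comm b.left 1]
  ring

lemma potential_exitLeft_le_corner (h : Admissible z δ ρ P Q) :
    potential ρ δ Q P b.exitLeft b.top 1 1 1 ≤
      correction ρ (b.left + b.right + 1) * correction ρ (b.bottom + b.top) *
        P.y ^ (b.left + 1) * Q.y ^ b.top * (Q.α + δ) := by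
  set k := b.bottom + b.top with hk
  have := h.along.y_pos
  have := h.across.y_pos
  have := h.across.α_pos
  have := h.δ_pos
  have := h.ρ_pos
  have := correction_pos ρ (b.left + b.right + 1)
  have := correction_pos ρ (k + 1)
  have hopposite := h.across.pow_mul_pow_le b.bottom b.top
  have hcorr := one_add_pow_mul_correction_succ_le h.ρ_lt_one k
  have hcenter : δ * Q.y ^ b.top ≤ (1 + ρ ^ k) * (δ * Q.y ^ b.top) :=
    le_mul_of_one_le_left (by positivity) (by linarith [pow_pos h.ρ_pos k])
  rw [potential_exitLeft, ← hk]
  calc correction ρ (k + 1) * correction ρ (b.left + b.right + 1) * P.y ^ (b.left + 1) *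
        (Q.α * Q.y ^ b.top + Q.α * (Q.y ^ b.bottom * Q.κ ^ k) + δ * Q.y ^ b.top)
      ≤ correction ρ (k + 1) * correction ρ (b.left + b.right + 1) * P.y ^ (b.left + 1) *
        (Q.α * Q.y ^ b.top + Q.α * (Q.y ^ b.top * ρ ^ k) +
          (1 + ρ ^ k) * (δ * Q.y ^ b.top)) := by gcongr
    _ = (1 + ρ ^ k) * correction ρ (k + 1) * correction ρ (b.left + b.right + 1) *
        P.y ^ (b.left + 1) * Q.y ^ b.top * (Q.α + δ) := by ring
    _ ≤ correction ρ k * correction ρ (b.left + b.right + 1) *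
        P.y ^ (b.left + 1) * Q.y ^ b.top * (Q.α + δ) := by gcongr
    _ = _ := by ring

lemma potential_exitLeft_le (h : Admissible z δ ρ P Q) :
    potential ρ δ Q P b.exitLeft b.top 1 1 1 ≤
      potential ρ δ P Q b (-b.left) (P.κ * P.A) P.B (P.τ * P.Y) := by
  have hy := h.along.y_pos
  have := h.across.y_pos
  have := correction_pos ρ (b.left + b.right + 1)
  have := correction_pos ρ (b.bottom + b.top)
  have hexit := h.along.exit
  calc potential ρ δ Q P b.exitLeft b.top 1 1 1
      ≤ correction ρ (b.left + b.right + 1) * correction ρ (b.bottom + b.top) *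
          P.y ^ (b.left + 1) * Q.y ^ b.top * (Q.α + δ) := h.potential_exitLeft_le_corner
    _ = correction ρ (b.left + b.right + 1) * correction ρ (b.bottom + b.top) *
          P.y ^ b.left * Q.y ^ b.top * (P.y * (Q.α + δ)) := by ring
    _ ≤ correction ρ (b.left + b.right + 1) * correction ρ (b.bottom + b.top) *
          P.y ^ b.left * Q.y ^ b.top * (P.α * P.B) := by gcongr
    _ = potential ρ δ P Q b (-b.left) 0 P.B 0 := by
        simp only [potential, add_neg_cancel, Int.toNat_zero, pow_zero]
        ring
    _ ≤ potential ρ δ P Q b (-b.left) (P.κ * P.A) P.B (P.τ * P.Y) :=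
        h.potential_mono (mul_pos h.along.κ_pos h.along.A_pos).le le_rfl
          (mul_pos h.along.τ_pos (hy.trans_le h.along.y_le)).le

lemma step_le_of_back (h : Admissible z δ ρ P Q) :
    z * (potential ρ δ P Q b.raise x 1 1 1 +
        potential ρ δ P Q b x (P.κ * P.A) P.B (P.τ * P.Y)) ≤
      potential ρ δ P Q b x P.A (P.κ * P.B) P.τ := by
  have := h.z_pos
  calc _ ≤ z * (potential ρ δ P Q b x Q.y Q.y Q.y +
        potential ρ δ P Q b x (P.κ * P.A) P.B (P.τ * P.Y)) := by
        gcongr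
        exact h.potential_raise_le
    _ ≤ potential ρ δ P Q b x P.A (P.κ * P.B) P.τ := by
        simp only [potential_add, mul_potential, mul_add]
        exact h.potential_mono h.along.left_behind h.along.left_ahead h.along.left_center

lemma step_le (h : Admissible z δ ρ P Q) :
    z * (potential ρ δ P Q b.raise x 1 1 1 + potential ρ δ P Q b x (P.κ * P.A) P.B (P.τ * P.Y) +
        potential ρ δ P Q b.reflect (-x) (P.κ * P.A) P.B (P.τ * P.Y)) ≤
      potential ρ δ P Q b x 1 1 1 := by
  have := h.z_pos
  have hcorner : z * Q.y + z * P.B + z * (P.κ * P.A) ≤ 1 := by linarith [h.along.up_corners]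
  calc _ ≤ z * (potential ρ δ P Q b x Q.y Q.y Q.y +
        potential ρ δ P Q b x (P.κ * P.A) P.B (P.τ * P.Y) +
        potential ρ δ P Q b.reflect (-x) (P.κ * P.A) P.B (P.τ * P.Y)) := by
        gcongr
        exact h.potential_raise_le
    _ ≤ potential ρ δ P Q b x 1 1 1 := by
        simp only [potential_reflect, potential_add, mul_potential, mul_add]
        exact h.potential_mono h.along.up_corners hcorner h.along.up_center

end Admissible

end Potential

/-! ### The supermartingale bound -/

/-- The exponential weight of the endpoint `q N`. -/
noncomputable def endWeight (y₁ y₂ : ℝ) (N : ℕ) (q : ℕ → ℤ × ℤ) : ℝ :=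
  y₁ ^ (q N).1.natAbs * y₂ ^ (q N).2.natAbs

lemma endWeight_nonneg {y₁ y₂ : ℝ} (h₁ : 0 ≤ y₁) (h₂ : 0 ≤ y₂) (N : ℕ) :
    0 ≤ endWeight y₁ y₂ N :=
  fun _ => mul_nonneg (pow_nonneg h₁ _) (pow_nonneg h₂ _)

lemma pow_succ_mul_contSum_succ_le {z : ℝ} (hz : 0 ≤ z) {m n : ℕ} {p : ℕ → ℤ × ℤ}
    {f : (ℕ → ℤ × ℤ) → ℝ} (hf : 0 ≤ f) {S : Finset (ℤ × ℤ)} (hS : nextSteps n p ⊆ S) :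
    z ^ (m + 1) * contSum (m + 1) n p f ≤
      z * ∑ s ∈ S, z ^ m * contSum m (n + 1) (extend n p s) f := by
  rw [← Finset.mul_sum, ← mul_assoc, ← pow_succ']
  have := contSum_succ_le_sum (m := m) hf hS
  gcongr

lemma contSum_endWeight_reflect (y₁ y₂ : ℝ) (N m n : ℕ) (p : ℕ → ℤ × ℤ) :
    contSum m n (reflect ∘ p) (endWeight y₁ y₂ N) = contSum m n p (endWeight y₁ y₂ N) := by
  rw [isSymm_reflect.contSum_comp]
  congr 1
  funext q
  simp [endWeight]

lemma contSum_endWeight_swap (y₁ y₂ : ℝ) (N m n : ℕ) (p : ℕ → ℤ × ℤ) :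
    contSum m n (swap ∘ p) (endWeight y₁ y₂ N) = contSum m n p (endWeight y₂ y₁ N) := by
  rw [isSymm_swap.contSum_comp]
  congr 1
  funext q
  simp [endWeight, mul_comm]

lemma EndsOnTop.nextSteps_subset {n : ℕ} {p : ℕ → ℤ × ℤ} {b : Box} (h : EndsOnTop n p b) :
    nextSteps n p ⊆ {(0, 1), (-1, 0), (1, 0)} := by
  intro s hs
  obtain ⟨hs, ha⟩ := mem_nextSteps.1 hs
  have : s ≠ (0, -1) := by
    rintro rfl
    exact h.not_allowed_down ha
  simp only [steps, Finset.mem_insert, Finset.mem_singleton] at hs ⊢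
  tauto

lemma EndsOnTop.nextSteps_subset_of_back {n : ℕ} {p : ℕ → ℤ × ℤ} {b : Box} (h : EndsOnTop n p b)
    (hback : Back n p) : nextSteps n p ⊆ {(0, 1), (-1, 0)} := by
  intro s hs
  have hne : s ≠ (1, 0) := by
    rintro rfl
    exact hback.not_allowed_right (mem_nextSteps.1 hs).2
  have := h.nextSteps_subset hs
  simp only [Finset.mem_insert, Finset.mem_singleton] at this ⊢
  tauto

/-- The weighted sum over the continuations by `m` steps is bounded by the potential, both for an
arbitrary walk on the top side of its box and, with smaller coefficients, for a walk that cannot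
move to the right. -/
def PotentialBound (z δ ρ : ℝ) (m : ℕ) : Prop :=
  ∀ P Q, Admissible z δ ρ P Q → ∀ n p b, EndsOnTop n p b →
    z ^ m * contSum m n p (endWeight P.y Q.y (n + m)) ≤ potential ρ δ P Q b (p n).1 1 1 1 ∧
    (Back n p → z ^ m * contSum m n p (endWeight P.y Q.y (n + m)) ≤
      potential ρ δ P Q b (p n).1 P.A (P.κ * P.B) P.τ)

section PotentialBound

variable {z δ ρ : ℝ} {m : ℕ}

lemma potentialBound_zero (z δ ρ : ℝ) : PotentialBound z δ ρ 0 := by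
  intro P Q h n p b hp
  have hκB := mul_pos h.along.κ_pos h.along.B_pos
  simp only [pow_zero, one_mul, contSum_zero, endWeight, add_zero, hp.top, Int.natAbs_natCast]
  exact ⟨h.pow_mul_pow_le_potential zero_le_one zero_le_one (by simpa using h.one_le_δ),
    fun _ => h.pow_mul_pow_le_potential h.along.A_pos.le hκB.le h.along.one_le_δ_mul_τ⟩

variable {P Q : Side} {n : ℕ} {p : ℕ → ℤ × ℤ} {b : Box}

lemma PotentialBound.up (hm : PotentialBound z δ ρ m) (h : Admissible z δ ρ P Q)
    (hp : EndsOnTop n p b) :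
    z ^ m * contSum m (n + 1) (extend n p (0, 1)) (endWeight P.y Q.y (n + 1 + m)) ≤
      potential ρ δ P Q b.raise (p n).1 1 1 1 := by
  simpa using (hm P Q h _ _ _ hp.up).1

lemma PotentialBound.left (hm : PotentialBound z δ ρ m) (h : Admissible z δ ρ P Q)
    (hp : EndsOnTop n p b) :
    z ^ m * contSum m (n + 1) (extend n p (-1, 0)) (endWeight P.y Q.y (n + 1 + m)) ≤
      potential ρ δ P Q b (p n).1 (P.κ * P.A) P.B (P.τ * P.Y) := by
  rcases hp.mem_toSet.1.1.lt_or_eq with hx | hx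
  · have hbound := (hm P Q h _ _ _ (hp.left hx)).2 (back_extend_left n p)
    simp only [extend_succ, Prod.fst_add, ← sub_eq_add_neg] at hbound
    exact hbound.trans (h.potential_left_le ⟨hx, hp.mem_toSet.1.2⟩)
  · have hbound := (hm Q P h.symm _ _ _ (hp.exitLeft hx.symm)).1
    rw [contSum_endWeight_swap, contSum_endWeight_reflect] at hbound
    simp only [Function.comp_apply, extend_succ, reflect_apply, swap_apply, Prod.snd_add, hp.top,
      add_zero] at hbound
    exact hx ▸ hbound.trans h.potential_exitLeft_le

lemma PotentialBound.right (hm : PotentialBound z δ ρ m) (h : Admissible z δ ρ P Q)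
    (hp : EndsOnTop n p b) :
    z ^ m * contSum m (n + 1) (extend n p (1, 0)) (endWeight P.y Q.y (n + 1 + m)) ≤
      potential ρ δ P Q b.reflect (-(p n).1) (P.κ * P.A) P.B (P.τ * P.Y) := by
  have hbound := hm.left h hp.reflect
  rwa [extend_reflect_left, contSum_endWeight_reflect] at hbound

lemma PotentialBound.succ (hm : PotentialBound z δ ρ m) : PotentialBound z δ ρ (m + 1) := by
  intro P Q h n p b hp
  have hz := h.z_pos
  have hup := hm.up h hp
  have hleft := hm.left h hp
  have hright := hm.right h hp
  rw [← add_assoc, add_right_comm]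
  set w := endWeight P.y Q.y (n + 1 + m)
  have hw : 0 ≤ w := endWeight_nonneg h.along.y_pos.le h.across.y_pos.le _
  constructor
  · refine (pow_succ_mul_contSum_succ_le hz.le hw hp.nextSteps_subset).trans (le_trans ?_ h.step_le)
    rw [Finset.sum_insert (by decide), Finset.sum_pair (by decide), ← add_assoc]
    gcongr
  · intro hback
    refine (pow_succ_mul_contSum_succ_le hz.le hw (hp.nextSteps_subset_of_back hback)).trans
      (le_trans ?_ h.step_le_of_back)
    rw [Finset.sum_pair (by decide)]
    gcongr

lemma potentialBound (z δ ρ : ℝ) (m : ℕ) : PotentialBound z δ ρ m := by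
  induction m with
  | zero => exact potentialBound_zero z δ ρ
  | succ m ih => exact ih.succ

end PotentialBound

lemma Admissible.contSum_le_potential {z δ ρ : ℝ} {P Q : Side} (h : Admissible z δ ρ P Q)
    {n : ℕ} {p : ℕ → ℤ × ℤ} {b : Box} (hp : EndsOnTop n p b) (m : ℕ) :
    z ^ m * contSum m n p (endWeight P.y Q.y (n + m)) ≤ potential ρ δ P Q b (p n).1 1 1 1 :=
  (potentialBound z δ ρ m P Q h n p b hp).1

/-! ### The critical parameter -/

/-- `z` is the inverse of the exponential growth rate of the number of prudent paths. -/
structure IsCritical (z : ℝ) : Prop where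
  lo : 0.4 < z
  hi : z < 0.41
  root : 2 * z ^ 3 - 2 * z ^ 2 - 2 * z + 1 = 0

lemma exists_isCritical : ∃ z, IsCritical z := by
  have hcont : ContinuousOn (fun z : ℝ => 2 * z ^ 3 - 2 * z ^ 2 - 2 * z + 1) (Icc 0.4 0.41) := by
    fun_prop
  obtain ⟨z, ⟨hlo, hhi⟩, hroot⟩ := intermediate_value_Icc' (by norm_num) hcont
    (show (0 : ℝ) ∈ Icc _ _ by constructor <;> norm_num)
  simp only at hroot
  refine ⟨z, hlo.lt_of_ne ?_, hhi.lt_of_ne ?_, hroot⟩ <;> rintro rfl <;> norm_num at hroot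

/-- The logarithmic derivative in the step weight, at the critical parameter, of
`z * o * ((1 - z ^ 2 * (1 + p))⁻¹ + p⁻¹)` at `o = p = 1`. -/
noncomputable def weightSlope (z : ℝ) : ℝ := 1 + 4 * z ^ 3 / (1 - 2 * z ^ 2) ^ 2

/-- Minus the derivative in `p`, at the critical parameter, of
`z * o * ((1 - z ^ 2 * (1 + p))⁻¹ + p⁻¹)` at `o = p = 1`. -/
noncomputable def ratioSlope (z : ℝ) : ℝ := z - z ^ 3 / (1 - 2 * z ^ 2) ^ 2

/-- The limiting speed of each coordinate of the walk. -/
noncomputable def speed (z : ℝ) : ℝ := 1 / (2 * weightSlope z)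

namespace IsCritical

variable {z : ℝ}

lemma pos (h : IsCritical z) : 0 < z := by linarith [h.lo]

lemma lt_one_sub_two_mul_sq (h : IsCritical z) : 0.6 < 1 - 2 * z ^ 2 := by
  nlinarith [h.lo, h.hi]

lemma inv_add_one_eq_inv (h : IsCritical z) : (1 - 2 * z ^ 2)⁻¹ + 1 = z⁻¹ := by
  have hD : 1 - 2 * z ^ 2 ≠ 0 := by linarith [h.lt_one_sub_two_mul_sq]
  have hz : z ≠ 0 := h.pos.ne'
  field_simp
  linarith [h.root]

lemma one_lt_weightSlope (h : IsCritical z) : 1 < weightSlope z := by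
  have hD := h.lt_one_sub_two_mul_sq
  have hz := h.pos
  exact lt_add_of_pos_right 1 (by positivity)

lemma ratioSlope_pos (h : IsCritical z) : 0 < ratioSlope z := by
  have hz := h.pos
  have hD : z < 1 - 2 * z ^ 2 := by linarith [h.lt_one_sub_two_mul_sq, h.hi]
  rw [ratioSlope, sub_pos, div_lt_iff₀ (pow_pos (hz.trans hD) 2), pow_succ']
  gcongr

lemma speed_pos (h : IsCritical z) : 0 < speed z :=
  one_div_pos.2 (by linarith [h.one_lt_weightSlope])

end IsCritical

lemma eventually_lt_of_hasDerivAt_neg {F : ℝ → ℝ} {d x : ℝ} (h : HasDerivAt F d x) (hd : d < 0) :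
    ∀ᶠ t in nhdsWithin x (Ioi x), F t < F x := by
  have hslope := ((hasDerivAt_iff_tendsto_slope.1 h).mono_left
    (nhdsWithin_mono x fun t (ht : x < t) => ht.ne')).eventually_lt_const hd
  filter_upwards [hslope, self_mem_nhdsWithin] with t ht (hxt : x < t)
  exact (slope_neg_iff_of_le hxt.le).1 ht

lemma eventually_nhdsWithin_lt_of_continuous {X : Type*} [TopologicalSpace X] {F : X → ℝ} {a : ℝ}
    {x : X} {s : Set X} (hF : Continuous F) (h : F x < a) : ∀ᶠ t in nhdsWithin x s, F t < a :=
  ((hF.tendsto x).mono_left nhdsWithin_le_nhds).eventually_lt_const h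

lemma IsCritical.hasDerivAt_corners {z : ℝ} (h : IsCritical z) (η o r : ℝ) :
    HasDerivAt (fun t => z * Real.exp (η * t) * Real.exp (o * t) *
        ((1 - (z * Real.exp (η * t)) ^ 2 * (1 + Real.exp (r * t)))⁻¹ + (Real.exp (r * t))⁻¹))
      (weightSlope z * η + o - ratioSlope z * r) 0 := by
  have hD : 1 - 2 * z ^ 2 ≠ 0 := by linarith [h.lt_one_sub_two_mul_sq]
  have hexp (k : ℝ) : HasDerivAt (fun t => Real.exp (k * t)) k 0 := by
    simpa using ((hasDerivAt_id (0 : ℝ)).const_mul k).exp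
  have hweight := (hexp η).const_mul z
  have hgeom := (((hweight.pow 2).mul ((hexp r).const_add 1)).const_sub 1).inv (by
    simp only [Pi.pow_apply, Pi.mul_apply, mul_zero, Real.exp_zero]
    contrapose! hD
    linear_combination hD)
  refine ((hweight.mul (hexp o)).mul (hgeom.add ((hexp r).inv (Real.exp_ne_zero _)))).congr_deriv ?_
  have hzz : z * z⁻¹ = 1 := mul_inv_cancel₀ h.pos.ne'
  simp only [mul_zero, Real.exp_zero, mul_one, Pi.mul_apply, Pi.pow_apply, Pi.add_apply,
    Pi.inv_apply, show z ^ 2 * (1 + 1) = 2 * z ^ 2 by ring, inv_one, h.inv_add_one_eq_inv,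
    weightSlope, ratioSlope]
  linear_combination (η + o) * hzz

lemma IsCritical.eventually_corners_lt_one {z : ℝ} (h : IsCritical z) {η o r : ℝ}
    (hlt : weightSlope z * η + o - ratioSlope z * r < 0) :
    ∀ᶠ t in nhdsWithin 0 (Ioi 0), z * Real.exp (η * t) * Real.exp (o * t) *
      ((1 - (z * Real.exp (η * t)) ^ 2 * (1 + Real.exp (r * t)))⁻¹ + (Real.exp (r * t))⁻¹) < 1 := by
  refine (eventually_lt_of_hasDerivAt_neg (h.hasDerivAt_corners η o r) hlt).mono
    fun t ht => ht.trans_eq ?_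
  simp only [mul_zero, Real.exp_zero, mul_one, inv_one]
  rw [show z ^ 2 * (1 + 1) = 2 * z ^ 2 by ring, h.inv_add_one_eq_inv, mul_inv_cancel₀ h.pos.ne']

/-- The parameters of a side for which the conditions at the corners hold with equality. Here `z` is
the weight of a step, `o` the weight per unit of displacement along the other axis, and `p` a
free parameter of this family. -/
noncomputable def tightSide (z y o Y p α : ℝ) : Side where
  y := y
  Y := Y
  κ := z * (1 + p)
  α := α
  A := z * o / (1 - z ^ 2 * (1 + p))
  B := o / p
  τ := z * o / (1 - z * Y)

lemma sideAdmissible_tightSide {z y o Y p α δ ρ : ℝ} {Q : Side} (hz : 0 < z) (hρ : ρ < 1)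
    (hy : 0 < y) (hyY : y ≤ Y) (hY : 1 ≤ y * Y) (hp : 0 < p) (ho : 0 < o) (hα : 0 < α)
    (hQ : Q.y = o) (hκ : Y * (z * (1 + p)) ≤ ρ)
    (hcorners : z * o * ((1 - z ^ 2 * (1 + p))⁻¹ + p⁻¹) ≤ 1)
    (hcenter : z * o * (1 - z * Y) + 2 * z ^ 2 * o * Y ≤ 1 - z * Y)
    (hδ : 1 ≤ δ * (z * o / (1 - z * Y))) (hexit : y * (Q.α + δ) * p ≤ α * o) :
    SideAdmissible z δ ρ (tightSide z y o Y p α) Q := by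
  have hY₁ : 1 ≤ Y := by nlinarith
  have hzp : z * (1 + p) < 1 := by nlinarith [mul_pos hz hp]
  have hD : 0 < 1 - z ^ 2 * (1 + p) := by nlinarith [mul_pos hz hp]
  have hE : 0 < 1 - z * Y := by nlinarith [mul_pos (mul_pos hz hp) (one_pos.trans_le hY₁)]
  have hA : z * o / (1 - z ^ 2 * (1 + p)) * (1 - z ^ 2 * (1 + p)) = z * o :=
    div_mul_cancel₀ _ hD.ne'
  have hB : o / p * p = o := div_mul_cancel₀ _ hp.ne'
  have hτ : z * o / (1 - z * Y) * (1 - z * Y) = z * o := div_mul_cancel₀ _ hE.ne'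
  have hAB : z * o / (1 - z ^ 2 * (1 + p)) + z * (o / p) ≤ 1 := by
    convert hcorners using 1
    ring
  have hττ : 2 * z * (z * o / (1 - z * Y) * Y) ≤ 1 - z * o := by
    rw [show 2 * z * (z * o / (1 - z * Y) * Y) = 2 * z ^ 2 * o * Y / (1 - z * Y) by ring,
      div_le_iff₀ hE]
    linarith
  constructor <;> simp only [tightSide, hQ]
  case y_pos => exact hy
  case y_le => exact hyY
  case one_le_y_mul => exact hY
  case κ_pos => positivity
  case α_pos => exact hα
  case A_pos => positivity
  case B_pos => positivity
  case τ_pos => positivity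
  case one_le_δ_mul_τ => exact hδ
  case Y_mul_κ_le => exact hκ
  case up_corners => linear_combination hAB - hA
  case up_center => linear_combination hττ
  case left_behind => linear_combination -hA
  case left_ahead => linear_combination -z * hB
  case left_center => linear_combination -hτ
  case exit => rwa [← mul_div_assoc, le_div_iff₀ hp]

lemma IsCritical.eventually_sideAdmissible {z : ℝ} (h : IsCritical z) {η s o r : ℝ}
    (hlt : weightSlope z * η + o - ratioSlope z * r < 0) :
    ∀ᶠ t in nhdsWithin 0 (Ioi 0), ∃ τ, 0 < τ ∧ ∀ (α δ : ℝ) (Q : Side), 0 < α →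
      Q.y = Real.exp (o * t) → 1 ≤ δ * τ →
      Real.exp (s * t) * (Q.α + δ) * Real.exp (r * t) ≤ α * Real.exp (o * t) →
      SideAdmissible (z * Real.exp (η * t)) δ 0.9 (tightSide (z * Real.exp (η * t))
        (Real.exp (s * t)) (Real.exp (o * t)) (Real.exp (|s| * t)) (Real.exp (r * t)) α) Q := by
  have hz := h.pos
  have hlo := h.lo
  have hhi := h.hi
  have hκ := eventually_nhdsWithin_lt_of_continuous (x := 0) (s := Ioi 0) (a := 0.9)
    (F := fun t => Real.exp (|s| * t) * (z * Real.exp (η * t) * (1 + Real.exp (r * t))))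
    (by fun_prop) (by
      simp only [mul_zero, Real.exp_zero, mul_one, one_mul]
      linarith)
  have hcenter := eventually_nhdsWithin_lt_of_continuous (x := 0) (s := Ioi 0) (a := 0)
    (F := fun t => z * Real.exp (η * t) * Real.exp (o * t) *
        (1 - z * Real.exp (η * t) * Real.exp (|s| * t)) +
      2 * (z * Real.exp (η * t)) ^ 2 * Real.exp (o * t) * Real.exp (|s| * t) -
      (1 - z * Real.exp (η * t) * Real.exp (|s| * t))) (by fun_prop) (by
      simp only [mul_zero, Real.exp_zero, mul_one]
      nlinarith)
  have hE := eventually_nhdsWithin_lt_of_continuous (x := 0) (s := Ioi 0) (a := 1)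
    (F := fun t => z * Real.exp (η * t) * Real.exp (|s| * t)) (by fun_prop) (by
      simp only [mul_zero, Real.exp_zero, mul_one]
      linarith)
  filter_upwards [h.eventually_corners_lt_one hlt, hκ, hcenter, hE, self_mem_nhdsWithin] with
    t hcorners hκ hcenter hE (ht : 0 < t)
  refine ⟨z * Real.exp (η * t) * Real.exp (o * t) /
    (1 - z * Real.exp (η * t) * Real.exp (|s| * t)), div_pos (by positivity) (by linarith),
    fun α δ Q hα hQ hδ hexit => ?_⟩
  refine sideAdmissible_tightSide (by positivity) (by norm_num) (Real.exp_pos _) ?_ ?_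
    (Real.exp_pos _) (Real.exp_pos _) hα hQ hκ.le hcorners.le (sub_neg.1 hcenter).le hδ hexit
  · gcongr
    exact le_abs_self s
  · rw [← Real.exp_add, ← add_mul]
    exact Real.one_le_exp (mul_nonneg (by linarith [neg_abs_le s]) ht.le)

/-- The two exit inequalities are linear in the corner weights and solvable because going around two
corners multiplies the weight by `p * q < 1`. -/
lemma exists_corner_weights {y₁ y₂ p q τ₁ τ₂ : ℝ} (hy₁ : 0 < y₁) (hy₂ : 0 < y₂) (hp : 0 < p)
    (hq : 0 < q) (hpq : p * q < 1) (hτ₁ : 0 < τ₁) (hτ₂ : 0 < τ₂) :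
    ∃ δ a b : ℝ, 1 ≤ δ ∧ 1 ≤ δ * τ₁ ∧ 1 ≤ δ * τ₂ ∧ 0 < a ∧ 0 < b ∧
      y₁ * (b + δ) * p ≤ a * y₂ ∧ y₂ * (a + δ) * q ≤ b * y₁ := by
  have := sub_pos.2 hpq
  obtain ⟨δ, hδ⟩ : ∃ δ, δ = 1 + τ₁⁻¹ + τ₂⁻¹ := ⟨_, rfl⟩
  obtain ⟨a, ha⟩ : ∃ a, a = δ * (p * q * y₂ + p * y₁) / (y₂ * (1 - p * q)) := ⟨_, rfl⟩
  have hδ_pos : 0 < δ := by rw [hδ]; positivity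
  have ha_pos : 0 < a := by rw [ha]; positivity
  refine ⟨δ, a, (a + δ) * q * y₂ / y₁, ?_, ?_, ?_, ha_pos, by positivity, ?_, ?_⟩
  · have := inv_pos.2 hτ₁
    have := inv_pos.2 hτ₂
    linarith
  · rw [← inv_le_iff_one_le_mul₀ hτ₁]
    have := inv_pos.2 hτ₂
    linarith
  · rw [← inv_le_iff_one_le_mul₀ hτ₂]
    have := inv_pos.2 hτ₁
    linarith
  · have ha' : a * (y₂ * (1 - p * q)) = δ * (p * q * y₂ + p * y₁) := by
      rw [ha, div_mul_cancel₀ _ (by positivity)]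
    have hb : y₁ * ((a + δ) * q * y₂ / y₁ + δ) = (a + δ) * q * y₂ + y₁ * δ := by field_simp
    rw [hb]
    linear_combination -ha'
  · rw [div_mul_cancel₀ _ hy₁.ne']
    exact le_of_eq (by ring)

theorem IsCritical.eventually_exists_admissible {z : ℝ} (h : IsCritical z) {η s₁ s₂ : ℝ}
    (hs : 2 * weightSlope z * η + s₁ + s₂ < 0) :
    ∀ᶠ t in nhdsWithin 0 (Ioi 0), ∃ δ ρ P Q, P.y = Real.exp (s₁ * t) ∧
      Q.y = Real.exp (s₂ * t) ∧ Admissible (z * Real.exp (η * t)) δ ρ P Q := by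
  have hb := h.ratioSlope_pos
  set k := -(2 * weightSlope z * η + s₁ + s₂) / 4 with hk
  obtain ⟨r₁, hr₁⟩ : ∃ r, ratioSlope z * r = weightSlope z * η + s₂ + k :=
    ⟨_, mul_div_cancel₀ _ hb.ne'⟩
  obtain ⟨r₂, hr₂⟩ : ∃ r, ratioSlope z * r = weightSlope z * η + s₁ + k :=
    ⟨_, mul_div_cancel₀ _ hb.ne'⟩
  have hr : r₁ + r₂ < 0 := by
    refine neg_of_mul_neg_right ?_ hb.le
    rw [mul_add, hr₁, hr₂]
    linarith
  filter_upwards [h.eventually_sideAdmissible (η := η) (s := s₁) (o := s₂) (r := r₁) (by linarith),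
    h.eventually_sideAdmissible (η := η) (s := s₂) (o := s₁) (r := r₂) (by linarith),
    self_mem_nhdsWithin] with t ⟨τ₁, hτ₁, h₁⟩ ⟨τ₂, hτ₂, h₂⟩ (ht : 0 < t)
  have hpq : Real.exp (r₁ * t) * Real.exp (r₂ * t) < 1 := by
    rw [← Real.exp_add, ← add_mul, Real.exp_lt_one_iff]
    exact mul_neg_of_neg_of_pos hr ht
  obtain ⟨δ, a, b, hδ, hδ₁, hδ₂, ha, hb, hexit₁, hexit₂⟩ := exists_corner_weights
    (Real.exp_pos (s₁ * t)) (Real.exp_pos (s₂ * t)) (Real.exp_pos _) (Real.exp_pos _) hpq hτ₁ hτ₂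
  exact ⟨δ, 0.9, _, _, rfl, rfl, mul_pos h.pos (Real.exp_pos _), hδ, by norm_num, by norm_num,
    h₁ a δ (tightSide _ _ _ _ _ b) ha rfl hδ₁ hexit₁,
    h₂ b δ (tightSide _ _ _ _ _ a) hb rfl hδ₂ hexit₂⟩

/-! ### Exponential moments of the endpoint -/

lemma Admissible.potential_le {z δ ρ : ℝ} {P Q : Side} (h : Admissible z δ ρ P Q) (b : Box)
    (x : ℤ) : potential ρ δ P Q b x 1 1 1 ≤ correction ρ 0 * correction ρ 0 * Q.y ^ b.top *
      (P.α * P.y ^ b.right + P.α * P.y ^ b.left + δ * P.y ^ x.natAbs) := by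
  have hP := h.along
  have hy := hP.y_pos
  have hyQ := h.across.y_pos
  have hα := hP.α_pos
  have hcorrection (k : ℕ) : 0 < correction ρ k := correction_pos ρ k
  have hanti := antitone_correction h.ρ_pos h.ρ_lt_one
  have hκ : P.κ ≤ 1 := by nlinarith [hP.y_le, hP.one_le_y_mul, hP.Y_mul_κ_le, h.ρ_lt_one]
  have hcorner (j k : ℕ) : P.α * P.y ^ j * P.κ ^ k ≤ P.α * P.y ^ j :=
    mul_le_of_le_one_right (by positivity) (pow_le_one₀ hP.κ_pos.le hκ)
  have hκ_pos := hP.κ_pos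
  have hδ := h.δ_pos
  have h₀ := hcorrection 0
  have h₁ := hcorrection (b.bottom + b.top)
  simp only [potential, one_mul]
  gcongr ?_ * ?_ * _ * (?_ + ?_ + _)
  exacts [hanti (Nat.zero_le _), hanti (Nat.zero_le _), hcorner _ _, hcorner _ _]

theorem IsCritical.exists_contSum_one_le {z : ℝ} (h : IsCritical z) {η : ℝ} (hη : 0 < η) :
    ∃ C, 0 < C ∧ ∀ (m n : ℕ) (p : ℕ → ℤ × ℤ), EndsOnSide n p →
      z ^ m * contSum m n p 1 ≤ C * Real.exp (η * m) := by
  have hslope : 2 * weightSlope z * (-1) + 0 + 0 < 0 := by linarith [h.one_lt_weightSlope]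
  obtain ⟨t, ⟨δ, ρ, P, Q, hPy, hQy, hPQ⟩, ht⟩ :=
    ((h.eventually_exists_admissible hslope).and (Ioo_mem_nhdsGT hη)).exists
  rw [zero_mul, Real.exp_zero] at hPy hQy
  have hα := hPQ.along.α_pos
  have hδ := hPQ.δ_pos
  have hcorrection := correction_pos ρ 0
  refine ⟨correction ρ 0 * correction ρ 0 * (P.α + P.α + δ), by positivity,
    fun m n p ⟨e, he, b, hp⟩ => ?_⟩
  have hbound := (hPQ.contSum_le_potential hp m).trans (hPQ.potential_le b _)
  have hweight : endWeight P.y Q.y (n + m) = 1 := by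
    funext q
    simp [endWeight, hPy, hQy]
  rw [hweight, he.contSum_comp] at hbound
  simp only [hPy, hQy, one_pow, mul_one, mul_pow, ← Real.exp_nat_mul] at hbound
  have hexp : Real.exp (m * (-1 * t)) * Real.exp (m * t) = 1 := by
    rw [← Real.exp_add, ← mul_add, neg_one_mul, neg_add_cancel, mul_zero, Real.exp_zero]
  calc z ^ m * contSum m n p 1
      = z ^ m * Real.exp (m * (-1 * t)) * contSum m n p 1 * Real.exp (m * t) := by
        linear_combination -(z ^ m * contSum m n p 1) * hexp
    _ ≤ correction ρ 0 * correction ρ 0 * (P.α + P.α + δ) * Real.exp (η * m) := by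
        rw [mul_comm η]
        gcongr ?_ * Real.exp (_ * ?_)
        · exact hbound
        · exact ht.2.le

lemma IsSymm.endWeight_comp {e : (ℤ × ℤ) ≃+ (ℤ × ℤ)} (he : IsSymm e) (N : ℕ) :
    (∀ y₁ y₂ q, endWeight y₁ y₂ N (e ∘ q) = endWeight y₁ y₂ N q) ∨
      ∀ y₁ y₂ q, endWeight y₁ y₂ N (e ∘ q) = endWeight y₂ y₁ N q := by
  refine he.natAbs_apply.imp (fun h y₁ y₂ q => ?_) fun h y₁ y₂ q => ?_
  · simp [endWeight, h]
  · simp [endWeight, h, mul_comm]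

lemma Admissible.contSum_unit_box_le {z δ ρ : ℝ} {P Q : Side} (h : Admissible z δ ρ P Q)
    {p : ℕ → ℤ × ℤ} (hp : EndsOnTop 1 p ⟨0, 0, 0, 1⟩) (m : ℕ) :
    z ^ m * contSum m 1 p (endWeight P.y Q.y (1 + m)) ≤
      correction ρ 0 * correction ρ 0 * Q.y * (P.α + P.α + δ) := by
  have hx : (p 1).1 = 0 := by
    have := hp.mem_toSet.1
    simp only [Nat.cast_zero, neg_zero, mem_Icc] at this
    lia
  simpa [hx] using (h.contSum_le_potential hp m).trans (h.potential_le _ _)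

lemma Admissible.exists_contSum_first_step_le {z δ ρ : ℝ} {P Q : Side}
    (h : Admissible z δ ρ P Q) :
    ∃ C, ∀ s ∈ steps, ∀ m,
      z ^ m * contSum m 1 (extend 0 0 s) (endWeight P.y Q.y (1 + m)) ≤ C := by
  refine ⟨max (correction ρ 0 * correction ρ 0 * Q.y * (P.α + P.α + δ))
    (correction ρ 0 * correction ρ 0 * P.y * (Q.α + Q.α + δ)), fun s hs m => ?_⟩
  obtain ⟨e, he, hp⟩ := exists_isSymm_endsOnTop (p := extend 0 0 s) rfl (by simpa [extend] using hs)
  have h₁ := h.contSum_unit_box_le hp m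
  have h₂ := h.symm.contSum_unit_box_le hp m
  rw [he.contSum_comp] at h₁ h₂
  rcases he.endWeight_comp (1 + m) with heq | heq
  · simp only [heq] at h₁
    exact h₁.trans (le_max_left _ _)
  · simp only [heq] at h₂
    exact h₂.trans (le_max_right _ _)

lemma Admissible.exists_contSum_endWeight_le {z δ ρ : ℝ} {P Q : Side}
    (h : Admissible z δ ρ P Q) :
    ∃ C, ∀ n, z ^ n * contSum n 0 0 (endWeight P.y Q.y n) ≤ C := by
  obtain ⟨C, hC⟩ := h.exists_contSum_first_step_le
  refine ⟨max 1 (z * ∑ _s ∈ steps, C), fun n => ?_⟩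
  rcases n with _ | m
  · simp [endWeight]
  have hsubset : nextSteps 0 0 ⊆ steps := fun s hs => (mem_nextSteps.1 hs).1
  have hz := h.z_pos.le
  refine le_max_of_le_right ((pow_succ_mul_contSum_succ_le hz
    (endWeight_nonneg h.along.y_pos.le h.across.y_pos.le _) hsubset).trans ?_)
  gcongr with s hs
  rw [add_comm m]
  exact hC s hs m

/-! ### Exponentially small events -/

/-- The prudent walks of length `n` in `S n` contribute exponentially little to the generating
function at `z`. -/
def ExpSmall (z : ℝ) (S : ℕ → Set (ℕ → ℤ × ℤ)) : Prop :=
  ∃ C κ, 0 < C ∧ 0 < κ ∧ ∀ n, 1 ≤ n →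
    z ^ n * contSum n 0 0 ((S n).indicator 1) ≤ C * Real.exp (-(κ * n))

lemma ExpSmall.mono {z : ℝ} (hz : 0 ≤ z) {S T : ℕ → Set (ℕ → ℤ × ℤ)} (hT : ExpSmall z T)
    (h : ∀ n, 1 ≤ n → ∀ q, IsPrudent n q → q ∈ S n → q ∈ T n) : ExpSmall z S := by
  obtain ⟨C, κ, hC, hκ, hbound⟩ := hT
  refine ⟨C, κ, hC, hκ, fun n hn => le_trans ?_ (hbound n hn)⟩
  gcongr
  refine contSum_le_of_isPrudent fun q hq => ?_
  refine indicator_apply_le' (fun hS => ?_) fun _ => indicator_nonneg (fun _ _ => zero_le_one) q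
  rw [indicator_of_mem (h n hn q hq hS)]

lemma ExpSmall.union {z : ℝ} (hz : 0 ≤ z) {S T : ℕ → Set (ℕ → ℤ × ℤ)} (hS : ExpSmall z S)
    (hT : ExpSmall z T) : ExpSmall z fun n => S n ∪ T n := by
  obtain ⟨C₁, κ₁, hC₁, hκ₁, hbound₁⟩ := hS
  obtain ⟨C₂, κ₂, hC₂, hκ₂, hbound₂⟩ := hT
  refine ⟨C₁ + C₂, min κ₁ κ₂, add_pos hC₁ hC₂, lt_min hκ₁ hκ₂, fun n hn => ?_⟩
  have hsplit : contSum n 0 0 ((S n ∪ T n).indicator 1) ≤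
      contSum n 0 0 ((S n).indicator 1) + contSum n 0 0 ((T n).indicator 1) := by
    rw [← map_add]
    refine contSum_mono n 0 0 ?_
    rw [← indicator_union_add_inter]
    exact le_add_of_nonneg_right (indicator_nonneg fun _ _ => zero_le_one)
  calc z ^ n * contSum n 0 0 ((S n ∪ T n).indicator 1)
      ≤ z ^ n * contSum n 0 0 ((S n).indicator 1) + z ^ n * contSum n 0 0 ((T n).indicator 1) := by
        rw [← mul_add]
        gcongr
    _ ≤ C₁ * Real.exp (-(κ₁ * n)) + C₂ * Real.exp (-(κ₂ * n)) :=
        add_le_add (hbound₁ n hn) (hbound₂ n hn)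
    _ ≤ (C₁ + C₂) * Real.exp (-(min κ₁ κ₂ * n)) := by
        rw [add_mul]
        gcongr
        exacts [min_le_left _ _, min_le_right _ _]

theorem IsCritical.expSmall_le_add {z : ℝ} (h : IsCritical z) {s₁ s₂ a : ℝ}
    (ha : speed z * (s₁ + s₂) < a) :
    ExpSmall z fun n => {q | a * n ≤ s₁ * |((q n).1 : ℝ)| + s₂ * |((q n).2 : ℝ)|} := by
  have hw : 0 < weightSlope z := one_pos.trans h.one_lt_weightSlope
  obtain ⟨η, hη, hηa⟩ : ∃ η, 2 * weightSlope z * η + s₁ + s₂ < 0 ∧ 0 < a + η := by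
    refine ⟨-(speed z * (s₁ + s₂) + a) / 2, ?_, by linarith⟩
    have hspeed : 2 * weightSlope z * speed z = 1 := mul_one_div_cancel (by positivity)
    linear_combination weightSlope z * ha - (s₁ + s₂) * hspeed
  obtain ⟨t, ⟨δ, ρ, P, Q, hPy, hQy, hPQ⟩, ht : 0 < t⟩ :=
    ((h.eventually_exists_admissible hη).and self_mem_nhdsWithin).exists
  obtain ⟨C, hC⟩ := hPQ.exists_contSum_endWeight_le
  refine ⟨max C 1, t * (a + η), by positivity, by positivity, fun n _ => ?_⟩
  set S := {q : ℕ → ℤ × ℤ | a * n ≤ s₁ * |((q n).1 : ℝ)| + s₂ * |((q n).2 : ℝ)|}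
  have hmarkov : S.indicator 1 ≤ Real.exp (-(t * a * n)) • endWeight P.y Q.y n := by
    refine indicator_le' (fun q (hq : a * n ≤ _) => ?_) fun q _ => ?_
    · simp only [Pi.one_apply, Pi.smul_apply, smul_eq_mul, endWeight, hPy, hQy,
        ← Real.exp_nat_mul, ← Real.exp_add, Nat.cast_natAbs, Int.cast_abs]
      refine Real.one_le_exp ?_
      linear_combination t * hq
    · exact mul_nonneg (Real.exp_nonneg _)
        (endWeight_nonneg hPQ.along.y_pos.le hPQ.across.y_pos.le n q)
  have hz := h.pos
  calc z ^ n * contSum n 0 0 (S.indicator 1)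
      ≤ z ^ n * contSum n 0 0 (Real.exp (-(t * a * n)) • endWeight P.y Q.y n) := by
        gcongr
        exact contSum_mono n 0 0 hmarkov
    _ = (z * Real.exp (η * t)) ^ n * contSum n 0 0 (endWeight P.y Q.y n) *
          Real.exp (-(t * (a + η) * n)) := by
        rw [map_smul, smul_eq_mul, mul_pow, ← Real.exp_nat_mul,
          show -(t * a * n) = n * (η * t) + -(t * (a + η) * n) by ring, Real.exp_add]
        ring
    _ ≤ max C 1 * Real.exp (-(t * (a + η) * n)) := by
        gcongr
        exact (hC n).trans (le_max_left _ _)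

/-- At time `n` both coordinates have absolute value within `ε n` of `c n`. -/
def NearDiagonal (c ε : ℝ) (n : ℕ) (v : ℤ × ℤ) : Prop :=
  |(|(v.1 : ℝ)|) - c * n| ≤ ε * n ∧ |(|(v.2 : ℝ)|) - c * n| ≤ ε * n

lemma IsCritical.expSmall_not_nearDiagonal {z : ℝ} (h : IsCritical z) {ε : ℝ} (hε : 0 < ε) :
    ExpSmall z fun n => {q | ¬ NearDiagonal (speed z) ε n (q n)} := by
  have hz := h.pos.le
  have hfast₁ := h.expSmall_le_add (s₁ := 1) (s₂ := 0) (a := speed z + ε) (by linarith)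
  have hslow₁ := h.expSmall_le_add (s₁ := -1) (s₂ := 0) (a := -speed z + ε) (by linarith)
  have hfast₂ := h.expSmall_le_add (s₁ := 0) (s₂ := 1) (a := speed z + ε) (by linarith)
  have hslow₂ := h.expSmall_le_add (s₁ := 0) (s₂ := -1) (a := -speed z + ε) (by linarith)
  refine ((hfast₁.union hz hslow₁).union hz (hfast₂.union hz hslow₂)).mono hz fun n _ q _ hq => ?_
  contrapose! hq
  simp only [mem_union, mem_ofPred_eq, not_or, not_le] at hq
  simp only [mem_ofPred_eq, not_not, NearDiagonal, abs_le]
  refine ⟨⟨?_, ?_⟩, ?_, ?_⟩ <;> linarith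

lemma IsCritical.exists_contSum_add_le {z : ℝ} (h : IsCritical z) {η : ℝ} (hη : 0 < η) :
    ∃ C, 0 < C ∧ ∀ (m n : ℕ) (V : Set (ℤ × ℤ)), 1 ≤ n →
      z ^ (n + m) * contSum (n + m) 0 0 ({q | q n ∈ V}.indicator 1) ≤
        C * Real.exp (η * m) * (z ^ n * contSum n 0 0 ({q | q n ∈ V}.indicator 1)) := by
  obtain ⟨C, hC, hbound⟩ := h.exists_contSum_one_le hη
  refine ⟨C, hC, fun m n V hn => ?_⟩
  set f : (ℕ → ℤ × ℤ) → ℝ := {q | q n ∈ V}.indicator 1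
  have hcont (q : ℕ → ℤ × ℤ) : contSum m n q f = f q * contSum m n q 1 := by
    rw [show f = fun q => V.indicator 1 (q n) * (1 : (ℕ → ℤ × ℤ) → ℝ) q from
      funext fun q => (mul_one (f q)).symm, contSum_apply_mul _ _ m le_rfl q]
    simp
  have hstep : contSum n 0 0 (z ^ m • fun q => contSum m n q f) ≤
      contSum n 0 0 ((C * Real.exp (η * m)) • f) := by
    refine contSum_le_of_isPrudent fun q hq => ?_
    have hf : 0 ≤ f q := indicator_nonneg (fun _ _ => zero_le_one) q
    simp only [Pi.smul_apply, smul_eq_mul, hcont, mul_left_comm (z ^ m), mul_comm _ (f q)]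
    exact mul_le_mul_of_nonneg_left (hbound m n q (hq.endsOnSide hn)) hf
  rw [map_smul, map_smul, smul_eq_mul, smul_eq_mul] at hstep
  have hz := h.pos
  calc z ^ (n + m) * contSum (n + m) 0 0 f
      = z ^ n * (z ^ m * contSum n 0 0 fun q => contSum m n q f) := by
        rw [contSum_add, zero_add, pow_add, mul_assoc]
    _ ≤ z ^ n * (C * Real.exp (η * m) * contSum n 0 0 f) := by gcongr
    _ = C * Real.exp (η * m) * (z ^ n * contSum n 0 0 f) := mul_left_comm _ _ _

lemma IsCritical.exists_contSum_late_le {z : ℝ} (h : IsCritical z) {V : ℕ → Set (ℤ × ℤ)}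
    (hV : ExpSmall z fun n => {q | q n ∈ V n}) {δ : ℝ} (hδ : 0 < δ) :
    ∃ C κ, 0 < C ∧ 0 < κ ∧ ∀ n L : ℕ, 1 ≤ n → n ≤ L → δ * L ≤ n →
      z ^ L * contSum L 0 0 ({q | q n ∈ V n}.indicator 1) ≤ C * Real.exp (-(κ * L)) := by
  obtain ⟨C, κ, hC, hκ, hbound⟩ := hV
  obtain ⟨θ, hθ_pos, hθ⟩ : ∃ θ, 0 < θ ∧ 2 * θ = κ * δ :=
    ⟨κ * δ / 2, by positivity, mul_div_cancel₀ _ two_ne_zero⟩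
  obtain ⟨C', hC', hcont⟩ := h.exists_contSum_add_le hθ_pos
  refine ⟨C' * C, θ, by positivity, hθ_pos, fun n L hn hnL hδn => ?_⟩
  obtain ⟨m, rfl⟩ := Nat.exists_eq_add_of_le hnL
  calc z ^ (n + m) * contSum (n + m) 0 0 ({q | q n ∈ V n}.indicator 1)
      ≤ C' * Real.exp (θ * m) * (z ^ n * contSum n 0 0 ({q | q n ∈ V n}.indicator 1)) :=
        hcont m n _ hn
    _ ≤ C' * Real.exp (θ * m) * (C * Real.exp (-(κ * n))) := by
        gcongr ?_ * ?_
        exact hbound n hn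
    _ = C' * C * Real.exp (θ * m + -(κ * n)) := by
        rw [Real.exp_add]
        ring
    _ ≤ C' * C * Real.exp (-(θ * (n + m : ℕ))) := by
        gcongr
        push_cast at hδn ⊢
        have : 0 ≤ θ * n := by positivity
        linear_combination κ * hδn + this + (n + m) * hθ

lemma indicator_exists_late_le (V : ℕ → Set (ℤ × ℤ)) {δ : ℝ} (hδ : 0 < δ) {L : ℕ} (hL : 1 ≤ L) :
    {q : ℕ → ℤ × ℤ | ∃ n ≤ L, δ * L ≤ n ∧ q n ∈ V n}.indicator (1 : (ℕ → ℤ × ℤ) → ℝ) ≤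
      ∑ n ∈ ({n ∈ Finset.Ioc 0 L | δ * (L : ℝ) ≤ (n : ℝ)} : Finset ℕ),
        {q | q n ∈ V n}.indicator 1 := by
  have hnonneg (n : ℕ) : 0 ≤ {q | q n ∈ V n}.indicator (1 : (ℕ → ℤ × ℤ) → ℝ) :=
    indicator_nonneg fun _ _ => zero_le_one
  refine indicator_le' (fun q ⟨n, hnL, hδn, hn⟩ => ?_) fun q _ =>
    Finset.sum_nonneg (fun n _ => hnonneg n) q
  have hmem : n ∈ ({n ∈ Finset.Ioc 0 L | δ * (L : ℝ) ≤ (n : ℝ)} : Finset ℕ) := by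
    have : 0 < (n : ℝ) := lt_of_lt_of_le (by positivity) hδn
    simp only [Finset.mem_filter, Finset.mem_Ioc]
    exact ⟨⟨by exact_mod_cast this, hnL⟩, hδn⟩
  have hq : q ∈ {q : ℕ → ℤ × ℤ | q n ∈ V n} := hn
  calc (1 : ℝ) = {q : ℕ → ℤ × ℤ | q n ∈ V n}.indicator 1 q := (indicator_of_mem hq 1).symm
    _ ≤ _ := Finset.single_le_sum (fun n _ => hnonneg n) hmem q

theorem IsCritical.expSmall_exists_late {z : ℝ} (h : IsCritical z) {V : ℕ → Set (ℤ × ℤ)}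
    (hV : ExpSmall z fun n => {q | q n ∈ V n}) {δ : ℝ} (hδ : 0 < δ) :
    ExpSmall z fun L => {q | ∃ n ≤ L, δ * L ≤ n ∧ q n ∈ V n} := by
  obtain ⟨C, κ, hC, hκ, hbound⟩ := h.exists_contSum_late_le hV hδ
  have hz := h.pos
  refine ⟨2 * C / κ, κ / 2, by positivity, by positivity, fun L hL => ?_⟩
  set S : Finset ℕ := {n ∈ Finset.Ioc 0 L | δ * (L : ℝ) ≤ (n : ℝ)}
  have hterm (n : ℕ) (hn : n ∈ S) :
      z ^ L * contSum L 0 0 ({q | q n ∈ V n}.indicator 1) ≤ C * Real.exp (-(κ * L)) := by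
    obtain ⟨hnL, hδn⟩ := Finset.mem_filter.1 hn
    exact hbound n L (Finset.mem_Ioc.1 hnL).1 (Finset.mem_Ioc.1 hnL).2 hδn
  have hcard : (S.card : ℝ) ≤ 2 * Real.exp (κ / 2 * L) / κ := by
    have : (S.card : ℝ) ≤ L := by
      exact_mod_cast (Finset.card_filter_le _ _).trans (Nat.card_Ioc 0 L).le
    rw [le_div_iff₀' hκ]
    linarith [Real.add_one_le_exp (κ / 2 * L), mul_le_mul_of_nonneg_left this hκ.le]
  calc z ^ L * contSum L 0 0 ({q | ∃ n ≤ L, δ * L ≤ n ∧ q n ∈ V n}.indicator 1)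
      ≤ z ^ L * contSum L 0 0 (∑ n ∈ S, {q | q n ∈ V n}.indicator 1) := by
        gcongr
        exact contSum_mono L 0 0 (indicator_exists_late_le V hδ hL)
    _ = ∑ n ∈ S, z ^ L * contSum L 0 0 ({q | q n ∈ V n}.indicator 1) := by
        rw [map_sum, Finset.mul_sum]
    _ ≤ S.card * (C * Real.exp (-(κ * L))) := by simpa using Finset.sum_le_sum hterm
    _ ≤ 2 * Real.exp (κ / 2 * L) / κ * (C * Real.exp (-(κ * L))) := by gcongr
    _ = 2 * C / κ * Real.exp (-(κ / 2 * L)) := by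
        rw [show -(κ / 2 * (L : ℝ)) = κ / 2 * L + -(κ * L) by ring, Real.exp_add]
        ring

/-- At all times in `[δ L, L]` the path `q` is near one of the two diagonals. -/
def NearDiagonalPath (c ε δ : ℝ) (L : ℕ) (q : ℕ → ℤ × ℤ) : Prop :=
  ∀ n ≤ L, δ * L ≤ n → NearDiagonal c ε n (q n)

lemma IsCritical.expSmall_not_nearDiagonalPath {z : ℝ} (h : IsCritical z) {ε δ : ℝ}
    (hε : 0 < ε) (hδ : 0 < δ) :
    ExpSmall z fun L => {q | ¬ NearDiagonalPath (speed z) ε δ L q} := by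
  refine (h.expSmall_exists_late (V := fun n => {v | ¬ NearDiagonal (speed z) ε n v})
    (h.expSmall_not_nearDiagonal hε) hδ).mono h.pos.le fun L _ q _ hq => ?_
  simpa [NearDiagonalPath] using hq

/-! ### Lower bound on the number of prudent paths -/

/-- The path `p` stopped at time `n` is on the top row of the sites it has visited, at distance at
most `d` from their rightmost column. -/
structure OnTopRow (n : ℕ) (p : ℕ → ℤ × ℤ) (d : ℕ) : Prop where
  top : ∀ v ∈ visited n p, v.2 ≤ (p n).2
  right : ∀ v ∈ visited n p, v.1 ≤ (p n).1 + d

/-- The path `p` stopped at time `n` sees no visited site to its left. -/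
def ClearLeft (n : ℕ) (p : ℕ → ℤ × ℤ) : Prop :=
  ∀ v ∈ visited n p, v.2 = (p n).2 → (p n).1 ≤ v.1

/-- The path `p` stopped at time `n` sees no visited site to its right. -/
def ClearRight (n : ℕ) (p : ℕ → ℤ × ℤ) : Prop :=
  ∀ v ∈ visited n p, v.2 = (p n).2 → v.1 ≤ (p n).1

section TopRow

variable {n : ℕ} {p : ℕ → ℤ × ℤ} {d : ℕ}

lemma ClearLeft.left_mem_nextSteps (h : ClearLeft n p) : (-1, 0) ∈ nextSteps n p := by
  refine mem_nextSteps.2 ⟨by decide, fun k hk hmem => ?_⟩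
  have := h _ hmem
  simp only [Prod.fst_add, Prod.snd_add, Prod.smul_mk, smul_eq_mul] at this
  lia

lemma ClearRight.right_mem_nextSteps (h : ClearRight n p) : (1, 0) ∈ nextSteps n p := by
  refine mem_nextSteps.2 ⟨by decide, fun k hk hmem => ?_⟩
  have := h _ hmem
  simp only [Prod.fst_add, Prod.snd_add, Prod.smul_mk, smul_eq_mul] at this
  lia

lemma ClearLeft.left (h : ClearLeft n p) : ClearLeft (n + 1) (extend n p (-1, 0)) := by
  simp only [ClearLeft, visited_extend, forall_mem_insert, extend_succ, Prod.fst_add, Prod.snd_add]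
  exact ⟨by lia, fun v hv => by have := h v hv; lia⟩

lemma ClearRight.right (h : ClearRight n p) : ClearRight (n + 1) (extend n p (1, 0)) := by
  simp only [ClearRight, visited_extend, forall_mem_insert, extend_succ, Prod.fst_add,
    Prod.snd_add]
  exact ⟨by lia, fun v hv => by have := h v hv; lia⟩

namespace OnTopRow

lemma up_mem_nextSteps (h : OnTopRow n p d) : (0, 1) ∈ nextSteps n p := by
  refine mem_nextSteps.2 ⟨by decide, fun k hk hmem => ?_⟩
  have := h.top _ hmem
  simp only [Prod.snd_add, Prod.smul_mk, smul_eq_mul] at this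
  lia

protected lemma extend (h : OnTopRow n p d) {s : ℤ × ℤ} {d' : ℕ} (hs : 0 ≤ s.2)
    (hd : (d : ℤ) ≤ s.1 + d') : OnTopRow (n + 1) (extend n p s) d' := by
  constructor <;>
    simp only [visited_extend, forall_mem_insert, extend_succ, Prod.fst_add, Prod.snd_add]
  · exact ⟨by lia, fun v hv => by have := h.top v hv; lia⟩
  · exact ⟨by lia, fun v hv => by have := h.right v hv; lia⟩

lemma clearLeft_up (h : OnTopRow n p d) : ClearLeft (n + 1) (extend n p (0, 1)) := by
  simp only [ClearLeft, visited_extend, forall_mem_insert, extend_succ, Prod.fst_add, Prod.snd_add]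
  exact ⟨by lia, fun v hv => by have := h.top v hv; lia⟩

lemma clearRight_up (h : OnTopRow n p d) : ClearRight (n + 1) (extend n p (0, 1)) := by
  simp only [ClearRight, visited_extend, forall_mem_insert, extend_succ, Prod.fst_add,
    Prod.snd_add]
  exact ⟨by lia, fun v hv => by have := h.top v hv; lia⟩

protected lemma swap (h : OnTopRow n p 0) : OnTopRow n (swap ∘ p) 0 := by
  constructor <;> rw [visited_comp] <;> rintro _ ⟨v, hv, rfl⟩
  · simpa using h.right v hv
  · simpa using h.top v hv

end OnTopRow

end TopRow

lemma mul_sum_le_pow_succ_mul_contSum {z : ℝ} (hz : 0 ≤ z) {m n : ℕ} {p : ℕ → ℤ × ℤ}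
    {f : (ℕ → ℤ × ℤ) → ℝ} (hf : 0 ≤ f) {S : Finset (ℤ × ℤ)} (hS : S ⊆ nextSteps n p) :
    z * ∑ s ∈ S, z ^ m * contSum m (n + 1) (extend n p s) f ≤
      z ^ (m + 1) * contSum (m + 1) n p f := by
  rw [← Finset.mul_sum, ← mul_assoc, ← pow_succ']
  have := sum_le_contSum_succ (m := m) hf hS
  gcongr

/-- A lower bound, uniform in the current position, for the generating function of the continuations
by `m` steps of a path that only moves up, left and right, or leaves the top row at its right end.
At the critical parameter the right-hand sides are harmonic for this walk. -/
structure LowerBound (z : ℝ) (m : ℕ) : Prop where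
  clear {n : ℕ} {p : ℕ → ℤ × ℤ} {d : ℕ} : OnTopRow n p d → ClearLeft n p → ClearRight n p →
    (2 * z) ^ d ≤ z ^ m * contSum m n p 1
  clearLeft {n : ℕ} {p : ℕ → ℤ × ℤ} {d : ℕ} : OnTopRow n p d → ClearLeft n p →
    (2 * z) ^ d * (1 - z) ≤ z ^ m * contSum m n p 1
  clearRight {n : ℕ} {p : ℕ → ℤ × ℤ} {d : ℕ} : OnTopRow n p d → ClearRight n p →
    (2 * z) ^ (d + 1) ≤ z ^ m * contSum m n p 1

namespace LowerBound

variable {z : ℝ} {m n : ℕ} {p : ℕ → ℤ × ℤ} {d : ℕ}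

lemma zero (hz : 0 ≤ z) (hz' : 2 * z ≤ 1) : LowerBound z 0 := by
  have hpow (d : ℕ) : (2 * z) ^ d ≤ 1 := pow_le_one₀ (by positivity) hz'
  constructor <;> intros <;> simp only [pow_zero, contSum_zero, Pi.one_apply, one_mul]
  · exact hpow _
  · exact mul_le_one₀ (hpow _) (by linarith) (by linarith)
  · exact hpow _

lemma le_up (h : LowerBound z m) (hp : OnTopRow n p d) :
    (2 * z) ^ d ≤ z ^ m * contSum m (n + 1) (extend n p (0, 1)) 1 :=
  h.clear (hp.extend zero_le_one (by simp)) hp.clearLeft_up hp.clearRight_up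

lemma le_left (h : LowerBound z m) (hp : OnTopRow n p d) (hl : ClearLeft n p) :
    (2 * z) ^ (d + 1) * (1 - z) ≤ z ^ m * contSum m (n + 1) (extend n p (-1, 0)) 1 :=
  h.clearLeft (hp.extend le_rfl (by simp)) hl.left

/-- At the right end of the top row the step to the right leads, after exchanging the coordinates,
to the top row again. -/
lemma le_right (h : LowerBound z m) (hp : OnTopRow n p d) (hr : ClearRight n p) :
    (2 * z) ^ d ≤ z ^ m * contSum m (n + 1) (extend n p (1, 0)) 1 := by
  rcases d with _ | d
  · have hup := h.le_up hp.swap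
    rw [show ((0, 1) : ℤ × ℤ) = swap (1, 0) from rfl, extend_comp, isSymm_swap.contSum_comp] at hup
    exact hup
  · exact h.clearRight (hp.extend le_rfl (by push_cast; lia)) hr.right

lemma succ (h : LowerBound z m) (hz : IsCritical z) : LowerBound z (m + 1) := by
  have hz₀ := hz.pos.le
  have hroot : z + z * (2 * z) * (1 - z) = 1 - z := by linear_combination -hz.root
  have hnonneg : (0 : (ℕ → ℤ × ℤ) → ℝ) ≤ 1 := zero_le_one
  refine ⟨fun {n p d} hp hl hr => ?_, fun {n p d} hp hl => ?_, fun {n p d} hp hr => ?_⟩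
  · have hS : {(0, 1), (-1, 0), (1, 0)} ⊆ nextSteps n p := by
      simp [Finset.insert_subset_iff, hp.up_mem_nextSteps, hl.left_mem_nextSteps,
        hr.right_mem_nextSteps]
    refine le_trans ?_ (mul_sum_le_pow_succ_mul_contSum hz₀ hnonneg hS)
    rw [Finset.sum_insert (by decide), Finset.sum_pair (by decide)]
    calc (2 * z) ^ d = z * ((2 * z) ^ d + ((2 * z) ^ (d + 1) * (1 - z) + (2 * z) ^ d)) := by
          linear_combination -(2 * z) ^ d * hroot
      _ ≤ _ := by
          gcongr _ * (?_ + (?_ + ?_))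
          exacts [h.le_up hp, h.le_left hp hl, h.le_right hp hr]
  · have hS : {(0, 1), (-1, 0)} ⊆ nextSteps n p := by
      simp [Finset.insert_subset_iff, hp.up_mem_nextSteps, hl.left_mem_nextSteps]
    refine le_trans ?_ (mul_sum_le_pow_succ_mul_contSum hz₀ hnonneg hS)
    rw [Finset.sum_pair (by decide)]
    calc (2 * z) ^ d * (1 - z) = z * ((2 * z) ^ d + (2 * z) ^ (d + 1) * (1 - z)) := by
          linear_combination -(2 * z) ^ d * hroot
      _ ≤ _ := by
          gcongr _ * (?_ + ?_)
          exacts [h.le_up hp, h.le_left hp hl]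
  · have hS : {(0, 1), (1, 0)} ⊆ nextSteps n p := by
      simp [Finset.insert_subset_iff, hp.up_mem_nextSteps, hr.right_mem_nextSteps]
    refine le_trans ?_ (mul_sum_le_pow_succ_mul_contSum hz₀ hnonneg hS)
    rw [Finset.sum_pair (by decide)]
    calc (2 * z) ^ (d + 1) = z * ((2 * z) ^ d + (2 * z) ^ d) := by ring
      _ ≤ _ := by
          gcongr
          exacts [h.le_up hp, h.le_right hp hr]

end LowerBound

lemma IsCritical.lowerBound {z : ℝ} (h : IsCritical z) (m : ℕ) : LowerBound z m := by
  induction m with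
  | zero => exact .zero h.pos.le (by linarith [h.hi])
  | succ m ih => exact ih.succ h

theorem IsCritical.one_le_pow_mul_contSum {z : ℝ} (h : IsCritical z) (m : ℕ) :
    1 ≤ z ^ m * contSum m 0 0 1 := by
  have hvisited : visited 0 0 = {0} := by simp [visited]
  have htop : OnTopRow 0 0 0 := by constructor <;> simp [hvisited]
  simpa using (h.lowerBound m).clear htop (by simp [ClearLeft, hvisited])
    (by simp [ClearRight, hvisited])

/-! ### From endpoints to rescaled paths -/

lemma abs_le_of_unit_steps {x : ℕ → ℤ} {L : ℕ} (h₀ : x 0 = 0)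
    (hx : ∀ n < L, |x (n + 1) - x n| ≤ 1) {n : ℕ} (hn : n ≤ L) : |x n| ≤ n := by
  induction n with
  | zero => simp [h₀]
  | succ n ih =>
    have h₁ := ih (by lia)
    have h₂ := hx n hn
    rw [abs_le] at *
    lia

lemma exists_sign_mul_pos_of_unit_steps {x : ℕ → ℤ} {n₀ L : ℕ}
    (hx : ∀ n < L, |x (n + 1) - x n| ≤ 1) (hne : ∀ n, n₀ ≤ n → n ≤ L → x n ≠ 0) :
    ∃ σ : ℤ, |σ| = 1 ∧ ∀ n, n₀ ≤ n → n ≤ L → 0 < σ * x n := by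
  refine ⟨if 0 < x n₀ then 1 else -1, by split_ifs <;> rfl, fun n hn => ?_⟩
  induction n, hn using Nat.le_induction with
  | base =>
    intro hL
    have := hne n₀ le_rfl hL
    split_ifs <;> lia
  | succ n hn ih =>
    intro hL
    have h₁ := ih (by lia)
    have h₂ := hx n hL
    have h₃ := hne (n + 1) (by lia) hL
    rw [abs_le] at h₂
    split_ifs at h₁ ⊢ <;> lia

lemma abs_sub_mul_eq_of_mul_pos {c x σ t : ℝ} (hσ : |σ| = 1) (hpos : 0 < σ * x) :
    |x - c * σ * t| = |(|x|) - c * t| := by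
  have hσ_sq : σ * σ = 1 := by rw [← abs_mul_abs_self, hσ, one_mul]
  have hx : |x| = σ * x := by rw [← abs_of_pos hpos, abs_mul, hσ, one_mul]
  calc |x - c * σ * t| = |σ * (x - c * σ * t)| := by rw [abs_mul, hσ, one_mul]
    _ = |(|x|) - c * t| := by
        congr 1
        linear_combination -hx - c * t * hσ_sq

lemma exists_abs_sub_mul_le {c ε δ η : ℝ} (hc : 0 < c) (hεc : ε < c) (hεη : ε ≤ η) (hδ : 0 < δ)
    (hδη : (1 + c) * δ ≤ η) {L : ℕ} (hL : 1 ≤ L) {x : ℕ → ℤ} (h₀ : x 0 = 0)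
    (hx : ∀ n < L, |x (n + 1) - x n| ≤ 1)
    (hnear : ∀ n ≤ L, δ * L ≤ n → |(|(x n : ℝ)|) - c * n| ≤ ε * n) :
    ∃ σ : ℤ, |σ| = 1 ∧ ∀ n ≤ L, |(x n : ℝ) - c * σ * n| ≤ η * L := by
  have hη : 0 < η := lt_of_lt_of_le (by positivity) hδη
  have hne (n : ℕ) (hn : ⌈δ * L⌉₊ ≤ n) (hnL : n ≤ L) : x n ≠ 0 := by
    intro hzero
    have hn := Nat.ceil_le.1 hn
    have hpos : 0 < (n : ℝ) := lt_of_lt_of_le (by positivity) hn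
    have := hnear n hnL hn
    rw [hzero, Int.cast_zero, abs_zero, zero_sub, abs_neg, abs_of_pos (by positivity)] at this
    exact this.not_gt (by gcongr)
  obtain ⟨σ, hσ, hpos⟩ := exists_sign_mul_pos_of_unit_steps hx hne
  have hσ' : |(σ : ℝ)| = 1 := by exact_mod_cast hσ
  refine ⟨σ, hσ, fun n hn => ?_⟩
  rcases le_or_gt (δ * L) n with hδn | hδn
  · have hpos_n : 0 < (σ : ℝ) * x n := by exact_mod_cast hpos n (Nat.ceil_le.2 hδn) hn
    calc |(x n : ℝ) - c * σ * n| = |(|(x n : ℝ)|) - c * n| := abs_sub_mul_eq_of_mul_pos hσ' hpos_n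
      _ ≤ ε * n := hnear n hn hδn
      _ ≤ η * L := by gcongr
  · have hle : |(x n : ℝ)| ≤ n := by exact_mod_cast abs_le_of_unit_steps h₀ hx hn
    calc |(x n : ℝ) - c * σ * n| ≤ |(x n : ℝ)| + |c * σ * n| := abs_sub _ _
      _ = |(x n : ℝ)| + c * n := by
          rw [abs_mul, abs_mul, hσ', mul_one, abs_of_pos hc, Nat.abs_cast]
      _ ≤ (1 + c) * (δ * L) := by
          rw [one_add_mul]
          gcongr
          exact hle.trans hδn.le
      _ ≤ η * L := by
          rw [← mul_assoc]
          gcongr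

lemma abs_interpolation_sub_mul_le {x : ℕ → ℝ} {v η : ℝ} {L : ℕ} (hL : 1 ≤ L)
    (hx : ∀ n ≤ L, |x n - v * n| ≤ η * L) {t : ℝ} (ht : t ∈ Icc (0 : ℝ) 1) :
    |(L : ℝ)⁻¹ * (x (min ⌊t * L⌋₊ L) + (t * L - ⌊t * L⌋₊) *
      (x (min (⌊t * L⌋₊ + 1) L) - x (min ⌊t * L⌋₊ L))) - v * t| ≤ η := by
  have hL_pos : 0 < (L : ℝ) := by exact_mod_cast hL
  have htL : t * L ≤ L := mul_le_of_le_one_left hL_pos.le ht.2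
  have hn : ⌊t * L⌋₊ ≤ L := Nat.floor_le_of_le htL
  have hfloor : ⌊t * L⌋₊ ≤ t * L := Nat.floor_le (mul_nonneg ht.1 hL_pos.le)
  have hfloor' := Nat.lt_floor_add_one (t * L)
  set n := ⌊t * L⌋₊
  set m := min (n + 1) L with hm
  set θ := t * L - n with hθ
  have hθ_nonneg : 0 ≤ θ := sub_nonneg.2 hfloor
  have hθ_le : 0 ≤ 1 - θ := by linarith
  -- At the final time `m = n`, but then there is nothing left to interpolate.
  have hθm : θ * m = θ * (n + 1) := by
    rcases hn.lt_or_eq with hlt | heq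
    · rw [hm, min_eq_left (Nat.succ_le_of_lt hlt), Nat.cast_add_one]
    · have : θ = 0 := le_antisymm (by rw [hθ, heq]; linarith) hθ_nonneg
      rw [this, zero_mul, zero_mul]
  rw [min_eq_left hn, ← mul_le_mul_iff_left₀ hL_pos, ← abs_of_pos hL_pos, ← abs_mul,
    abs_of_pos hL_pos]
  calc |((L : ℝ)⁻¹ * (x n + θ * (x m - x n)) - v * t) * L|
      = |(1 - θ) * (x n - v * n) + θ * (x m - v * m)| := by
        congr 1
        field_simp
        linear_combination v * hθ + v * hθm
    _ ≤ |(1 - θ) * (x n - v * n)| + |θ * (x m - v * m)| := abs_add_le _ _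
    _ = (1 - θ) * |x n - v * n| + θ * |x m - v * m| := by
        rw [abs_mul, abs_mul, abs_of_nonneg hθ_le, abs_of_nonneg hθ_nonneg]
    _ ≤ (1 - θ) * (η * L) + θ * (η * L) := by
        gcongr
        exacts [hx n hn, hx m (min_le_right _ _)]
    _ = η * L := by ring

lemma enorm2_le (v : ℝ × ℝ) : enorm2 v ≤ |v.1| + |v.2| := by
  refine Real.sqrt_le_iff.2 ⟨by positivity, ?_⟩
  rw [add_sq, sq_abs, sq_abs]
  have := mul_nonneg (abs_nonneg v.1) (abs_nonneg v.2)
  linarith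

lemma exists_evec_eq {σ τ : ℤ} (hσ : |σ| = 1) (hτ : |τ| = 1) :
    ∃ i ∈ Finset.Icc 1 4, evec i = ((σ : ℝ), (τ : ℝ)) := by
  rcases (abs_eq zero_le_one).1 hσ with rfl | rfl <;>
    rcases (abs_eq zero_le_one).1 hτ with rfl | rfl
  · exact ⟨1, by simp, by simp [evec]⟩
  · exact ⟨4, by simp, by simp [evec]⟩
  · exact ⟨2, by simp, by simp [evec]⟩
  · exact ⟨3, by simp, by simp [evec]⟩

lemma abs_le_one_of_mem_steps {s : ℤ × ℤ} (hs : s ∈ steps) : |s.1| ≤ 1 ∧ |s.2| ≤ 1 := by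
  simp only [steps, Finset.mem_insert, Finset.mem_singleton] at hs
  rcases hs with rfl | rfl | rfl | rfl <;> simp

theorem IsPrudent.exists_enorm2_rescaled_sub_le {c ε ε' δ : ℝ} (hc : 0 < c) (hε' : ε' < c)
    (hε'ε : ε' ≤ ε / 2) (hδ : 0 < δ) (hδε : (1 + c) * δ ≤ ε / 2) {L : ℕ} (hL : 1 ≤ L)
    {q : ℕ → ℤ × ℤ} (hq : IsPrudent L q) (hnear : NearDiagonalPath c ε' δ L q) :
    ∃ i ∈ Finset.Icc 1 4, ∀ t ∈ Icc (0 : ℝ) 1,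
      enorm2 (rescaled L (restrict L q) t - (c * t) • evec i) ≤ ε := by
  have hsteps (n : ℕ) (hn : n < L) :=
    abs_le_one_of_mem_steps (mem_nextSteps.1 (hq.sub_mem_nextSteps n hn)).1
  obtain ⟨σ, hσ, hx⟩ := exists_abs_sub_mul_le hc hε' hε'ε hδ hδε hL
    (x := fun n => (q n).1) (by simp [hq.zero]) (fun n hn => (hsteps n hn).1)
    fun n hn hδn => (hnear n hn hδn).1
  obtain ⟨τ, hτ, hy⟩ := exists_abs_sub_mul_le hc hε' hε'ε hδ hδε hL
    (x := fun n => (q n).2) (by simp [hq.zero]) (fun n hn => (hsteps n hn).2)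
    fun n hn hδn => (hnear n hn hδn).2
  obtain ⟨i, hi, hevec⟩ := exists_evec_eq hσ hτ
  refine ⟨i, hi, fun t ht => (enorm2_le _).trans ?_⟩
  rw [hevec, ← add_halves ε]
  refine add_le_add ?_ ?_
  · have := abs_interpolation_sub_mul_le (x := fun n => ((q n).1 : ℝ)) hL hx ht
    rw [mul_right_comm] at this
    exact this
  · have := abs_interpolation_sub_mul_le (x := fun n => ((q n).2 : ℝ)) hL hy ht
    rw [mul_right_comm] at this
    exact this

/-! ### Concentration -/

theorem IsCritical.tendsto_probUnif {z : ℝ} (h : IsCritical z)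
    {A : ∀ L : ℕ, Set (Fin (L + 1) → ℤ × ℤ)} (hA : ExpSmall z fun L => (restrict L ⁻¹' A L)ᶜ) :
    Tendsto (fun L => probUnif L (A L)) atTop (nhds 1) := by
  obtain ⟨C, κ, -, hκ, hbound⟩ := hA
  have hz := h.pos
  have hlim : Tendsto (fun L : ℕ => 1 - C * Real.exp (-(κ * L))) atTop (nhds 1) := by
    have hexp : Tendsto (fun L : ℕ => Real.exp (-(κ * L))) atTop (nhds 0) :=
      Real.tendsto_exp_neg_atTop_nhds_zero.comp
        (tendsto_natCast_atTop_atTop.const_mul_atTop hκ)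
    simpa using (hexp.const_mul C).const_sub 1
  have hpos (L : ℕ) : 0 < contSum L 0 0 1 :=
    pos_of_mul_pos_right (one_pos.trans_le (h.one_le_pow_mul_contSum L)) (by positivity)
  refine tendsto_of_tendsto_of_tendsto_of_le_of_le' hlim tendsto_const_nhds ?_ ?_
  · filter_upwards [eventually_ge_atTop 1] with L hL
    rw [probUnif_eq_contSum_div, le_div_iff₀ (hpos L)]
    set S := restrict L ⁻¹' A L
    have hsplit : contSum L 0 0 (S.indicator 1) + contSum L 0 0 (Sᶜ.indicator 1) =
        contSum L 0 0 1 := by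
      rw [← map_add, indicator_self_add_compl]
    have hcompl : contSum L 0 0 (Sᶜ.indicator 1) ≤ C * Real.exp (-(κ * L)) * contSum L 0 0 1 :=
      calc contSum L 0 0 (Sᶜ.indicator 1)
          ≤ z ^ L * contSum L 0 0 1 * contSum L 0 0 (Sᶜ.indicator 1) :=
            le_mul_of_one_le_left (contSum_nonneg _ _ _ (indicator_nonneg fun _ _ => zero_le_one))
              (h.one_le_pow_mul_contSum L)
        _ = z ^ L * contSum L 0 0 (Sᶜ.indicator 1) * contSum L 0 0 1 := mul_right_comm _ _ _
        _ ≤ C * Real.exp (-(κ * L)) * contSum L 0 0 1 :=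
            mul_le_mul_of_nonneg_right (hbound L hL) (hpos L).le
    linarith
  · refine Eventually.of_forall fun L => ?_
    rw [probUnif_eq_contSum_div, div_le_one (hpos L)]
    exact contSum_mono L 0 0 (indicator_le_self' fun _ _ => zero_le_one)

end PrudentWalk

/-- **Concentration along the diagonals.** There is a constant `c > 0` such that for every
`ε > 0`, the `P_{unif,L}`-probability that the rescaled prudent path stays within distance
`ε` of the segment `t ↦ c t e⃗ᵢ` for some diagonal direction `i ∈ {1,2,3,4}` tends to `1`. -/
theorem uniform_prudent_concentration :
    ∃ c : ℝ, 0 < c ∧ ∀ ε : ℝ, 0 < ε →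
      Tendsto (fun L : ℕ =>
          probUnif L {π | ∃ i ∈ Finset.Icc 1 4,
            ∀ t ∈ Set.Icc (0 : ℝ) 1, enorm2 (rescaled L π t - (c * t) • evec i) ≤ ε})
        atTop (nhds 1) := by
  obtain ⟨z, hz⟩ := PrudentWalk.exists_isCritical
  set c := PrudentWalk.speed z
  have hc : 0 < c := hz.speed_pos
  refine ⟨c, hc, fun ε hε => hz.tendsto_probUnif ?_⟩
  obtain ⟨ε', hε', hε'c, hε'ε⟩ : ∃ ε', 0 < ε' ∧ ε' < c ∧ ε' ≤ ε / 2 :=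
    ⟨min (c / 2) (ε / 2), by positivity, min_lt_of_left_lt (half_lt_self hc), min_le_right _ _⟩
  obtain ⟨δ, hδ, hδε⟩ : ∃ δ, 0 < δ ∧ (1 + c) * δ ≤ ε / 2 :=
    ⟨ε / 2 / (1 + c), by positivity, (mul_div_cancel₀ _ (by positivity)).le⟩
  refine (hz.expSmall_not_nearDiagonalPath hε' hδ).mono hz.pos.le fun L hL q hq => mt ?_
  intro hnear
  exact hq.exists_enorm2_rescaled_sub_le hc hε'c hε'ε hδ hδε hL hnear
end

section
/- For each i ∈ {1,2,3,4}, lim_{L→∞} P_{unif,L}(σ_L = i) = 1/4; that is, under the uniform law on prudent paths of length L, the law of the quadrant index σ_L converges to the uniform distribution on {1,2,3,4}. -/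
open Filter Set

/-- The quadrant index `σ_L(π)` of the endpoint of a prudent path: `i` if the endpoint lies
in the open `i`-th quadrant, `0` if it lies on one of the coordinate axes. -/
def sigmaIdx (L : ℕ) (π : Fin (L + 1) → ℤ × ℤ) : ℕ :=
  let p := π (Fin.last L)
  if 0 < p.1 ∧ 0 < p.2 then 1
  else if p.1 < 0 ∧ 0 < p.2 then 2
  else if p.1 < 0 ∧ p.2 < 0 then 3
  else if 0 < p.1 ∧ p.2 < 0 then 4
  else 0

/-!
A walk is encoded as the word of its steps, from the last one to the first one. From a corner of its
bounding box a prudent walk has at least `4/5 * 2.46 ^ m` prudent extensions by `m` steps, whereas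
only `O(2.43 ^ m)` words of length `m` without reversals turn off a given direction a bounded number
of times: walks that avoid a direction grow at rate `1 + √2`; the chance to pass from one side of
the box to another gives the extensions of a corner a larger rate. So it is exponentially unlikely
that a prudent walk was at a corner long ago and has turned off some direction only rarely since.

A walk never steps in the direction opposite to the side of its box that it runs along, except at
corners. So a walk ending on an axis has either avoided a direction for a long time since a corner,
or was recently at a corner near the axis. In the latter case one looks at the last visit to the
opposite sides of the box: since then every turn off their direction has widened a box that is still
narrow, so there were few turns. The axes are therefore negligible, and the symmetries of the
lattice make the four open quadrants equally likely.
-/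

namespace PrudentWalk

section Words

lemma exists_longest_suffix {α : Type*} (Q : List α → Prop) (h : Q []) (w : List α) :
    ∃ v u, w = v ++ u ∧ Q u ∧ ∀ t, t ≠ [] → t <:+ v → ¬ Q (t ++ u) := by
  induction w with
  | nil => exact ⟨[], [], rfl, h, fun t ht ht' => absurd (List.suffix_nil.1 ht') ht⟩
  | cons a w ih =>
    by_cases hQ : Q (a :: w)
    · exact ⟨[], a :: w, rfl, hQ, fun t ht ht' => absurd (List.suffix_nil.1 ht') ht⟩
    · obtain ⟨v, u, rfl, hu, hv⟩ := ih
      refine ⟨a :: v, u, rfl, hu, fun t ht htv => ?_⟩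
      rcases List.suffix_cons_iff.1 htv with rfl | htv
      · exact hQ
      · exact hv t ht htv

variable {α ι : Type*} [Fintype α]

/-- The words of length `n` over the alphabet `α`. -/
noncomputable def words (α : Type*) [Fintype α] (n : ℕ) : Finset (List α) :=
  (List.finite_length_eq α n).toFinset

lemma mem_words {n : ℕ} {w : List α} : w ∈ words α n ↔ w.length = n := by
  simp [words]

lemma sum_words_zero {M : Type*} [AddCommMonoid M] (f : List α → M) :
    ∑ w ∈ words α 0, f w = f [] := by
  have : words α 0 = {[]} := by ext; simp [mem_words]
  rw [this, Finset.sum_singleton]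

lemma sum_words_one {M : Type*} [AddCommMonoid M] (f : List α → M) :
    ∑ w ∈ words α 1, f w = ∑ a, f [a] := by
  have : words α 1 = Finset.univ.map ⟨fun a => [a], List.singleton_injective⟩ := by
    ext w
    simp [mem_words, List.length_eq_one_iff, eq_comm]
  rw [this, Finset.sum_map]
  rfl

lemma sum_words_add {M : Type*} [AddCommMonoid M] (m n : ℕ) (f : List α → M) :
    ∑ w ∈ words α (m + n), f w = ∑ u ∈ words α n, ∑ v ∈ words α m, f (v ++ u) := by
  rw [← Finset.sum_product']
  symm
  refine Finset.sum_nbij' (fun x => x.2 ++ x.1) (fun w => (w.drop m, w.take m)) ?_ ?_ ?_ ?_ ?_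
  · simp +contextual [mem_words]
  · simp +contextual [mem_words]
  · rintro ⟨u, v⟩ h
    obtain ⟨-, rfl⟩ : u.length = n ∧ v.length = m := by simpa [mem_words] using h
    simp
  · simp
  · simp

lemma card_words (n : ℕ) : (words α n).card = Fintype.card α ^ n := by
  induction n with
  | zero => rw [Finset.card_eq_sum_ones, sum_words_zero, pow_zero]
  | succ n ih =>
    rw [Finset.card_eq_sum_ones, sum_words_add, sum_words_one]
    simp [ih, pow_succ']

open Classical in
/-- The number of words of length `n` with the property `A`. -/
noncomputable def wordCount (n : ℕ) (A : List α → Prop) : ℕ :=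
  ((words α n).filter A).card

lemma wordCount_mono {n : ℕ} {A B : List α → Prop} (h : ∀ w, w.length = n → A w → B w) :
    wordCount n A ≤ wordCount n B := by
  classical
  refine Finset.card_le_card fun w => ?_
  simp only [Finset.mem_filter, mem_words]
  exact fun hw => ⟨hw.1, h w hw.1 hw.2⟩

lemma wordCount_congr {n : ℕ} {A B : List α → Prop} (h : ∀ w, w.length = n → (A w ↔ B w)) :
    wordCount n A = wordCount n B :=
  le_antisymm (wordCount_mono fun w hw => (h w hw).1) (wordCount_mono fun w hw => (h w hw).2)

open Classical in
lemma wordCount_eq_sum (n : ℕ) (A : List α → Prop) :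
    wordCount n A = ∑ w ∈ words α n, if A w then 1 else 0 :=
  Finset.card_filter _ _

lemma wordCount_eq_zero {n : ℕ} {A : List α → Prop} (h : ∀ w, w.length = n → ¬ A w) :
    wordCount n A = 0 := by
  classical
  rw [wordCount, Finset.card_eq_zero, Finset.filter_eq_empty_iff]
  exact fun w hw => h w (mem_words.1 hw)

lemma wordCount_zero {A : List α → Prop} (h : A []) : wordCount 0 A = 1 := by
  classical
  rw [wordCount_eq_sum, sum_words_zero, if_pos h]

lemma wordCount_add (m n : ℕ) (A : List α → Prop) :
    wordCount (m + n) A = ∑ u ∈ words α n, wordCount m (fun v => A (v ++ u)) := by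
  classical
  simp only [wordCount_eq_sum, sum_words_add]

lemma wordCount_drop (m n : ℕ) (A : List α → Prop) :
    wordCount (m + n) (fun w => A (w.drop m)) = Fintype.card α ^ m * wordCount n A := by
  classical
  have drop_append (u v : List α) (hv : v ∈ words α m) : (v ++ u).drop m = u := by
    rw [← mem_words.1 hv, List.drop_left]
  rw [wordCount_eq_sum, sum_words_add, wordCount_eq_sum, Finset.mul_sum]
  refine Finset.sum_congr rfl fun u _ => ?_
  rw [Finset.sum_congr rfl fun v hv => by rw [drop_append u v hv], Finset.sum_const, card_words,
    smul_eq_mul]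

lemma wordCount_or_le (n : ℕ) (A B : List α → Prop) :
    wordCount n (fun w => A w ∨ B w) ≤ wordCount n A + wordCount n B := by
  classical
  refine (Finset.card_le_card fun w => ?_).trans (Finset.card_union_le _ _)
  simp only [Finset.mem_union, Finset.mem_filter]
  tauto

lemma wordCount_exists_le (s : Finset ι) (n : ℕ) (A : ι → List α → Prop) :
    wordCount n (fun w => ∃ i ∈ s, A i w) ≤ ∑ i ∈ s, wordCount n (A i) := by
  classical
  refine (Finset.card_le_card fun w => ?_).trans
    (Finset.card_biUnion_le (s := s) (t := fun i => (words α n).filter (A i)))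
  simp only [Finset.mem_filter, Finset.mem_biUnion]
  rintro ⟨hw, i, hi, hA⟩
  exact ⟨i, hi, hw, hA⟩

lemma wordCount_map {g : α → α} (hg : Function.Injective g) (n : ℕ) (A : List α → Prop) :
    wordCount n (fun w => A (w.map g)) = wordCount n A := by
  classical
  have hsurj := Finite.surjective_of_injective hg
  refine Finset.card_bij (fun w _ => w.map g) ?_ (fun u _ v _ h => hg.list_map h) ?_
  · simp [mem_words]
  · intro w hw
    obtain ⟨v, rfl⟩ := hsurj.list_map w
    exact ⟨v, by simpa [mem_words] using hw, rfl⟩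

end Words

/-- The four unit steps of the square lattice. -/
inductive Dir
  | east | north | west | south
  deriving DecidableEq

namespace Dir

instance : Fintype Dir := ⟨{east, north, west, south}, fun d => by cases d <;> decide⟩

/-- The opposite direction. -/
def opp : Dir → Dir
  | east => west
  | north => south
  | west => east
  | south => north

/-- Orthogonality of two directions. -/
abbrev Perp (d e : Dir) : Prop := e ≠ d ∧ e ≠ d.opp

@[simp] lemma opp_opp (d : Dir) : d.opp.opp = d := by cases d <;> rfl

lemma opp_ne (d : Dir) : d.opp ≠ d := by cases d <;> decide

lemma Perp.symm {d e : Dir} (h : Perp d e) : Perp e d := by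
  revert d e; decide

lemma Perp.opp_right {d e : Dir} (h : Perp d e) : Perp d e.opp := by
  revert d e; decide

lemma Perp.opp_left {d e : Dir} (h : Perp d e) : Perp d.opp e := by
  revert d e; decide

lemma exists_perp (d : Dir) : ∃ e, Perp d e := by
  revert d; decide

lemma Perp.eq_or_eq_opp {d e a : Dir} (h : Perp d e) (ha : Perp d a) : a = e ∨ a = e.opp := by
  revert d e a; decide

lemma Perp.univ_eq {d e : Dir} (h : Perp d e) : Finset.univ = {d, d.opp, e, e.opp} := by
  revert d e; decide

lemma Perp.sum_eq {M : Type*} [AddCommMonoid M] {d e : Dir} (h : Perp d e) (f : Dir → M) :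
    ∑ a, f a = f d + f d.opp + f e + f e.opp := by
  rw [h.univ_eq, Finset.sum_insert, Finset.sum_insert, Finset.sum_insert, Finset.sum_singleton,
    ← add_assoc, ← add_assoc]
  all_goals revert d e; decide

/-- The lattice symmetry that sends `east` to `d` and `north` to `e`, when these are
orthogonal. -/
def frame (d e : Dir) : Dir → Dir
  | east => d
  | north => e
  | west => d.opp
  | south => e.opp

lemma frame_opp (d e a : Dir) : frame d e a.opp = (frame d e a).opp := by
  cases a <;> first | rfl | exact (opp_opp _).symm

lemma Perp.frame_injective {d e : Dir} (h : Perp d e) : Function.Injective (frame d e) := by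
  revert d e; decide

end Dir

open Dir

section Geometry

variable {d e : Dir} {u v w : List Dir}

/-- The displacement in direction `d` of the walk with steps `w`. Words list the steps of a walk
from the most recent one to the first one, so that the earlier stages of `w` are its suffixes. -/
def coord (d : Dir) (w : List Dir) : ℤ := w.count d - w.count d.opp

@[simp] lemma coord_nil (d : Dir) : coord d [] = 0 := by simp [coord]

@[simp] lemma coord_opp (d : Dir) (w : List Dir) : coord d.opp w = -coord d w := by
  simp [coord]

lemma coord_append (d : Dir) (v u : List Dir) : coord d (v ++ u) = coord d v + coord d u := by
  simp only [coord, List.count_append]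
  omega

@[simp] lemma coord_cons_self (d : Dir) (w : List Dir) : coord d (d :: w) = coord d w + 1 := by
  simp only [coord, List.count_cons_self, List.count_cons_of_ne d.opp_ne.symm]
  omega

@[simp] lemma coord_cons_opp (d : Dir) (w : List Dir) :
    coord d (d.opp :: w) = coord d w - 1 := by
  have := coord_cons_self d.opp w
  rw [coord_opp, coord_opp] at this
  omega

lemma Dir.Perp.coord_cons (h : Perp d e) (w : List Dir) : coord d (e :: w) = coord d w := by
  simp only [coord, List.count_cons_of_ne h.1, List.count_cons_of_ne h.2]

lemma abs_coord_le (d : Dir) (w : List Dir) : |coord d w| ≤ w.length := by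
  have := List.count_le_length (a := d) (l := w)
  have := List.count_le_length (a := d.opp) (l := w)
  rw [coord, abs_le]
  omega

lemma coord_replicate_self (d : Dir) (k : ℕ) : coord d (List.replicate k d) = k := by
  simp [coord, List.count_replicate, d.opp_ne.symm]

lemma Dir.Perp.coord_replicate (h : Perp d e) (k : ℕ) : coord d (List.replicate k e) = 0 := by
  simp [coord, List.count_replicate, h.1, h.2]

/-- The endpoint of the walk with steps `w`. -/
def pos (w : List Dir) : ℤ × ℤ := (coord east w, coord north w)

lemma pos_append (v u : List Dir) : pos (v ++ u) = pos v + pos u := by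
  simp [pos, coord_append]

lemma Dir.Perp.pos_eq_iff (h : Perp d e) :
    pos u = pos v ↔ coord d u = coord d v ∧ coord e u = coord e v := by
  have west_eq (w) : coord west w = -coord east w := coord_opp east w
  have south_eq (w) : coord south w = -coord north w := coord_opp north w
  cases d <;> cases e <;> first
    | exact absurd h (by decide)
    | simp only [pos, Prod.mk.injEq, west_eq, south_eq, neg_inj, and_comm]

/-- The walk `w` meets none of the sites it has visited if it goes on straight in direction
`d`. -/
def Free (d : Dir) (w : List Dir) : Prop :=
  ∀ k, 1 ≤ k → ∀ u, u <:+ w → pos u ≠ pos (List.replicate k d ++ w)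

lemma Dir.Perp.free_iff (h : Perp d e) :
    Free d w ↔ ∀ u, u <:+ w → coord e u = coord e w → coord d u ≤ coord d w := by
  simp only [Free, Ne, h.pos_eq_iff, coord_append, coord_replicate_self, h.symm.coord_replicate]
  constructor
  · intro hf u hu he
    by_contra! hlt
    exact hf (coord d u - coord d w).toNat (by omega) u hu ⟨by omega, by omega⟩
  · rintro hf k hk u hu ⟨hd, he⟩
    have := hf u hu (by omega)
    omega

lemma Free.cons_self (h : Free d w) : Free d (d :: w) := by
  obtain ⟨e, he⟩ := exists_perp d
  rw [he.free_iff] at h ⊢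
  simp only [List.suffix_cons_iff, forall_eq_or_imp, le_refl, implies_true, true_and,
    coord_cons_self, he.symm.coord_cons]
  intro u hu heq
  have := h u hu heq
  omega

/-- The prudent walks: no step is taken in the direction of a visited site. -/
def Prudent (w : List Dir) : Prop := ∀ d u, d :: u <:+ w → Free d u

lemma prudent_nil : Prudent [] := by simp [Prudent]

lemma prudent_cons : Prudent (d :: w) ↔ Free d w ∧ Prudent w := by
  simp only [Prudent, List.suffix_cons_iff (a := d), List.cons.injEq, or_imp, forall_and]
  exact and_congr_left' ⟨fun h => h d w ⟨rfl, rfl⟩, by rintro h _ _ ⟨rfl, rfl⟩; exact h⟩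

lemma Prudent.of_suffix (h : Prudent w) (hu : u <:+ w) : Prudent u :=
  fun d v hv => h d v (hv.trans hu)

lemma Prudent.eq_of_pos_eq (h : Prudent w) (hu : u <:+ w) (hv : v <:+ w)
    (huv : pos u = pos v) : u = v := by
  induction w with
  | nil => rw [List.suffix_nil.1 hu, List.suffix_nil.1 hv]
  | cons d w ih =>
    obtain ⟨hf, hw⟩ := prudent_cons.1 h
    rcases List.suffix_cons_iff.1 hu with rfl | hu <;>
      rcases List.suffix_cons_iff.1 hv with rfl | hv
    · rfl
    · exact absurd huv.symm (hf 1 le_rfl v hv)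
    · exact absurd huv (hf 1 le_rfl u hu)
    · exact ih hw hu hv

/-- The furthest displacement in direction `d` that the walk `w` has attained. -/
def reach (d : Dir) : List Dir → ℤ
  | [] => 0
  | e :: w => max (reach d w) (coord d (e :: w))

lemma coord_le_reach_of_suffix (d : Dir) (h : u <:+ w) : coord d u ≤ reach d w := by
  induction w with
  | nil => simp [List.suffix_nil.1 h, reach]
  | cons e w ih =>
    rcases List.suffix_cons_iff.1 h with rfl | h
    · exact le_max_right _ _
    · exact (ih h).trans (le_max_left _ _)

lemma coord_le_reach (d : Dir) (w : List Dir) : coord d w ≤ reach d w :=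
  coord_le_reach_of_suffix d List.suffix_rfl

lemma exists_coord_eq_reach (d : Dir) (w : List Dir) : ∃ u, u <:+ w ∧ coord d u = reach d w := by
  induction w with
  | nil => exact ⟨[], List.suffix_rfl, by simp [reach]⟩
  | cons e w ih =>
    obtain ⟨u, hu, hr⟩ := ih
    rcases le_total (reach d w) (coord d (e :: w)) with h | h
    · exact ⟨_, List.suffix_rfl, (max_eq_right h).symm⟩
    · exact ⟨u, hu.trans (List.suffix_cons _ _), hr.trans (max_eq_left h).symm⟩

lemma reach_nonneg (d : Dir) (w : List Dir) : 0 ≤ reach d w := by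
  simpa using coord_le_reach_of_suffix d (List.nil_suffix (l := w))

lemma reach_le_reach_append (d : Dir) (v u : List Dir) : reach d u ≤ reach d (v ++ u) := by
  obtain ⟨t, ht, h⟩ := exists_coord_eq_reach d u
  exact h ▸ coord_le_reach_of_suffix d (List.suffix_append_of_suffix ht)

lemma reach_append_le (d : Dir) (v u : List Dir) : reach d (v ++ u) ≤ reach d u + v.length := by
  induction v with
  | nil => simp
  | cons e v ih =>
    have hle := abs_coord_le d (e :: v)
    have hu := coord_le_reach d u
    rw [List.cons_append, reach, ← List.cons_append, coord_append]
    rw [abs_le] at hle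
    push_cast [List.length_cons] at *
    omega

/-- The endpoint of `w` lies on the side of its bounding box that faces direction `d`. -/
def On (d : Dir) (w : List Dir) : Prop := coord d w = reach d w

lemma on_nil (d : Dir) : On d [] := by simp [On, reach]

lemma On.coord_le (h : On d w) (hu : u <:+ w) : coord d u ≤ coord d w :=
  (coord_le_reach_of_suffix d hu).trans_eq h.symm

lemma On.free (h : On d w) : Free d w := by
  obtain ⟨e, he⟩ := exists_perp d
  exact he.free_iff.2 fun u hu _ => h.coord_le hu

lemma On.cons (h : On d w) (he : e ≠ d.opp) : On d (e :: w) := by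
  have hle : coord d w ≤ coord d (e :: w) := by
    by_cases hd : e = d
    · simp [hd]
    · rw [Perp.coord_cons ⟨hd, he⟩]
  rw [On, reach, ← h, max_eq_right hle]

/-- The endpoint of `w` is a corner of its bounding box. -/
def Corner (w : List Dir) : Prop := ∃ d e, Perp d e ∧ On d w ∧ On e w

lemma corner_nil : Corner [] := ⟨east, north, by decide, on_nil _, on_nil _⟩

lemma exists_coord_eq (h : u <:+ v) {y : ℤ} (hu : coord d u ≤ y) (hv : y ≤ coord d v) :
    ∃ t, t <:+ v ∧ coord d t = y := by
  induction v with
  | nil => exact ⟨[], List.suffix_rfl, by rw [List.suffix_nil.1 h] at hu; omega⟩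
  | cons a v ih =>
    rcases eq_or_lt_of_le hv with rfl | hlt
    · exact ⟨_, List.suffix_rfl, rfl⟩
    rcases List.suffix_cons_iff.1 h with rfl | h
    · omega
    have hstep : coord d (a :: v) ≤ coord d v + 1 := by
      by_cases had : a = d
      · simp [had]
      by_cases hao : a = d.opp
      · rw [hao, coord_cons_opp]; omega
      · rw [Perp.coord_cons ⟨had, hao⟩]; omega
    obtain ⟨t, ht, hy⟩ := ih h (by omega)
    exact ⟨t, ht.trans (List.suffix_cons _ _), hy⟩

lemma exists_coord_eq_between {p q : List Dir} (hp : p <:+ w) (hq : q <:+ w) {y : ℤ}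
    (hpy : coord d p ≤ y) (hyq : y ≤ coord d q) :
    ∃ t, (t <:+ p ∨ t <:+ q) ∧ coord d t = y := by
  rcases List.suffix_or_suffix_of_suffix hp hq with h | h
  · obtain ⟨t, ht, hy⟩ := exists_coord_eq h hpy hyq
    exact ⟨t, .inr ht, hy⟩
  · obtain ⟨t, ht, hy⟩ := exists_coord_eq (d := d.opp) (y := -y) h (by simpa) (by simpa)
    exact ⟨t, .inl ht, by simpa using hy⟩

-- If the walk were strictly between its extremes in direction `e`, it would have been in the
-- current row before; that site lies between the current one and itself in direction `d`.
lemma Prudent.corner_of_free_of_on_opp (hw : Prudent w) (hf : Free d w) (ho : On d.opp w) :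
    Corner w := by
  obtain ⟨e, he⟩ := exists_perp d
  by_contra hc
  have not_on {a : Dir} (ha : Perp d a) : coord a w < reach a w :=
    lt_of_le_of_ne (coord_le_reach a w) fun h => hc ⟨d.opp, a, ha.opp_left, ho, h⟩
  obtain ⟨p, hp, hpr⟩ := exists_coord_eq_reach e w
  obtain ⟨q, hq, hqr⟩ := exists_coord_eq_reach e.opp w
  have hplt := not_on he
  have hqlt := not_on he.opp_right
  rw [← hpr] at hplt
  rw [← hqr, coord_opp, coord_opp, neg_lt_neg_iff] at hqlt
  obtain ⟨t, ht, hrow⟩ := exists_coord_eq_between hq hp hqlt.le hplt.le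
  have htw : t <:+ w := ht.elim (·.trans hq) (·.trans hp)
  have hle : coord d t ≤ coord d w := he.free_iff.1 hf t htw hrow
  have hge : coord d w ≤ coord d t := by simpa using ho.coord_le htw
  have htw' : t = w :=
    hw.eq_of_pos_eq htw List.suffix_rfl (he.pos_eq_iff.2 ⟨le_antisymm hle hge, hrow⟩)
  subst htw'
  rcases ht with h | h
  · exact hqlt.ne (by rw [hq.eq_of_length_le h.length_le])
  · exact hplt.ne' (by rw [hp.eq_of_length_le h.length_le])

lemma Prudent.exists_on (hw : Prudent w) : ∃ d, On d w := by
  induction w with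
  | nil => exact ⟨east, on_nil _⟩
  | cons a w ih =>
    obtain ⟨hf, hw'⟩ := prudent_cons.1 hw
    obtain ⟨d, hd⟩ := ih hw'
    by_cases ha : a = d.opp
    · subst ha
      obtain ⟨b, c, hbc, hb, hc⟩ := hw'.corner_of_free_of_on_opp hf (by rwa [opp_opp])
      by_cases hab : d.opp = b.opp
      · exact ⟨c, hc.cons fun h => hbc.1 (by rw [← opp_opp c, ← h, hab, opp_opp])⟩
      · exact ⟨b, hb.cons hab⟩
    · exact ⟨d, hd.cons ha⟩

end Geometry

section Turns

variable {d e f X : Dir} {u v w : List Dir}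

lemma Prudent.ne_opp_head {a b : Dir} (h : Prudent (a :: b :: w)) : a ≠ b.opp := by
  rintro rfl
  obtain ⟨e, he⟩ := exists_perp b
  refine (prudent_cons.1 h).1 1 le_rfl w (List.suffix_cons _ _) (he.pos_eq_iff.2 ?_)
  simp [he.symm.coord_cons, he.symm.opp_right.coord_cons]

lemma not_on_opp_cons (d : Dir) (w : List Dir) : ¬ On d.opp (d :: w) := by
  intro h
  have := h.coord_le (List.suffix_cons d w)
  simp only [coord_opp, coord_cons_self] at this
  omega

lemma Corner.on_or_on_opp (h : Corner w) (d : Dir) : On d w ∨ On d.opp w := by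
  obtain ⟨a, b, hab, ha, hb⟩ := h
  have hd : d ∈ ({a, a.opp, b, b.opp} : Finset Dir) := hab.univ_eq ▸ Finset.mem_univ d
  simp only [Finset.mem_insert, Finset.mem_singleton] at hd
  rcases hd with rfl | rfl | rfl | rfl <;> simp [*]

lemma Prudent.corner_of_last_on (hw : Prudent (v ++ u)) (hv : v ≠ []) (hu : On d u)
    (hlast : ∀ t, t ≠ [] → t <:+ v → ¬ On d (t ++ u)) : Corner u := by
  obtain ⟨v, a, rfl⟩ := List.eq_nil_or_concat' v |>.resolve_left hv
  have hsuff : a :: u <:+ v ++ [a] ++ u := by simp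
  have ha : a = d.opp := by
    by_contra h
    exact hlast [a] (by simp) (by simp) (hu.cons h)
  subst ha
  obtain ⟨hf, hu'⟩ := prudent_cons.1 (hw.of_suffix hsuff)
  exact hu'.corner_of_free_of_on_opp hf (by rwa [opp_opp])

/-- The extent of the bounding box of `w` along the axis of `d`. -/
def span (d : Dir) (w : List Dir) : ℤ := reach d w + reach d.opp w

lemma span_opp (d : Dir) (w : List Dir) : span d.opp w = span d w := by
  rw [span, span, opp_opp, add_comm]

lemma span_nonneg (d : Dir) (w : List Dir) : 0 ≤ span d w :=
  add_nonneg (reach_nonneg _ _) (reach_nonneg _ _)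

lemma span_le_span_append (d : Dir) (v u : List Dir) : span d u ≤ span d (v ++ u) :=
  add_le_add (reach_le_reach_append _ _ _) (reach_le_reach_append _ _ _)

lemma On.span_lt_span_cons (h : On d w) : span d w < span d (d :: w) := by
  have hd := coord_le_reach d (d :: w)
  have hopp := reach_le_reach_append d.opp [d] w
  rw [coord_cons_self, h] at hd
  simp only [span, List.singleton_append] at *
  omega

lemma On.span_append_le (hu : On d.opp u) (hw : On d (v ++ u)) :
    span d (v ++ u) ≤ 2 * v.length := by
  have hopp := reach_append_le d.opp v u
  have hv := (abs_le.1 (abs_coord_le d v)).2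
  rw [← hu, coord_opp] at hopp
  rw [span, ← hw, coord_append]
  omega

lemma Prudent.length_lt (hw : Prudent w) (h : Perp d e) :
    (w.length : ℤ) < (span d w + 1) * (span e w + 1) := by
  let box : Finset (ℤ × ℤ) :=
    Finset.Icc (-reach d.opp w) (reach d w) ×ˢ Finset.Icc (-reach e.opp w) (reach e w)
  have mem_side (a : Dir) {u} (hu : u <:+ w) :
      coord a u ∈ Finset.Icc (-reach a.opp w) (reach a w) := by
    have := coord_le_reach_of_suffix a.opp hu
    rw [coord_opp] at this
    exact Finset.mem_Icc.2 ⟨by omega, coord_le_reach_of_suffix a hu⟩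
  have hcard : (Finset.range (w.length + 1)).card ≤ box.card := by
    refine Finset.card_le_card_of_injOn (fun i => (coord d (w.drop i), coord e (w.drop i))) ?_ ?_
    · intro i _
      exact Finset.mem_product.2 ⟨mem_side d (w.drop_suffix i), mem_side e (w.drop_suffix i)⟩
    · intro i hi j hj hij
      rw [Prod.mk.injEq, ← h.pos_eq_iff] at hij
      have := congrArg List.length (hw.eq_of_pos_eq (w.drop_suffix i) (w.drop_suffix j) hij)
      simp only [Finset.coe_range, Set.mem_Iio, List.length_drop] at hi hj this
      omega
  have card_side (a : Dir) :
      ((Finset.Icc (-reach a.opp w) (reach a w)).card : ℤ) = span a w + 1 := by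
    have := reach_nonneg a w
    have := reach_nonneg a.opp w
    rw [Int.card_Icc, Int.toNat_of_nonneg (by omega), span]
    ring
  rw [Finset.card_range, Finset.card_product, ← Nat.cast_le (α := ℤ), Nat.cast_mul, card_side,
    card_side, Nat.cast_add_one] at hcard
  exact Int.lt_of_add_one_le hcard

/-- The number of times that the walk with steps `v` turns off the direction `X`. -/
def turns (X : Dir) : List Dir → ℕ
  | d :: e :: v => turns X (e :: v) + if e = X ∧ d ≠ X then 1 else 0
  | _ => 0

lemma turns_eq_zero_of_notMem (h : X ∉ v) : turns X v = 0 := by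
  induction v with
  | nil => rfl
  | cons d v ih =>
    cases v with
    | nil => rfl
    | cons e v =>
      simp only [List.mem_cons, not_or] at h ih
      simp [turns, ih h.2, Ne.symm h.2.1]

lemma Prudent.on_of_turn (hw : Prudent (e :: X :: w)) (he : e ≠ X) (hX : ¬ On X (X :: w)) :
    On e (X :: w) := by
  have hperp : Perp X e := ⟨he, hw.ne_opp_head⟩
  obtain ⟨hf, hw'⟩ := prudent_cons.1 hw
  obtain ⟨s, hs⟩ := hw'.exists_on
  have hs' : Perp X s := ⟨by rintro rfl; exact hX hs, by rintro rfl; exact not_on_opp_cons _ _ hs⟩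
  rcases hperp.eq_or_eq_opp hs' with rfl | rfl
  · exact hs
  · have hc := hw'.corner_of_free_of_on_opp hf hs
    exact absurd (hc.on_or_on_opp X) (not_or.2 ⟨hX, not_on_opp_cons _ _⟩)

-- A turn off a direction whose side of the bounding box is out of reach has to be made on
-- another side of the box, and pushes that side outwards.
lemma Prudent.turns_add_span_le (hw : Prudent (v ++ u)) (h : Perp X f)
    (hX : ∀ t, t ≠ [] → t <:+ v → ¬ On X (t ++ u)) :
    turns X v + span f u ≤ span f (v ++ u) := by
  induction v with
  | nil => simp [turns]
  | cons d v ih =>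
    have hv := ih (prudent_cons.1 hw).2 fun t ht htv => hX t ht (htv.trans (List.suffix_cons _ _))
    have hmono := span_le_span_append f [d] (v ++ u)
    cases v with
    | nil => simpa [turns] using hmono
    | cons e v =>
      by_cases hturn : e = X ∧ d ≠ X
      · obtain ⟨rfl, hd⟩ := hturn
        have hside := hw.on_of_turn hd (hX _ (List.cons_ne_nil _ _) (List.suffix_cons _ _))
        have hlt : span f (e :: (v ++ u)) < span f (d :: e :: (v ++ u)) := by
          rcases h.eq_or_eq_opp ⟨hd, hw.ne_opp_head⟩ with rfl | rfl
          · exact hside.span_lt_span_cons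
          · have := hside.span_lt_span_cons
            rwa [span_opp, span_opp] at this
        simp only [turns, ne_eq, hd, not_false_eq_true, and_self, if_true, List.cons_append]
          at hv ⊢
        push_cast
        omega
      · simp only [turns, hturn, if_false, add_zero, List.cons_append] at hv ⊢
        exact hv.trans hmono

lemma reach_append_eq (h : ∀ t, t ≠ [] → t <:+ v → ¬ On d (t ++ u)) :
    reach d (v ++ u) = reach d u := by
  induction v with
  | nil => rfl
  | cons a v ih =>
    rw [← ih fun t ht htv => h t ht (htv.trans (List.suffix_cons _ _))]
    have hne : coord d (a :: (v ++ u)) ≠ reach d (a :: (v ++ u)) :=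
      h (a :: v) (List.cons_ne_nil _ _) List.suffix_rfl
    rw [List.cons_append]
    simp only [reach] at hne ⊢
    omega

lemma Prudent.exists_corner_append_notMem (hw : Prudent w) :
    ∃ v u d, w = v ++ u ∧ Corner u ∧ d ∉ v := by
  suffices ∃ v u d, w = v ++ u ∧ Corner u ∧ On d w ∧ d.opp ∉ v by
    obtain ⟨v, u, d, rfl, hu, -, hd⟩ := this
    exact ⟨v, u, _, rfl, hu, hd⟩
  induction w with
  | nil => exact ⟨[], [], east, rfl, corner_nil, on_nil _, List.not_mem_nil⟩
  | cons a w ih =>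
    obtain ⟨hf, hw'⟩ := prudent_cons.1 hw
    by_cases hc : Corner w
    · obtain ⟨d, hd⟩ := hw.exists_on
      refine ⟨[a], w, d, rfl, hc, hd, fun h => ?_⟩
      rw [← List.mem_singleton.1 h] at hd
      exact not_on_opp_cons d.opp w (by rwa [opp_opp])
    · obtain ⟨v, u, d, rfl, hu, hd, hv⟩ := ih hw'
      have ha : a ≠ d.opp := by
        rintro rfl
        exact hc (hw'.corner_of_free_of_on_opp hf (by rwa [opp_opp]))
      exact ⟨a :: v, u, d, rfl, hu, hd.cons ha, by simp [hv, ha.symm]⟩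

end Turns

section Growth

variable {d e : Dir} {u v w : List Dir}

/-- The weight of a step `d` that follows a step `e`: no walk reverses its direction, and turns off
the direction `X` are penalised. -/
noncomputable def stepWeight (X d e : Dir) : ℝ :=
  if d = e.opp then 0 else if e = X ∧ d ≠ X then 1 / 50 else 1

/-- The weight `50⁻¹ ^ turns X v` of a word without reversals; other words have weight `0`. -/
noncomputable def turnWeight (X : Dir) : List Dir → ℝ
  | d :: e :: v => turnWeight X (e :: v) * stepWeight X d e
  | _ => 1

lemma stepWeight_nonneg (X d e : Dir) : 0 ≤ stepWeight X d e := by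
  unfold stepWeight
  split_ifs <;> norm_num

lemma turnWeight_nonneg (X : Dir) (v : List Dir) : 0 ≤ turnWeight X v := by
  fun_induction turnWeight X v with
  | case1 d e v ih => exact mul_nonneg ih (stepWeight_nonneg X d e)
  | case2 => exact zero_le_one

lemma turnWeight_eq_pow_turns (X : Dir) (hv : v.IsChain fun d e => d ≠ e.opp) :
    turnWeight X v = (1 / 50) ^ turns X v := by
  fun_induction turnWeight X v with
  | case1 d e v ih =>
    obtain ⟨hde, hv⟩ := List.isChain_cons_cons.1 hv
    rw [ih hv, turns, pow_add, stepWeight, if_neg hde]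
    split_ifs <;> simp
  | case2 v hshort =>
    rcases v with _ | ⟨d, _ | ⟨e, v⟩⟩
    · simp [turns]
    · simp [turns]
    · exact absurd rfl (hshort d e v)

/-- A positive vector whose growth under the matrix `stepWeight X` is at most `2.43`. The growth
rate of walks that avoid a direction altogether is `1 + √2`, attained by the eigenvector with
entries `√2` and `1`. -/
noncomputable def dirWeight (X d : Dir) : ℝ := if d = X ∨ d = X.opp then 7 / 5 else 1

lemma sum_stepWeight_mul_dirWeight_le (X d : Dir) :
    ∑ e, stepWeight X d e * dirWeight X e ≤ 2.43 * dirWeight X d := by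
  rw [Perp.sum_eq (show Perp east north by decide)]
  cases X <;> cases d <;> simp [stepWeight, dirWeight, opp] <;> norm_num

lemma sum_turnWeight_cons_le (X d : Dir) (n : ℕ) :
    ∑ v ∈ words Dir n, turnWeight X (d :: v) ≤ dirWeight X d * 2.43 ^ n := by
  induction n generalizing d with
  | zero =>
    rw [sum_words_zero, pow_zero, mul_one, turnWeight, dirWeight]
    · split_ifs <;> norm_num
    · simp
  | succ n ih =>
    rw [add_comm n, sum_words_add, Finset.sum_comm, sum_words_one]
    calc ∑ e, ∑ v ∈ words Dir n, turnWeight X (d :: e :: v)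
        = ∑ e, stepWeight X d e * ∑ v ∈ words Dir n, turnWeight X (e :: v) := by
          simp only [turnWeight, Finset.mul_sum, mul_comm]
      _ ≤ ∑ e, stepWeight X d e * (dirWeight X e * 2.43 ^ n) :=
          Finset.sum_le_sum fun e _ => mul_le_mul_of_nonneg_left (ih e) (stepWeight_nonneg X d e)
      _ = (∑ e, stepWeight X d e * dirWeight X e) * 2.43 ^ n := by
          simp only [Finset.sum_mul, mul_assoc]
      _ ≤ 2.43 * dirWeight X d * 2.43 ^ n := by
          gcongr
          exact sum_stepWeight_mul_dirWeight_le X d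
      _ = dirWeight X d * 2.43 ^ (1 + n) := by ring

lemma sum_turnWeight_le (X : Dir) (n : ℕ) :
    ∑ v ∈ words Dir n, turnWeight X v ≤ 2 * 2.43 ^ n := by
  cases n with
  | zero => simp [sum_words_zero, turnWeight]
  | succ n =>
    have hsum : ∑ d, dirWeight X d ≤ 2 * 2.43 := by
      rw [Perp.sum_eq (show Perp east north by decide)]
      cases X <;> simp [dirWeight, opp] <;> norm_num
    rw [add_comm n, sum_words_add, Finset.sum_comm, sum_words_one]
    calc ∑ d, ∑ v ∈ words Dir n, turnWeight X (d :: v)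
        ≤ ∑ d, dirWeight X d * 2.43 ^ n :=
          Finset.sum_le_sum fun d _ => sum_turnWeight_cons_le X d n
      _ ≤ 2 * 2.43 * 2.43 ^ n := by
          rw [← Finset.sum_mul]
          gcongr
      _ = 2 * 2.43 ^ (1 + n) := by ring

lemma wordCount_turns_le (X : Dir) (k n : ℕ) :
    (wordCount n (fun v => (v.IsChain fun d e => d ≠ e.opp) ∧ turns X v ≤ k) : ℝ)
      ≤ 50 ^ k * (2 * 2.43 ^ n) := by
  classical
  rw [wordCount_eq_sum]
  push_cast
  refine le_trans ?_ (mul_le_mul_of_nonneg_left (sum_turnWeight_le X n) (by positivity))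
  rw [Finset.mul_sum]
  refine Finset.sum_le_sum fun v _ => ?_
  split_ifs with h
  · rw [turnWeight_eq_pow_turns X h.1, one_div, inv_pow, ← div_eq_mul_inv,
      one_le_div (by positivity)]
    exact pow_le_pow_right₀ (by norm_num) h.2
  · exact mul_nonneg (by positivity) (turnWeight_nonneg X v)

lemma Prudent.isChain (hw : Prudent (v ++ u)) : v.IsChain fun d e => d ≠ e.opp := by
  induction v with
  | nil => exact .nil
  | cons d v ih =>
    cases v with
    | nil => exact .singleton d
    | cons e v => exact .cons_cons hw.ne_opp_head (ih (prudent_cons.1 hw).2)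

/-- The number of prudent walks that extend `u` by `m` further steps. -/
noncomputable def extensions (u : List Dir) (m : ℕ) : ℕ :=
  wordCount m fun v => Prudent (v ++ u)

lemma extensions_zero (hu : Prudent u) : extensions u 0 = 1 := wordCount_zero hu

lemma extensions_succ (u : List Dir) (m : ℕ) :
    extensions u (m + 1) = ∑ d, extensions (d :: u) m := by
  simp only [extensions, wordCount_add, sum_words_one, List.append_assoc, List.singleton_append]

lemma Dir.Perp.add_le_extensions_succ (h : Perp d e) (u : List Dir) (m : ℕ) :
    extensions (d :: u) m + extensions (e :: u) m + extensions (e.opp :: u) m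
      ≤ extensions u (m + 1) := by
  rw [extensions_succ, h.sum_eq]
  omega

lemma On.free_cons_of_perp (h : On d w) (he : Perp d e) : Free e (d :: w) := by
  rw [he.symm.free_iff]
  intro u hu heq
  rcases List.suffix_cons_iff.1 hu with rfl | hu
  · exact le_rfl
  · have := h.coord_le hu
    rw [coord_cons_self] at heq
    omega

-- The bounds `(4/5) ^ i`, `3/5 * (4/5) ^ i` and `(4/5) ^ (i + 1)` are a sub-solution of the
-- recursion for the number of extensions of a walk on the side `d` of its bounding box, at distance
-- `i` from a corner. Near a corner the walk may continue along either side, which makes the rate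
-- larger than the rate `1 + √2` of walks that stay on one side.
lemma Prudent.le_extensions_of_on (hw : Prudent w) (m : ℕ) {i : ℕ} (h : Perp d e) (hd : On d w)
    (hi : reach e w ≤ coord e w + i) :
    (Free e w → Free e.opp w → (4 / 5) ^ i * 2.46 ^ m ≤ (extensions w m : ℝ)) ∧
    (Free e.opp w → 3 / 5 * (4 / 5) ^ i * 2.46 ^ m ≤ (extensions w m : ℝ)) ∧
    (Free e w → (4 / 5) ^ (i + 1) * 2.46 ^ m ≤ (extensions w m : ℝ)) := by
  induction m generalizing d e i w with
  | zero =>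
    have hpow : (4 / 5 : ℝ) ^ i ≤ 1 := pow_le_one₀ (by norm_num) (by norm_num)
    simp only [extensions_zero hw, pow_zero, mul_one, Nat.cast_one, pow_succ]
    exact ⟨fun _ _ => hpow, fun _ => by linarith, fun _ => by linarith⟩
  | succ m ih =>
    have step_d : (4 / 5) ^ i * 2.46 ^ m ≤ (extensions (d :: w) m : ℝ) := by
      refine (ih (prudent_cons.2 ⟨hd.free, hw⟩) h (hd.cons d.opp_ne.symm) ?_).1
        (hd.free_cons_of_perp h) (hd.free_cons_of_perp h.opp_right)
      rw [reach, h.symm.coord_cons]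
      omega
    have step_e (hf : Free e w) : (4 / 5) ^ i * 2.46 ^ m ≤ (extensions (e :: w) m : ℝ) := by
      have hew : Prudent (e :: w) := prudent_cons.2 ⟨hf, hw⟩
      have hde : On d (e :: w) := hd.cons h.2
      cases i with
      | zero =>
        have he : On e w := le_antisymm (coord_le_reach e w) (by simpa using hi)
        exact (ih hew h.symm (he.cons e.opp_ne.symm) (by simp [hde.symm.le])).1
          (he.free_cons_of_perp h.symm) (he.free_cons_of_perp h.symm.opp_right)
      | succ j =>
        refine (ih hew h hde ?_).2.2 hf.cons_self
        rw [reach, coord_cons_self]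
        push_cast at hi
        omega
    have step_opp (hf : Free e.opp w) :
        3 / 5 * (4 / 5) ^ (i + 1) * 2.46 ^ m ≤ (extensions (e.opp :: w) m : ℝ) := by
      refine (ih (prudent_cons.2 ⟨hf, hw⟩) h (hd.cons h.opp_right.2) ?_).2.1 hf.cons_self
      rw [reach, coord_cons_opp]
      push_cast
      omega
    have hx : (0 : ℝ) ≤ (4 / 5) ^ i * 2.46 ^ m := by positivity
    have nonneg (a : Dir) : (0 : ℝ) ≤ extensions (a :: w) m := Nat.cast_nonneg _
    have hsum : (_ : ℝ) ≤ _ := Nat.cast_le.2 (h.add_le_extensions_succ w m)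
    simp only [pow_succ, Nat.cast_add] at *
    refine ⟨fun hf hf' => ?_, fun hf' => ?_, fun hf => ?_⟩
    · linarith [hx, step_e hf, step_opp hf']
    · linarith [hx, step_opp hf', nonneg e]
    · linarith [hx, step_e hf, nonneg e.opp]

lemma Corner.le_extensions (hu : Corner u) (hu' : Prudent u) (m : ℕ) :
    4 / 5 * 2.46 ^ m ≤ (extensions u m : ℝ) := by
  obtain ⟨d, e, h, hd, he⟩ := hu
  simpa using (hu'.le_extensions_of_on m (i := 0) h hd (by simp [he.symm.le])).2.2 he.free

end Growth

section Negligible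

variable {u v : List Dir} {A B : List Dir → Prop}

/-- The number of prudent walks of length `n`. -/
noncomputable def prudentCount (n : ℕ) : ℕ := wordCount n Prudent

lemma prudentCount_add (m n : ℕ) :
    prudentCount (m + n) = ∑ u ∈ words Dir n, extensions u m :=
  wordCount_add m n Prudent

lemma prudentCount_monotone : Monotone prudentCount := by
  classical
  refine monotone_nat_of_le_succ fun n => ?_
  rw [add_comm, prudentCount_add, prudentCount, wordCount_eq_sum]
  refine Finset.sum_le_sum fun u _ => ?_
  split_ifs with hu
  · obtain ⟨d, hd⟩ := hu.exists_on
    calc 1 = extensions (d :: u) 0 := (extensions_zero (prudent_cons.2 ⟨hd.free, hu⟩)).symm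
      _ ≤ ∑ a, extensions (a :: u) 0 :=
          Finset.single_le_sum (f := fun a => extensions (a :: u) 0) (fun _ _ => Nat.zero_le _)
            (Finset.mem_univ d)
      _ = extensions u 1 := (extensions_succ u 0).symm
  · exact Nat.zero_le _

/-- For some `m ≥ M` and some direction `X`, the walk `w` was at a corner of its bounding box `m`
steps ago and has turned off the direction `X` at most `k` times since. -/
def FewTurnsSinceCorner (k M : ℕ) (w : List Dir) : Prop :=
  ∃ m X, M ≤ m ∧ m ≤ w.length ∧ Corner (w.drop m) ∧ turns X (w.take m) ≤ k

lemma Corner.fewTurnsSinceCorner_append (hu : Corner u) {k M : ℕ} (hM : M ≤ v.length)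
    (hk : turns X v ≤ k) : FewTurnsSinceCorner k M (v ++ u) :=
  ⟨v.length, X, hM, by simp, by simpa using hu, by simpa using hk⟩

lemma wordCount_corner_mul_le (m n : ℕ) :
    wordCount n (fun u => Prudent u ∧ Corner u) * (4 / 5 * 2.46 ^ m)
      ≤ (prudentCount (m + n) : ℝ) := by
  classical
  rw [prudentCount_add, wordCount_eq_sum]
  push_cast
  rw [Finset.sum_mul]
  refine Finset.sum_le_sum fun u _ => ?_
  split_ifs with hu
  · simpa using hu.2.le_extensions hu.1 m
  · simp

lemma wordCount_corner_turns_le (X : Dir) (k m n : ℕ) :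
    (wordCount (m + n) (fun w => Prudent w ∧ Corner (w.drop m) ∧ turns X (w.take m) ≤ k) : ℝ)
      ≤ 5 / 2 * 50 ^ k * (81 / 82) ^ m * prudentCount (m + n) := by
  classical
  have fibre_le (u : List Dir) :
      (wordCount m (fun v => Prudent (v ++ u) ∧ Corner ((v ++ u).drop m) ∧
          turns X ((v ++ u).take m) ≤ k) : ℝ)
        ≤ (if Prudent u ∧ Corner u then 1 else 0) * (50 ^ k * (2 * 2.43 ^ m)) := by
    split_ifs with hu
    · rw [one_mul]
      refine le_trans ?_ (wordCount_turns_le X k m)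
      norm_cast
      refine wordCount_mono ?_
      rintro v rfl ⟨hw, -, ht⟩
      exact ⟨hw.isChain, by simpa using ht⟩
    · rw [zero_mul, wordCount_eq_zero, Nat.cast_zero]
      rintro v rfl ⟨hw, hc, -⟩
      rw [List.drop_left] at hc
      exact hu ⟨hw.of_suffix (List.suffix_append v u), hc⟩
  calc (wordCount (m + n) (fun w => Prudent w ∧ Corner (w.drop m) ∧ turns X (w.take m) ≤ k) : ℝ)
      ≤ wordCount n (fun u => Prudent u ∧ Corner u) * (50 ^ k * (2 * 2.43 ^ m)) := by
        rw [wordCount_add, wordCount_eq_sum]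
        push_cast
        rw [Finset.sum_mul]
        exact Finset.sum_le_sum fun u _ => fibre_le u
    _ = 5 / 2 * 50 ^ k * (81 / 82) ^ m *
          (wordCount n (fun u => Prudent u ∧ Corner u) * (4 / 5 * 2.46 ^ m)) := by
        have : (2.43 : ℝ) ^ m = (81 / 82) ^ m * 2.46 ^ m := by rw [← mul_pow]; norm_num
        rw [this]
        ring
    _ ≤ 5 / 2 * 50 ^ k * (81 / 82) ^ m * prudentCount (m + n) := by
        gcongr
        exact wordCount_corner_mul_le m n

lemma wordCount_fewTurnsSinceCorner_le (k M L : ℕ) :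
    (wordCount L (fun w => Prudent w ∧ FewTurnsSinceCorner k M w) : ℝ)
      ≤ 820 * 50 ^ k * (81 / 82) ^ M * prudentCount L := by
  let s : Finset (ℕ × Dir) := Finset.Ico M (L + 1) ×ˢ Finset.univ
  have hunion : wordCount L (fun w => Prudent w ∧ FewTurnsSinceCorner k M w) ≤
      ∑ i ∈ s, wordCount L fun w =>
        Prudent w ∧ Corner (w.drop i.1) ∧ turns i.2 (w.take i.1) ≤ k := by
    refine (wordCount_mono ?_).trans (wordCount_exists_le s L _)
    rintro w rfl ⟨hw, m, X, hM, hm, hc, ht⟩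
    have hs : (m, X) ∈ s :=
      Finset.mem_product.2 ⟨Finset.mem_Ico.2 ⟨hM, Nat.lt_succ_of_le hm⟩, Finset.mem_univ X⟩
    exact ⟨(m, X), hs, hw, hc, ht⟩
  calc (wordCount L (fun w => Prudent w ∧ FewTurnsSinceCorner k M w) : ℝ)
      ≤ ∑ i ∈ s, (wordCount L fun w =>
          Prudent w ∧ Corner (w.drop i.1) ∧ turns i.2 (w.take i.1) ≤ k : ℝ) := by
        exact_mod_cast hunion
    _ ≤ ∑ i ∈ s, (5 / 2 * 50 ^ k * (81 / 82) ^ i.1 * prudentCount L : ℝ) := by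
        refine Finset.sum_le_sum fun i hi => ?_
        obtain ⟨n, rfl⟩ := Nat.exists_eq_add_of_le
          (Nat.lt_succ_iff.1 (Finset.mem_Ico.1 (Finset.mem_product.1 hi).1).2)
        exact wordCount_corner_turns_le i.2 k i.1 n
    _ = 10 * 50 ^ k * (∑ m ∈ Finset.Ico M (L + 1), (81 / 82) ^ m) * prudentCount L := by
        rw [Finset.sum_product, Finset.mul_sum, Finset.sum_mul]
        refine Finset.sum_congr rfl fun m _ => ?_
        simp only [Finset.sum_const, Finset.card_univ, show Fintype.card Dir = 4 from rfl,
          nsmul_eq_mul]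
        push_cast
        ring
    _ ≤ 10 * 50 ^ k * ((81 / 82) ^ M / (1 - 81 / 82)) * prudentCount L := by
        gcongr
        exact geom_sum_Ico_le_of_lt_one (by norm_num) (by norm_num)
    _ = 820 * 50 ^ k * (81 / 82) ^ M * prudentCount L := by ring

/-- Under the uniform law on the prudent walks of length `L`, the probability of `A` tends to `0`
as `L → ∞`. -/
def Negligible (A : List Dir → Prop) : Prop :=
  (fun L => (wordCount L (fun w => Prudent w ∧ A w) : ℝ)) =o[atTop]
    fun L => (prudentCount L : ℝ)

lemma Negligible.mono (hB : Negligible B) (h : ∀ w, Prudent w → A w → B w) : Negligible A := by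
  refine (Asymptotics.isBigO_of_le _ fun L => ?_).trans_isLittleO hB
  rw [Real.norm_natCast, Real.norm_natCast, Nat.cast_le]
  exact wordCount_mono fun w _ hw => ⟨hw.1, h w hw.1 hw.2⟩

lemma Negligible.or (hA : Negligible A) (hB : Negligible B) :
    Negligible fun w => A w ∨ B w := by
  refine (Asymptotics.isBigO_of_le _ fun L => ?_).trans_isLittleO (hA.add hB)
  rw [← Nat.cast_add, Real.norm_natCast, Real.norm_natCast, Nat.cast_le]
  simp only [and_or_left]
  exact wordCount_or_le _ _ _

lemma negligible_of_length_lt {N : ℕ} (h : ∀ w, Prudent w → A w → w.length < N) :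
    Negligible A := by
  refine (Asymptotics.isLittleO_zero _ _).congr' ?_ EventuallyEq.rfl
  filter_upwards [eventually_ge_atTop N] with L hL
  rw [wordCount_eq_zero, Nat.cast_zero]
  rintro w rfl ⟨hw, hA⟩
  exact (h w hw hA).not_ge hL

lemma negligible_exists {ι : Type*} (s : Finset ι) {A : ι → List Dir → Prop}
    (h : ∀ i ∈ s, Negligible (A i)) : Negligible fun w => ∃ i ∈ s, A i w := by
  classical
  induction s using Finset.induction_on with
  | empty => exact negligible_of_length_lt (N := 0) (by simp)
  | insert i s _ ih =>
    simp only [Finset.mem_insert, forall_eq_or_imp] at h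
    exact (h.1.or (ih h.2)).mono fun w _ => by simp

lemma Negligible.drop (hA : Negligible A) (m : ℕ) : Negligible fun w => A (w.drop m) := by
  have hshift := (hA.comp_tendsto (tendsto_sub_atTop_nat m)).const_mul_left ((4 : ℝ) ^ m)
  have hle : (fun L => (wordCount L (fun w => Prudent w ∧ A (w.drop m)) : ℝ)) =O[atTop]
      fun L => 4 ^ m * (wordCount (L - m) (fun w => Prudent w ∧ A w) : ℝ) := by
    refine .of_bound' ?_
    filter_upwards [eventually_ge_atTop m] with L hL
    obtain ⟨n, rfl⟩ := Nat.exists_eq_add_of_le hL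
    have hdrop := wordCount_drop m n fun w : List Dir => Prudent w ∧ A w
    rw [show Fintype.card Dir = 4 from rfl] at hdrop
    rw [Nat.add_sub_cancel_left, Real.norm_natCast, Real.norm_of_nonneg (by positivity)]
    norm_cast
    rw [← hdrop]
    exact wordCount_mono fun w _ hw => ⟨hw.1.of_suffix (w.drop_suffix m), hw.2⟩
  refine (hle.trans_isLittleO hshift).trans_isBigO (Asymptotics.isBigO_of_le _ fun L => ?_)
  simpa using prudentCount_monotone (Nat.sub_le L m)

lemma negligible_of_fewTurnsSinceCorner (k : ℕ)
    (h : ∀ M, ∃ B, Negligible B ∧ ∀ w, Prudent w → A w → FewTurnsSinceCorner k M w ∨ B w) :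
    Negligible A := by
  refine Asymptotics.isLittleO_iff.2 fun c hc => ?_
  obtain ⟨M, hM⟩ := exists_pow_lt_of_lt_one (y := (81 / 82 : ℝ))
    (show 0 < c / 2 / (820 * 50 ^ k) by positivity) (by norm_num)
  rw [lt_div_iff₀' (by positivity)] at hM
  obtain ⟨B, hB, hAB⟩ := h M
  filter_upwards [Asymptotics.isLittleO_iff.1 hB (half_pos hc)] with L hL
  rw [Real.norm_natCast, Real.norm_natCast] at hL ⊢
  calc (wordCount L (fun w => Prudent w ∧ A w) : ℝ)
      ≤ wordCount L (fun w => Prudent w ∧ FewTurnsSinceCorner k M w)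
          + wordCount L (fun w => Prudent w ∧ B w) := by
        norm_cast
        refine (wordCount_mono fun w _ hw => ?_).trans (wordCount_or_le _ _ _)
        exact (hAB w hw.1 hw.2).imp (⟨hw.1, ·⟩) (⟨hw.1, ·⟩)
    _ ≤ c / 2 * prudentCount L + c / 2 * prudentCount L := by
        refine add_le_add ((wordCount_fewTurnsSinceCorner_le k M L).trans ?_) hL
        gcongr
    _ = c * prudentCount L := by ring

end Negligible

section Axes

variable {d e : Dir}

lemma negligible_on_and_span_le (h : Perp d e) (H : ℕ) :
    Negligible fun w => On d w ∧ span e w ≤ H := by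
  refine negligible_of_fewTurnsSinceCorner H fun M =>
    ⟨fun w => span d w ≤ 2 * M ∧ span e w ≤ H, ?_, ?_⟩
  · refine negligible_of_length_lt (N := (2 * M + 1) * (H + 1)) fun w hw hspan => ?_
    zify
    exact (hw.length_lt h).trans_le
      (mul_le_mul (by linarith) (by linarith) (by linarith [span_nonneg e w]) (by positivity))
  · rintro w hw ⟨hd, hH⟩
    obtain ⟨v, u, rfl, hu, hlast⟩ := exists_longest_suffix (On d.opp) (on_nil _) w
    rcases lt_or_ge M v.length with hM | hM
    · have hv : v ≠ [] := List.length_pos_iff.1 (by omega)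
      have hturns := hw.turns_add_span_le h.opp_left hlast
      exact .inl ((hw.corner_of_last_on hv hu hlast).fewTurnsSinceCorner_append (X := d.opp) hM.le
        (by linarith [span_nonneg e u]))
    · exact .inr ⟨(hu.span_append_le hd).trans (by gcongr), hH⟩

lemma negligible_on_and_on_and_coord_le (h : Perp d e) (H : ℕ) :
    Negligible fun w => On d w ∧ On e w ∧ coord e w ≤ H := by
  refine negligible_of_fewTurnsSinceCorner H fun M =>
    ⟨_, (negligible_on_and_span_le h (2 * M)).or (negligible_on_and_span_le h.symm (2 * M)), ?_⟩
  rintro w hw ⟨hd, he, hH⟩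
  obtain ⟨v, u, rfl, hu, hlast⟩ :=
    exists_longest_suffix (fun u => On d.opp u ∨ On e.opp u) (.inl (on_nil _)) w
  simp only [not_or] at hlast
  have hlast_d : ∀ t, t ≠ [] → t <:+ v → ¬ On d.opp (t ++ u) := fun t ht htv => (hlast t ht htv).1
  have hlast_e : ∀ t, t ≠ [] → t <:+ v → ¬ On e.opp (t ++ u) := fun t ht htv => (hlast t ht htv).2
  rcases lt_or_ge M v.length with hM | hM
  · have hv : v ≠ [] := List.length_pos_iff.1 (by omega)
    have hc : Corner u := hu.elim (hw.corner_of_last_on hv · hlast_d)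
      (hw.corner_of_last_on hv · hlast_e)
    have hturns := hw.turns_add_span_le h.opp_left hlast_d
    rw [span, span, reach_append_eq hlast_e, ← he] at hturns
    exact .inl (hc.fewTurnsSinceCorner_append (X := d.opp) hM.le
      (by linarith [reach_nonneg e u]))
  · have hlen : 2 * (v.length : ℤ) ≤ (2 * M : ℕ) := by exact_mod_cast Nat.mul_le_mul_left 2 hM
    exact .inr (hu.symm.imp (fun hu => ⟨hd, (hu.span_append_le he).trans hlen⟩)
      (fun hu => ⟨he, (hu.span_append_le hd).trans hlen⟩))

lemma negligible_corner_and_abs_coord_le (d : Dir) (H : ℕ) :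
    Negligible fun w => Corner w ∧ |coord d w| ≤ H := by
  refine (negligible_exists (Finset.univ.filter fun p : Dir × Dir => Perp p.1 p.2) fun p hp =>
    negligible_on_and_on_and_coord_le (Finset.mem_filter.1 hp).2 H).mono fun w _ hw => ?_
  obtain ⟨hc, hH⟩ := hw
  obtain ⟨b, hb⟩ := exists_perp d
  obtain ⟨hlo, hhi⟩ := abs_le.1 hH
  rcases hc.on_or_on_opp b with hb' | hb' <;> rcases hc.on_or_on_opp d with hd | hd
  · exact ⟨(b, d), by simpa using hb.symm, hb', hd, hhi⟩
  · exact ⟨(b, d.opp), by simpa using hb.symm.opp_right, hb', hd, by rw [coord_opp]; omega⟩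
  · exact ⟨(b.opp, d), by simpa using hb.symm.opp_left, hb', hd, hhi⟩
  · exact ⟨(b.opp, d.opp), by simpa using hb.symm.opp_left.opp_right, hb', hd,
      by rw [coord_opp]; omega⟩

lemma negligible_coord_eq_zero (d : Dir) : Negligible fun w => coord d w = 0 := by
  refine negligible_of_fewTurnsSinceCorner 0 fun M =>
    ⟨_, negligible_exists (Finset.range M) fun m _ =>
      (negligible_corner_and_abs_coord_le d M).drop m, ?_⟩
  intro w hw h0
  obtain ⟨v, u, X, rfl, hu, hX⟩ := hw.exists_corner_append_notMem
  rcases le_or_gt M v.length with hM | hM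
  · exact .inl (hu.fewTurnsSinceCorner_append hM (turns_eq_zero_of_notMem hX).le)
  · refine .inr ⟨v.length, Finset.mem_range.2 hM, ?_⟩
    have hv := abs_coord_le d v
    rw [coord_append, ← eq_neg_iff_add_eq_zero] at h0
    rw [h0, abs_neg] at hv
    exact ⟨by simpa using hu, by rw [List.drop_left]; exact hv.trans (by exact_mod_cast hM.le)⟩

end Axes

section Quadrants

variable {d e : Dir} {u v w : List Dir}

lemma Dir.Perp.coord_map_frame (h : Perp d e) (a : Dir) (w : List Dir) :
    coord (frame d e a) (w.map (frame d e)) = coord a w := by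
  rw [coord, ← frame_opp, List.count_map_of_injective _ _ h.frame_injective,
    List.count_map_of_injective _ _ h.frame_injective, coord]

lemma Dir.Perp.pos_map_frame_eq_iff (h : Perp d e) :
    pos (u.map (frame d e)) = pos (v.map (frame d e)) ↔ pos u = pos v := by
  rw [h.pos_eq_iff, (show Perp east north by decide).pos_eq_iff, ← h.coord_map_frame east,
    ← h.coord_map_frame east, ← h.coord_map_frame north, ← h.coord_map_frame north]
  rfl

lemma Dir.Perp.free_map_frame (h : Perp d e) {a : Dir} :
    Free (frame d e a) (w.map (frame d e)) ↔ Free a w := by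
  refine forall₂_congr fun k _ => ⟨fun hf u hu => ?_, fun hf x hx => ?_⟩
  · have := hf _ (hu.map _)
    rwa [← List.map_replicate, ← List.map_append, Ne, h.pos_map_frame_eq_iff] at this
  · obtain ⟨u, hu, rfl⟩ := List.suffix_map_iff.1 hx
    rw [← List.map_replicate, ← List.map_append, Ne, h.pos_map_frame_eq_iff]
    exact hf u hu

lemma Dir.Perp.prudent_map_frame (h : Perp d e) : Prudent (w.map (frame d e)) ↔ Prudent w := by
  induction w with
  | nil => rfl
  | cons a w ih => rw [List.map_cons, prudent_cons, prudent_cons, ih, h.free_map_frame]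

/-- The number of prudent walks of length `L` that end in the open quadrant spanned by the
orthogonal directions `d` and `e`. -/
noncomputable def quadrantCount (d e : Dir) (L : ℕ) : ℕ :=
  wordCount L fun w => Prudent w ∧ 0 < coord d w ∧ 0 < coord e w

lemma Dir.Perp.quadrantCount_eq (h : Perp d e) (L : ℕ) :
    quadrantCount d e L = quadrantCount east north L := by
  rw [quadrantCount, ← wordCount_map h.frame_injective]
  refine wordCount_congr fun w _ => ?_
  rw [h.prudent_map_frame, ← h.coord_map_frame east, ← h.coord_map_frame north]
  rfl

lemma prudentCount_eq_four_mul_add (L : ℕ) :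
    prudentCount L = 4 * quadrantCount east north L
      + wordCount L (fun w => Prudent w ∧ (coord east w = 0 ∨ coord north w = 0)) := by
  classical
  have hsum : prudentCount L = quadrantCount east north L + quadrantCount east.opp north L
      + quadrantCount east.opp north.opp L + quadrantCount east north.opp L
      + wordCount L (fun w => Prudent w ∧ (coord east w = 0 ∨ coord north w = 0)) := by
    simp only [prudentCount, quadrantCount, wordCount_eq_sum, ← Finset.sum_add_distrib, coord_opp]
    refine Finset.sum_congr rfl fun w _ => ?_
    by_cases hw : Prudent w
    · simp only [hw, true_and, if_true]
      split_ifs <;> omega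
    · simp [hw]
  have h : Perp east north := by decide
  rw [hsum, h.opp_left.quadrantCount_eq, h.opp_left.opp_right.quadrantCount_eq,
    h.opp_right.quadrantCount_eq]
  ring

lemma prudentCount_pos (L : ℕ) : 0 < prudentCount L :=
  have hzero : prudentCount 0 = 1 := wordCount_zero prudent_nil
  zero_lt_one.trans_le (hzero.symm.trans_le (prudentCount_monotone (Nat.zero_le L)))

lemma Dir.Perp.tendsto_quadrantCount_div (h : Perp d e) :
    Tendsto (fun L => (quadrantCount d e L : ℝ) / prudentCount L) atTop (nhds (1 / 4)) := by
  have haxes := ((negligible_coord_eq_zero east).or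
    (negligible_coord_eq_zero north)).tendsto_div_nhds_zero
  have hlim := (haxes.const_sub 1).div_const 4
  rw [sub_zero] at hlim
  refine hlim.congr fun L => ?_
  have hZ : (prudentCount L : ℝ) ≠ 0 := by exact_mod_cast (prudentCount_pos L).ne'
  have hsplit : (prudentCount L : ℝ) = _ := congrArg Nat.cast (prudentCount_eq_four_mul_add L)
  push_cast at hsplit
  rw [h.quadrantCount_eq]
  field_simp
  linarith

end Quadrants

section Paths

variable {L : ℕ} {w : List Dir}

lemma isStep_iff {s : ℤ × ℤ} : IsStep s ↔ ∃ d, s = pos [d] := by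
  constructor
  · rintro (h | h | h | h)
    exacts [⟨east, h⟩, ⟨west, h⟩, ⟨north, h⟩, ⟨south, h⟩]
  · rintro ⟨_ | _ | _ | _, rfl⟩
    exacts [.inl rfl, .inr (.inr (.inl rfl)), .inr (.inl rfl), .inr (.inr (.inr rfl))]

lemma pos_singleton_injective : Function.Injective fun d : Dir => pos [d] := by
  decide

lemma pos_replicate (d : Dir) (k : ℕ) : pos (List.replicate k d) = (k : ℤ) • pos [d] := by
  induction k with
  | zero => simp [pos]
  | succ k ih =>
    rw [List.replicate_succ, ← List.singleton_append, pos_append, ih, Nat.cast_succ, add_smul,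
      one_smul, add_comm]

/-- The path of length `L` whose steps are the letters of the word `w` of length `L`. -/
def path (L : ℕ) (w : List Dir) : Fin (L + 1) → ℤ × ℤ := fun i => pos (w.drop (L - i))

lemma path_last (L : ℕ) (w : List Dir) : path L w (Fin.last L) = pos w := by
  simp [path]

lemma path_cons (L : ℕ) (d : Dir) (w : List Dir) :
    path (L + 1) (d :: w) = Fin.snoc (α := fun _ => ℤ × ℤ) (path L w) (pos (d :: w)) := by
  funext i
  induction i using Fin.lastCases with
  | last => rw [path_last, Fin.snoc_last]
  | cast i =>
    have : L + 1 - (i.castSucc : ℕ) = L - i + 1 := by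
      have := i.is_lt
      rw [Fin.val_castSucc]
      omega
    rw [Fin.snoc_castSucc, path, this, List.drop_succ_cons, path]

lemma forall_suffix_iff_forall_path {P : ℤ × ℤ → Prop} (hw : w.length = L) :
    (∀ u, u <:+ w → P (pos u)) ↔ ∀ j, P (path L w j) := by
  constructor
  · exact fun h j => h _ (w.drop_suffix _)
  · intro h u hu
    have hlen := hu.length_le
    subst hw
    have := h ⟨u.length, by omega⟩
    rwa [path, ← List.suffix_iff_eq_drop.1 hu] at this

lemma snoc_mem_prudentSet {π : Fin (L + 1) → ℤ × ℤ} {q : ℤ × ℤ} :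
    Fin.snoc (α := fun _ => ℤ × ℤ) π q ∈ prudentSet (L + 1) ↔
      π ∈ prudentSet L ∧ IsStep (q - π (Fin.last L)) ∧
      ∀ k : ℕ, 1 ≤ k → ∀ j, π (Fin.last L) + (k : ℤ) • (q - π (Fin.last L)) ≠ π j := by
  have h0 : Fin.snoc (α := fun _ => ℤ × ℤ) π q 0 = π 0 := by
    rw [← Fin.castSucc_zero, Fin.snoc_castSucc]
  have hlast (i : Fin (L + 1)) : ¬ Fin.last (L + 1) ≤ i.castSucc := (Fin.castSucc_lt_last i).not_ge
  simp only [prudentSet, Set.mem_ofPred_eq, h0, Fin.forall_fin_succ' (n := L),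
    Fin.forall_fin_succ' (n := L + 1), Fin.succ_castSucc, Fin.snoc_castSucc, Fin.succ_last,
    Fin.snoc_last, Fin.castSucc_le_castSucc_iff, hlast, false_imp_iff, and_true, Fin.le_last,
    true_imp_iff, and_assoc]

lemma path_mem_prudentSet (hw : w.length = L) : path L w ∈ prudentSet L ↔ Prudent w := by
  induction w generalizing L with
  | nil =>
    subst hw
    exact iff_of_true ⟨rfl, fun i => i.elim0⟩ prudent_nil
  | cons d w ih =>
    subst hw
    have hstep : pos (d :: w) - pos w = pos [d] := by
      rw [← List.singleton_append, pos_append, add_sub_cancel_right]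
    rw [List.length_cons, path_cons, snoc_mem_prudentSet, ih rfl, path_last, hstep, prudent_cons,
      and_iff_right (isStep_iff.2 ⟨d, rfl⟩), and_comm, Free]
    refine and_congr_left' (forall₂_congr fun k _ => ?_)
    rw [forall_suffix_iff_forall_path (P := (· ≠ _)) rfl, pos_append, pos_replicate,
      add_comm (_ • _)]
    exact forall_congr' fun j => ne_comm

lemma path_injOn (L : ℕ) : Set.InjOn (path L) {w | w.length = L} := by
  intro w hw w' hw' h
  induction w generalizing L w' with
  | nil =>
    subst hw
    exact (List.length_eq_zero_iff.1 hw').symm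
  | cons d w ih =>
    subst hw
    obtain ⟨d', w', rfl⟩ := List.exists_cons_of_length_eq_add_one hw'
    rw [List.length_cons, path_cons, path_cons] at h
    obtain ⟨htail, hhead⟩ := Fin.snoc_inj.1 h
    obtain rfl := ih _ rfl (by simpa using hw') htail
    rw [← List.singleton_append, ← List.singleton_append (x := d'), pos_append, pos_append,
      add_left_inj] at hhead
    rw [pos_singleton_injective hhead]

lemma exists_path_eq {π : Fin (L + 1) → ℤ × ℤ} (h : π ∈ prudentSet L) :
    ∃ w : List Dir, w.length = L ∧ path L w = π := by
  induction L with
  | zero =>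
    refine ⟨[], rfl, funext fun i => ?_⟩
    rw [Fin.fin_one_eq_zero i]
    exact h.1.symm
  | succ L ih =>
    rw [← Fin.snoc_init_self π, snoc_mem_prudentSet] at h
    obtain ⟨hinit, hstep, -⟩ := h
    obtain ⟨w, hw, hpath⟩ := ih hinit
    obtain ⟨d, hd⟩ := isStep_iff.1 hstep
    refine ⟨d :: w, by simp [hw], ?_⟩
    rw [path_cons, ← List.singleton_append, pos_append, ← hd, ← path_last L w, hpath,
      sub_add_cancel, Fin.snoc_init_self]

lemma natCard_inter_prudentSet (L : ℕ) (A : Set (Fin (L + 1) → ℤ × ℤ)) :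
    Nat.card ↥(A ∩ prudentSet L) = wordCount L fun w => Prudent w ∧ path L w ∈ A := by
  classical
  have himage : A ∩ prudentSet L =
      path L '' ((words Dir L).filter fun w => Prudent w ∧ path L w ∈ A : Finset (List Dir)) := by
    ext π
    simp only [Set.mem_image, Finset.coe_filter, Set.mem_ofPred_eq, mem_words]
    constructor
    · rintro ⟨hA, hπ⟩
      obtain ⟨w, hw, rfl⟩ := exists_path_eq hπ
      exact ⟨w, ⟨hw, (path_mem_prudentSet hw).1 hπ, hA⟩, rfl⟩
    · rintro ⟨w, ⟨hw, hp, hA⟩, rfl⟩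
      exact ⟨hA, (path_mem_prudentSet hw).2 hp⟩
  rw [himage, Nat.card_image_of_injOn, Nat.card_coe_set_eq, Set.ncard_coe_finset, wordCount]
  · congr!
  · refine (path_injOn L).mono fun w hw => ?_
    exact mem_words.1 (Finset.mem_filter.1 hw).1

lemma natCard_prudentSet (L : ℕ) : Nat.card ↥(prudentSet L) = prudentCount L := by
  rw [← Set.univ_inter (prudentSet L), natCard_inter_prudentSet]
  simp only [Set.mem_univ, and_true, prudentCount]

lemma exists_perp_sigmaIdx_path_iff {i : ℕ} (hi : i ∈ Finset.Icc 1 4) :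
    ∃ d e, Perp d e ∧
      ∀ L w, sigmaIdx L (path L w) = i ↔ 0 < coord d w ∧ 0 < coord e w := by
  have west_eq (w) : coord west w = -coord east w := coord_opp east w
  have south_eq (w) : coord south w = -coord north w := coord_opp north w
  rw [Finset.mem_Icc] at hi
  simp only [sigmaIdx, path_last]
  obtain ⟨h1, h4⟩ := hi
  interval_cases i
  on_goal 1 => refine ⟨east, north, by decide, fun _ w => ?_⟩
  on_goal 2 => refine ⟨west, north, by decide, fun _ w => ?_⟩
  on_goal 3 => refine ⟨west, south, by decide, fun _ w => ?_⟩
  on_goal 4 => refine ⟨east, south, by decide, fun _ w => ?_⟩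
  all_goals
    have := west_eq w
    have := south_eq w
    grind [pos]

end Paths

end PrudentWalk

/-- Under the uniform law on prudent paths of length `L`, the law of the quadrant index
`σ_L` converges to the uniform distribution on `{1,2,3,4}`. -/
theorem sigma_uniform_limit :
    ∀ i ∈ Finset.Icc 1 4,
      Tendsto (fun L : ℕ => probUnif L {π | sigmaIdx L π = i}) atTop (nhds (1 / 4)) := by
  intro i hi
  obtain ⟨d, e, hde, hσ⟩ := PrudentWalk.exists_perp_sigmaIdx_path_iff hi
  refine hde.tendsto_quadrantCount_div.congr fun L => ?_
  simp only [probUnif, PrudentWalk.natCard_inter_prudentSet, PrudentWalk.natCard_prudentSet,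
    Set.mem_ofPred_eq, hσ, PrudentWalk.quadrantCount]
end
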